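/- arXiv:2111.05165 — 4 statements merged into one kernel-verified Lean document; each statement's English description precedes it below -/
import Mathlib

section
/- Let G ⊆ ℂ be a closed set with empty interior, Ω ⊆ ℂ a domain, Φ = (φₙ) a sequence of continuous maps from G to Ω, and M a countable family of compact subsets of G. Then there exists a (Φ,M)-universal function if and only if for every ε > 0, every K ∈ M, every compact set L ⊆ Ω, every continuous function h on K and every g ∈ H(Ω), there exist f ∈ H(Ω) and n ∈ ℕ such that sup_{z∈K} |f(φₙ(z)) − h(z)| ≤ ε and sup_{z∈L} |f(z) − g(z)| ≤ ε. Moreover, the set of (Φ,M)-universal functions is either empty or a dense G_δ subset of H(Ω). -/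
open Set Metric Bornology Filter

/-- A *hole* of `E` is a nonempty bounded connected component of `ℂ \ E`. -/
def IsHole (E C : Set ℂ) : Prop :=
  (∃ z ∈ Eᶜ, C = connectedComponentIn Eᶜ z) ∧ Bornology.IsBounded C

/-- A compact set `K` contained in an open set `Ω` is `Ω`-*convex* if every hole of `K`
contains a point of `ℂ \ Ω`. -/
def OmegaConvex (Ω K : Set ℂ) : Prop :=
  ∀ C : Set ℂ, IsHole K C → (C ∩ Ωᶜ).Nonempty

/-- The *polynomial hull* of `K`: the union of `K` and all of its holes. -/
def polyHull (K : Set ℂ) : Set ℂ :=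
  K ∪ {z | z ∈ Kᶜ ∧ Bornology.IsBounded (connectedComponentIn Kᶜ z)}

/-- A sequence of maps is *eventually injective* on `G`: for every compact `K ⊆ G`, the maps
are eventually injective on a neighbourhood of `K` in `G`. -/
def EventuallyInjective (G : Set ℂ) (φ : ℕ → ℂ → ℂ) : Prop :=
  ∀ K : Set ℂ, K ⊆ G → IsCompact K →
    ∃ N : ℕ, ∀ n ≥ N, ∃ U : Set ℂ, IsOpen U ∧ K ⊆ U ∧ U ⊆ G ∧ Set.InjOn (φ n) U

/-- `f` is `(Φ, G, Ω)`-*universal*: the family `{f ∘ φ n : n ∈ ℕ}` is dense in `H(G)` for the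
topology of locally uniform convergence, i.e. every `g` holomorphic on `G` can be approximated
uniformly on every compact subset of `G` by functions `f ∘ φ n`. -/
def UniversalFor (G : Set ℂ) (φ : ℕ → ℂ → ℂ) (f : ℂ → ℂ) : Prop :=
  ∀ g : ℂ → ℂ, DifferentiableOn ℂ g G →
    ∀ K : Set ℂ, K ⊆ G → IsCompact K → ∀ ε : ℝ, 0 < ε →
      ∃ n : ℕ, ∀ z ∈ K, ‖f (φ n z) - g z‖ < ε

/-- `E` has no hole (for a domain: simple connectivity). -/
def HasNoHole (E : Set ℂ) : Prop := ¬ ∃ C : Set ℂ, IsHole E C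

/-- A *Jordan curve*: the image of the unit circle under an injective continuous map. -/
def IsJordanCurve (C : Set ℂ) : Prop :=
  ∃ γ : ℂ → ℂ, ContinuousOn γ (Metric.sphere 0 1) ∧ Set.InjOn γ (Metric.sphere 0 1) ∧
    C = γ '' Metric.sphere 0 1

/-- A *Jordan arc*: the image of `[0,1]` under an injective continuous map. -/
def IsJordanArc (C : Set ℂ) : Prop :=
  ∃ γ : ℝ → ℂ, ContinuousOn γ (Set.Icc 0 1) ∧ Set.InjOn γ (Set.Icc 0 1) ∧
    C = γ '' Set.Icc 0 1

/-- A compact set is *regular* if its boundary is a union of Jordan curves. -/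
def RegularCompact (K : Set ℂ) : Prop :=
  ∃ 𝒞 : Set (Set ℂ), (∀ C ∈ 𝒞, IsJordanCurve C) ∧ frontier K = ⋃₀ 𝒞

/-- `K` is `Ω`-*connected*: it has no hole if `Ω` is simply connected, and has at least one hole
if `Ω` is not simply connected. -/
def OmegaConnectedSet (Ω K : Set ℂ) : Prop :=
  (HasNoHole Ω → HasNoHole K) ∧ (¬ HasNoHole Ω → ∃ C : Set ℂ, IsHole K C)

/-- Membership in the family `M(Ω)` of nonempty compact subsets of `Ω` that are regular,
connected, `Ω`-connected and `Ω`-convex. -/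
def MemM (Ω K : Set ℂ) : Prop :=
  K.Nonempty ∧ IsCompact K ∧ K ⊆ Ω ∧ RegularCompact K ∧ IsConnected K ∧
    OmegaConnectedSet Ω K ∧ OmegaConvex Ω K

/-- `f` is `(Φ, M)`-*universal*: for every `K ∈ M`, the restrictions of the `f ∘ φ n` to `K`
are dense in `C(K)`. -/
def MUniversal (M : Set (Set ℂ)) (φ : ℕ → ℂ → ℂ) (f : ℂ → ℂ) : Prop :=
  ∀ K ∈ M, ∀ h : ℂ → ℂ, ContinuousOn h K → ∀ ε : ℝ, 0 < ε →
    ∃ n : ℕ, ∀ z ∈ K, ‖f (φ n z) - h z‖ < ε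

/-- The space `H(Ω)` of holomorphic functions on `Ω`. -/
def HoloSpace (Ω : Set ℂ) : Type :=
  {f : ℂ → ℂ // DifferentiableOn ℂ f Ω}

/-- The topology of locally uniform convergence on `H(Ω)`, induced by the compact-open
topology on `C(Ω, ℂ)`. -/
noncomputable instance HoloSpace.instTopologicalSpace (Ω : Set ℂ) :
    TopologicalSpace (HoloSpace Ω) :=
  TopologicalSpace.induced
    (fun f : HoloSpace Ω => (⟨Ω.restrict f.1, f.2.continuousOn.restrict⟩ : C(Ω, ℂ)))
    inferInstance

/-- The smoothstep polynomial. -/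
def stepPoly (x : ℂ) : ℂ := x ^ 2 * (3 - 2 * x)

theorem stepPoly_iter_small (N : ℕ) (x : ℂ) (hx : ‖x‖ ≤ 1 / 4) :
    ‖stepPoly^[N] x‖ ≤ (7 / 8) ^ N * (1 / 4) := by
  induction N with
  | zero => simpa using hx
  | succ N ih =>
    rw [Function.iterate_succ_apply']
    set y := stepPoly^[N] x
    have h1 : ‖y‖ ≤ 1 / 4 := ih.trans (by
      have : ((7 : ℝ) / 8) ^ N ≤ 1 := pow_le_one₀ (by norm_num) (by norm_num)
      linarith)
    have h2 : ‖(3 : ℂ) - 2 * y‖ ≤ 7 / 2 := by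
      calc ‖(3 : ℂ) - 2 * y‖ ≤ ‖(3 : ℂ)‖ + ‖2 * y‖ := norm_sub_le _ _
        _ = 3 + 2 * ‖y‖ := by simp
        _ ≤ 7 / 2 := by linarith
    have h3 : ‖stepPoly y‖ = ‖y‖ * (‖y‖ * ‖(3 : ℂ) - 2 * y‖) := by
      simp [stepPoly, pow_two, mul_assoc]
    have h4 : ‖y‖ * ‖(3 : ℂ) - 2 * y‖ ≤ 1 / 4 * (7 / 2) :=
      mul_le_mul h1 h2 (norm_nonneg _) (by norm_num)
    rw [h3, pow_succ]
    have := mul_le_mul ih h4 (by positivity) (by positivity)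
    linarith

theorem stepPoly_iter_symm (N : ℕ) (x : ℂ) : stepPoly^[N] (1 - x) = 1 - stepPoly^[N] x := by
  induction N with
  | zero => simp
  | succ N ih =>
    rw [Function.iterate_succ_apply', Function.iterate_succ_apply', ih]
    simp only [stepPoly]; ring

theorem stepPoly_iter_differentiable (N : ℕ) : Differentiable ℂ (stepPoly^[N]) := by
  apply Differentiable.iterate
  unfold stepPoly
  fun_prop

theorem exists_norm_bound {K : Set ℂ} (hK : IsCompact K) {h : ℂ → ℂ} (hh : ContinuousOn h K) :
    ∃ B : ℝ, 1 ≤ B ∧ ∀ z ∈ K, ‖h z‖ ≤ B := by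
  obtain ⟨C, hC⟩ := hK.exists_bound_of_continuousOn hh
  exact ⟨max C 1, le_max_right _ _, fun z hz => (hC z hz).trans (le_max_left _ _)⟩

theorem criterion_of_universal
    (G : Set ℂ) (Ω : Set ℂ)
    (φ : ℕ → ℂ → ℂ) (hφc : ∀ n, ContinuousOn (φ n) G) (hφm : ∀ n, Set.MapsTo (φ n) G Ω)
    (M : Set (Set ℂ)) (hM : ∀ K ∈ M, K ⊆ G ∧ IsCompact K)
    (f : ℂ → ℂ) (hf : DifferentiableOn ℂ f Ω) (hu : MUniversal M φ f) :
    ∀ ε : ℝ, 0 < ε → ∀ K ∈ M, ∀ L : Set ℂ, L ⊆ Ω → IsCompact L →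
        ∀ h : ℂ → ℂ, ContinuousOn h K → ∀ g : ℂ → ℂ, DifferentiableOn ℂ g Ω →
          ∃ f : ℂ → ℂ, DifferentiableOn ℂ f Ω ∧ ∃ n : ℕ,
            (∀ z ∈ K, ‖f (φ n z) - h z‖ ≤ ε) ∧ ∀ z ∈ L, ‖f z - g z‖ ≤ ε := by
  intro ε hε K hK L hLΩ hL h hh g hg
  obtain ⟨hKG, hKc⟩ := hM K hK
  obtain ⟨B, hB1, hB⟩ := exists_norm_bound hKc hh
  obtain ⟨R, hR1, hR⟩ := exists_norm_bound hL (hf.continuousOn.mono hLΩ)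
  have hB0 : (0 : ℝ) < B := by linarith
  have hR0 : (0 : ℝ) < R := by linarith
  have hBc : (B : ℂ) ≠ 0 := by exact_mod_cast hB0.ne'
  have hRc : (R : ℂ) ≠ 0 := by exact_mod_cast hR0.ne'
  -- normalised universal function
  let a : ℂ → ℂ := fun z => f z / (4 * R)
  have ha : DifferentiableOn ℂ a Ω := hf.div_const _
  have haL : ∀ z ∈ L, ‖a z‖ ≤ 1 / 4 := by
    intro z hz
    have : ‖a z‖ = ‖f z‖ / (4 * R) := by simp [a, abs_of_pos hR0]
    rw [this, div_le_iff₀ (by positivity)]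
    linarith [hR z hz]
  let e : ℝ := min (1 / 8) (ε / (16 * B))
  have he : 0 < e := lt_min (by norm_num) (by positivity)
  obtain ⟨n, hn⟩ := hu K hK (fun z => 4 * R * (1 + h z / (8 * B)))
    (by fun_prop) (4 * R * e) (by positivity)
  have hn' : ∀ z ∈ K, ‖a (φ n z) - (1 + h z / (8 * B))‖ < e := by
    intro z hz
    have h1 := hn z hz
    have h2 : f (φ n z) - 4 * R * (1 + h z / (8 * B))
        = (4 * R) * (a (φ n z) - (1 + h z / (8 * B))) := by
      simp only [a]; field_simp
    rw [h2, norm_mul] at h1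
    have h3 : ‖(4 * R : ℂ)‖ = 4 * R := by simp [abs_of_pos hR0]
    rw [h3] at h1
    exact lt_of_mul_lt_mul_left h1 (by positivity)
  have haK : ∀ z ∈ K, ‖1 - a (φ n z)‖ ≤ 1 / 4 := by
    intro z hz
    have h1 : ‖h z / (8 * B)‖ ≤ 1 / 8 := by
      have : ‖h z / (8 * B)‖ = ‖h z‖ / (8 * B) := by simp [abs_of_pos hB0]
      rw [this, div_le_iff₀ (by positivity)]
      linarith [hB z hz]
    have h2 : 1 - a (φ n z) = -(a (φ n z) - (1 + h z / (8 * B))) - h z / (8 * B) := by ring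
    rw [h2]
    refine (norm_sub_le _ _).trans ?_
    rw [norm_neg]
    have h3 := hn' z hz
    have h4 : e ≤ 1 / 8 := min_le_left _ _
    linarith
  let q : ℂ → ℂ := fun z => 8 * B * (a z - 1)
  have hq : DifferentiableOn ℂ q Ω := (ha.sub_const 1).const_mul _
  have hqK : ∀ z ∈ K, ‖q (φ n z) - h z‖ ≤ ε / 2 := by
    intro z hz
    have h2 : q (φ n z) - h z = (8 * B) * (a (φ n z) - (1 + h z / (8 * B))) := by
      simp only [q]; field_simp; ring
    have h3 : ‖(8 * B : ℂ)‖ = 8 * B := by simp [abs_of_pos hB0]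
    rw [h2, norm_mul, h3]
    calc 8 * B * ‖a (φ n z) - (1 + h z / (8 * B))‖ ≤ 8 * B * (ε / (16 * B)) := by
          gcongr
          exact (hn' z hz).le.trans (min_le_right _ _)
      _ = ε / 2 := by field_simp; norm_num
  have hd : DifferentiableOn ℂ (fun z => q z - g z) Ω := hq.sub hg
  obtain ⟨C₁, hC₁1, hC₁⟩ := exists_norm_bound hL (hd.continuousOn.mono hLΩ)
  obtain ⟨C₂, hC₂1, hC₂⟩ := exists_norm_bound (h := fun z => q (φ n z) - g (φ n z)) hKc
    (hd.continuousOn.comp ((hφc n).mono hKG) ((hφm n).mono_left hKG))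
  obtain ⟨N, hN⟩ := exists_pow_lt_of_lt_one (show 0 < ε / (C₁ + C₂) by positivity)
    (show (7 / 8 : ℝ) < 1 by norm_num)
  rw [lt_div_iff₀ (by positivity)] at hN
  have hpos : (0 : ℝ) < (7 / 8) ^ N := by positivity
  refine ⟨fun z => g z + stepPoly^[N] (a z) * (q z - g z), ?_, n, ?_, ?_⟩
  · exact hg.add (((stepPoly_iter_differentiable N).comp_differentiableOn ha).mul hd)
  · intro z hz
    have h1 : g (φ n z) + stepPoly^[N] (a (φ n z)) * (q (φ n z) - g (φ n z)) - h z
      = (q (φ n z) - h z) - (1 - stepPoly^[N] (a (φ n z))) * (q (φ n z) - g (φ n z)) := by ring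
    simp only [h1, ← stepPoly_iter_symm]
    refine (norm_sub_le _ _).trans ?_
    rw [norm_mul]
    have h2 := mul_le_mul (stepPoly_iter_small N _ (haK z hz)) (hC₂ z hz)
      (norm_nonneg _) (by positivity)
    have h3 := hqK z hz
    nlinarith
  · intro z hz
    rw [add_sub_cancel_left, norm_mul]
    have h2 := mul_le_mul (stepPoly_iter_small N _ (haL z hz)) (hC₁ z hz)
      (norm_nonneg _) (by positivity)
    nlinarith

/-- Restriction map `H(Ω) → C(Ω, ℂ)`. -/
noncomputable def holoRes (Ω : Set ℂ) (f : HoloSpace Ω) : C(Ω, ℂ) :=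
  ⟨Ω.restrict f.1, f.2.continuousOn.restrict⟩

theorem holoRes_isInducing (Ω : Set ℂ) : Topology.IsInducing (holoRes Ω) := ⟨rfl⟩

theorem isClosed_range_holoRes (Ω : Set ℂ) (hΩ : IsOpen Ω) :
    IsClosed (range (holoRes Ω)) := by
  haveI : LocallyCompactSpace Ω := hΩ.locallyCompactSpace
  apply IsSeqClosed.isClosed
  intro F u hF hu
  choose f hf using hF
  rw [ContinuousMap.tendsto_iff_tendstoLocallyUniformly] at hu
  classical
  let v : ℂ → ℂ := fun z => if hz : z ∈ Ω then u ⟨z, hz⟩ else 0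
  have hv : ∀ z : Ω, v z = u z := fun z => by simp [v]
  have h1 : TendstoLocallyUniformlyOn (fun k => (f k).1) v atTop Ω := by
    rw [tendstoLocallyUniformlyOn_iff_tendstoLocallyUniformly_comp_coe]
    have e1 : v ∘ ((↑) : Ω → ℂ) = u := funext hv
    have e2 : (fun k (x : Ω) => (f k).1 x) = fun k x => F k x := by
      funext k x
      rw [← hf k]; rfl
    rw [e1, e2]; exact hu
  have h2 : DifferentiableOn ℂ v Ω :=
    h1.differentiableOn (Eventually.of_forall fun k => (f k).2) hΩ
  exact ⟨⟨v, h2⟩, ContinuousMap.ext hv⟩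

theorem holoSpace_baire (Ω : Set ℂ) (hΩ : IsOpen Ω) : BaireSpace (HoloSpace Ω) := by
  haveI : LocallyCompactSpace Ω := hΩ.locallyCompactSpace
  letI us : UniformSpace (HoloSpace Ω) := UniformSpace.comap (holoRes Ω) inferInstance
  have hind : IsUniformInducing (holoRes Ω) := ⟨rfl⟩
  haveI : CompleteSpace (HoloSpace Ω) :=
    hind.completeSpace (isClosed_range_holoRes Ω hΩ).isComplete
  haveI : (uniformity (HoloSpace Ω)).IsCountablyGenerated := by
    rw [← hind.comap_uniformity]; infer_instance
  have : @BaireSpace (HoloSpace Ω) us.toTopologicalSpace := inferInstance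
  exact this

theorem holoSpace_nhds (Ω : Set ℂ) (g : HoloSpace Ω) (W : Set (HoloSpace Ω))
    (hW : W ∈ nhds g) : ∃ L : Set ℂ, L ⊆ Ω ∧ IsCompact L ∧ ∃ ε : ℝ, 0 < ε ∧
      ∀ f : HoloSpace Ω, (∀ z ∈ L, ‖f.1 z - g.1 z‖ ≤ ε) → f ∈ W := by
  rw [(holoRes_isInducing Ω).nhds_eq_comap, mem_comap] at hW
  obtain ⟨V, hV, hVW⟩ := hW
  have hb := nhds_basis_uniformity'
    (Metric.uniformity_basis_dist_le.compactConvergenceUniformity (α := Ω) (β := ℂ))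
    (x := holoRes Ω g)
  obtain ⟨⟨L, ε⟩, ⟨hL, hε⟩, hLV⟩ := hb.mem_iff.1 hV
  refine ⟨(↑) '' L, by simp, hL.image continuous_subtype_val, ε, hε, fun f hf => hVW (hLV ?_)⟩
  intro x hx
  have := hf x ⟨x, hx, rfl⟩
  show dist (g.1 x) (f.1 x) ≤ ε
  rwa [dist_comm, dist_eq_norm]

/-- The map `f ↦ (f ∘ φₙ)|_K`. -/
noncomputable def compMap (Ω K : Set ℂ) (ψ : ℂ → ℂ) (hc : ContinuousOn ψ K)
    (hm : MapsTo ψ K Ω) (f : HoloSpace Ω) : C(K, ℂ) :=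
  (holoRes Ω f).comp ⟨hm.restrict, hc.mapsToRestrict hm⟩

theorem continuous_compMap (Ω K : Set ℂ) (ψ : ℂ → ℂ) (hc : ContinuousOn ψ K)
    (hm : MapsTo ψ K Ω) : Continuous (compMap Ω K ψ hc hm) :=
  (ContinuousMap.continuous_precomp _).comp (holoRes_isInducing Ω).continuous

theorem extend_cont {K : Set ℂ} (u : C(K, ℂ)) :
    ∃ h : ℂ → ℂ, ContinuousOn h K ∧ ∀ z : K, h z = u z := by
  classical
  let v : ℂ → ℂ := fun z => if hz : z ∈ K then u ⟨z, hz⟩ else 0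
  have hv : ∀ z : K, v z = u z := fun z => by simp [v]
  refine ⟨v, ?_, hv⟩
  rw [continuousOn_iff_continuous_domRestrict]
  have : K.domRestrict v = u := funext hv
  rw [this]; exact u.continuous

theorem main_gdelta
    (G : Set ℂ) (Ω : Set ℂ) (hΩ : IsOpen Ω)
    (φ : ℕ → ℂ → ℂ) (hφc : ∀ n, ContinuousOn (φ n) G) (hφm : ∀ n, Set.MapsTo (φ n) G Ω)
    (M : Set (Set ℂ)) (hMc : M.Countable) (hM : ∀ K ∈ M, K ⊆ G ∧ IsCompact K)
    (hcrit : ∀ ε : ℝ, 0 < ε → ∀ K ∈ M, ∀ L : Set ℂ, L ⊆ Ω → IsCompact L →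
        ∀ h : ℂ → ℂ, ContinuousOn h K → ∀ g : ℂ → ℂ, DifferentiableOn ℂ g Ω →
          ∃ f : ℂ → ℂ, DifferentiableOn ℂ f Ω ∧ ∃ n : ℕ,
            (∀ z ∈ K, ‖f (φ n z) - h z‖ ≤ ε) ∧ ∀ z ∈ L, ‖f z - g z‖ ≤ ε) :
    IsGδ {f : HoloSpace Ω | MUniversal M φ f.1} ∧
        Dense {f : HoloSpace Ω | MUniversal M φ f.1} := by
  haveI := holoSpace_baire Ω hΩ
  haveI : Countable M := hMc
  haveI hcs : ∀ K : M, CompactSpace K.1 := fun K => isCompact_iff_compactSpace.1 (hM K.1 K.2).2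
  let T : ∀ K : M, ℕ → HoloSpace Ω → C(K.1, ℂ) := fun K n =>
    compMap Ω K.1 (φ n) ((hφc n).mono (hM K.1 K.2).1) ((hφm n).mono_left (hM K.1 K.2).1)
  have hT : ∀ K n, Continuous (T K n) := fun K n => continuous_compMap _ _ _ _ _
  have hTa : ∀ (K : M) n f (z : K.1), T K n f z = f.1 (φ n z) := fun K n f z => rfl
  let S : ∀ K : M, Set (Set C(K.1, ℂ)) := fun K => TopologicalSpace.countableBasis C(K.1, ℂ)
  have hS : ∀ K, (S K).Countable := fun K => TopologicalSpace.countable_countableBasis _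
  haveI : ∀ K, Countable (S K) := fun K => hS K
  let A : (Σ K : M, S K) → Set (HoloSpace Ω) := fun p => ⋃ n, T p.1 n ⁻¹' p.2.1
  have hAo : ∀ p, IsOpen (A p) := fun p => isOpen_iUnion fun n =>
    (TopologicalSpace.isOpen_of_mem_countableBasis p.2.2).preimage (hT _ _)
  have hAd : ∀ p, Dense (A p) := by
    rintro ⟨K, V, hV⟩
    have hVo : IsOpen V := TopologicalSpace.isOpen_of_mem_countableBasis hV
    obtain ⟨u, hu⟩ := TopologicalSpace.nonempty_of_mem_countableBasis hV
    obtain ⟨δ, hδ, hδV⟩ := Metric.isOpen_iff.1 hVo u hu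
    obtain ⟨h, hh, hhu⟩ := extend_cont u
    intro g
    rw [mem_closure_iff_nhds]
    intro W hW
    obtain ⟨L, hLΩ, hL, ε, hε, hLW⟩ := holoSpace_nhds Ω g W hW
    obtain ⟨f, hf, n, hn1, hn2⟩ := hcrit (min ε (δ / 2)) (lt_min hε (by positivity)) K.1 K.2 L hLΩ
      hL h hh g.1 g.2
    refine ⟨⟨f, hf⟩, hLW _ fun z hz => (hn2 z hz).trans (min_le_left _ _), ?_⟩
    refine mem_iUnion.2 ⟨n, hδV ?_⟩
    rw [Metric.mem_ball, ContinuousMap.dist_lt_iff hδ]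
    intro z
    have h1 := (hn1 z z.2).trans (min_le_right _ _)
    show dist (f (φ n z)) (u z) < δ
    rw [dist_eq_norm, ← hhu]
    exact lt_of_le_of_lt h1 (by linarith)
  have hEq : {f : HoloSpace Ω | MUniversal M φ f.1} = ⋂ p, A p := by
    ext f
    simp only [mem_setOf_eq, mem_iInter]
    constructor
    · rintro hf ⟨K, V, hV⟩
      have hVo : IsOpen V := TopologicalSpace.isOpen_of_mem_countableBasis hV
      obtain ⟨u, hu⟩ := TopologicalSpace.nonempty_of_mem_countableBasis hV
      obtain ⟨δ, hδ, hδV⟩ := Metric.isOpen_iff.1 hVo u hu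
      obtain ⟨h, hh, hhu⟩ := extend_cont u
      obtain ⟨n, hn⟩ := hf K.1 K.2 h hh δ hδ
      refine mem_iUnion.2 ⟨n, hδV ?_⟩
      rw [Metric.mem_ball, ContinuousMap.dist_lt_iff hδ]
      intro z
      rw [hTa, dist_eq_norm, ← hhu]
      exact hn z z.2
    · intro hf K hK h hh ε hε
      let u : C(K, ℂ) := ⟨K.restrict h, hh.restrict⟩
      haveI : CompactSpace K := hcs ⟨K, hK⟩
      obtain ⟨V, hV, huV, hVb⟩ :=
        (TopologicalSpace.isBasis_countableBasis C(K, ℂ)).exists_subset_of_mem_open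
          (Metric.mem_ball_self hε : u ∈ Metric.ball u ε) Metric.isOpen_ball
      obtain ⟨n, hn⟩ := mem_iUnion.1 (hf ⟨⟨K, hK⟩, V, hV⟩)
      have h1 := hVb hn
      rw [Metric.mem_ball, ContinuousMap.dist_lt_iff hε] at h1
      refine ⟨n, fun z hz => ?_⟩
      have h2 := h1 ⟨z, hz⟩
      rw [dist_eq_norm] at h2
      exact h2
  rw [hEq]
  exact ⟨.iInter_of_isOpen hAo, dense_iInter_of_isOpen hAo hAd⟩

/-- Fact `Birk-G-empty`. -/
theorem mUniversal_iff_criterion_and_gdelta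
    (G : Set ℂ) (hGcl : IsClosed G) (hGint : interior G = ∅)
    (Ω : Set ℂ) (hΩ : IsOpen Ω) (hΩconn : IsConnected Ω)
    (φ : ℕ → ℂ → ℂ) (hφc : ∀ n, ContinuousOn (φ n) G) (hφm : ∀ n, Set.MapsTo (φ n) G Ω)
    (M : Set (Set ℂ)) (hMc : M.Countable) (hM : ∀ K ∈ M, K ⊆ G ∧ IsCompact K) :
    ((∃ f : ℂ → ℂ, DifferentiableOn ℂ f Ω ∧ MUniversal M φ f) ↔
      (∀ ε : ℝ, 0 < ε → ∀ K ∈ M, ∀ L : Set ℂ, L ⊆ Ω → IsCompact L →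
        ∀ h : ℂ → ℂ, ContinuousOn h K → ∀ g : ℂ → ℂ, DifferentiableOn ℂ g Ω →
          ∃ f : ℂ → ℂ, DifferentiableOn ℂ f Ω ∧ ∃ n : ℕ,
            (∀ z ∈ K, ‖f (φ n z) - h z‖ ≤ ε) ∧ ∀ z ∈ L, ‖f z - g z‖ ≤ ε)) ∧
    ({f : HoloSpace Ω | MUniversal M φ f.1} = ∅ ∨
      (IsGδ {f : HoloSpace Ω | MUniversal M φ f.1} ∧
        Dense {f : HoloSpace Ω | MUniversal M φ f.1})) := by
  have hA : (∃ f : ℂ → ℂ, DifferentiableOn ℂ f Ω ∧ MUniversal M φ f) → _ :=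
    fun ⟨f, hf, hu⟩ => criterion_of_universal G Ω φ hφc hφm M hM f hf hu
  refine ⟨⟨hA, fun hcrit => ?_⟩, ?_⟩
  · obtain ⟨-, hd⟩ := main_gdelta G Ω hΩ φ hφc hφm M hMc hM hcrit
    haveI : Nonempty (HoloSpace Ω) := ⟨⟨fun _ => 0, differentiableOn_const 0⟩⟩
    obtain ⟨f, hf⟩ := hd.nonempty
    exact ⟨f.1, f.2, hf⟩
  · rcases Set.eq_empty_or_nonempty {f : HoloSpace Ω | MUniversal M φ f.1} with h | ⟨f, hf⟩
    · exact Or.inl h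
    · exact Or.inr (main_gdelta G Ω hΩ φ hφc hφm M hMc hM (hA ⟨f.1, f.2, hf⟩))
end

section
/- Let G ⊆ ℂ be a countable union of uniformly separated Jordan arcs or Jordan curves (i.e., G = ⋃ₖ gₖ where each gₖ is a Jordan arc or a Jordan curve and there exists δ > 0 with dist(gₖ, gₖ') ≥ δ for all k ≠ k'), let Ω ⊆ ℂ be a domain, let Φ = (φₙ) be a sequence of continuous maps from G to Ω, and let M be the family of all compact subsets of G with connected complement in ℂ. If for every compact set L ⊆ Ω and every K ∈ M there exists n ∈ ℕ such that φₙ is injective on K and φₙ(K) ∩ L = ∅, then there exists a (Φ,M)-universal function in H(Ω). -/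
open Set Metric Bornology Filter

section Part1
open Set Metric Bornology Filter
open scoped Topology

/-- `z - q` is invertible in `A`. -/
def InvAt {Y : Set ℂ} (A : Subalgebra ℂ C(Y, ℂ)) (q : ℂ) : Prop :=
  ∃ u ∈ A, ∀ z : Y, u z * ((z : ℂ) - q) = 1

/-- inclusion as an element of C(Y,ℂ) -/
def idY (Y : Set ℂ) : C(Y, ℂ) := ⟨fun z => (z : ℂ), continuous_subtype_val⟩

lemma geom_mem {Y : Set ℂ} [CompactSpace Y] {A : Subalgebra ℂ C(Y, ℂ)}
    (hA : IsClosed (A : Set C(Y, ℂ))) {t : C(Y, ℂ)} (ht : t ∈ A) (hn : ∀ z, ‖t z‖ ≤ 1 / 2) :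
    ∃ v ∈ A, ∀ z, v z * (1 - t z) = 1 := by
  have hn' : ‖t‖ < 1 := by
    have : ‖t‖ ≤ 1 / 2 := (ContinuousMap.norm_le _ (by norm_num)).2 hn
    linarith
  refine ⟨∑' n, t ^ n, tsum_mem hA (fun n => pow_mem ht n), fun z => ?_⟩
  have := geom_series_mul_neg t (by simpa using hn')
  have h2 := congrArg (fun f : C(Y, ℂ) => f z) this
  simpa using h2

lemma InvAt.near {Y : Set ℂ} [CompactSpace Y] {A : Subalgebra ℂ C(Y, ℂ)}
    (hA : IsClosed (A : Set C(Y, ℂ))) {p q : ℂ} (hp : InvAt A p)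
    (h : ∀ z ∈ Y, 2 * ‖q - p‖ ≤ ‖z - p‖) : InvAt A q := by
  obtain ⟨u, hu, hu1⟩ := hp
  have hne : ∀ z : Y, (z : ℂ) - p ≠ 0 := fun z h0 => by simpa [h0] using hu1 z
  have hu2 : ∀ z : Y, u z = ((z : ℂ) - p)⁻¹ := fun z => eq_inv_of_mul_eq_one_left (hu1 z)
  obtain ⟨v, hv, hv1⟩ := geom_mem hA (A.smul_mem hu (q - p)) (t := (q - p) • u) (by
    intro z
    have h1 := h z z.2
    have h3 : 0 < ‖(z : ℂ) - p‖ := norm_pos_iff.2 (hne z)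
    simp only [ContinuousMap.coe_smul, Pi.smul_apply, smul_eq_mul, norm_mul, hu2, norm_inv]
    rw [← div_eq_mul_inv, div_le_iff₀ h3]
    linarith)
  refine ⟨u * v, A.mul_mem hu hv, fun z => ?_⟩
  have h1 := hv1 z
  have h2 := hu1 z
  simp only [ContinuousMap.coe_smul, Pi.smul_apply, smul_eq_mul, ContinuousMap.mul_apply] at *
  calc u z * v z * ((z : ℂ) - q) = v z * (u z * ((z : ℂ) - p) - (q - p) * u z) := by ring
    _ = 1 := by rw [h2, h1]

lemma InvAt.far {Y : Set ℂ} [CompactSpace Y] {A : Subalgebra ℂ C(Y, ℂ)}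
    (hA : IsClosed (A : Set C(Y, ℂ))) (hid : idY Y ∈ A) {q : ℂ} (hq : q ≠ 0)
    (h : ∀ z ∈ Y, 2 * ‖z‖ ≤ ‖q‖) : InvAt A q := by
  obtain ⟨v, hv, hv1⟩ := geom_mem hA (A.smul_mem hid q⁻¹) (by
    intro z
    have h3 : 0 < ‖q‖ := norm_pos_iff.2 hq
    have := h z z.2
    simp only [idY, ContinuousMap.coe_smul, Pi.smul_apply, ContinuousMap.coe_mk, smul_eq_mul, norm_mul, norm_inv]
    rw [inv_mul_le_iff₀ h3]
    linarith)
  refine ⟨(-q⁻¹) • v, A.smul_mem hv _, fun z => ?_⟩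
  have := hv1 z
  simp only [idY, ContinuousMap.coe_smul, Pi.smul_apply, ContinuousMap.coe_mk, smul_eq_mul] at *
  rw [← this]; field_simp; ring

/-- pole pushing -/
lemma invAt_of_comp {Y : Set ℂ} (hY : IsCompact Y) [CompactSpace Y] {A : Subalgebra ℂ C(Y, ℂ)}
    (hA : IsClosed (A : Set C(Y, ℂ))) (hid : idY Y ∈ A) (Ω : Set ℂ)
    (hΩ : ∀ q, q ∉ Ω → q ∉ Y → InvAt A q)
    (hcomp : ∀ q ∈ Yᶜ, ¬ IsBounded (connectedComponentIn Yᶜ q) ∨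
      (connectedComponentIn Yᶜ q ∩ Ωᶜ).Nonempty) :
    ∀ q ∈ Yᶜ, InvAt A q := by
  intro q hq
  have key : ∀ p ∈ connectedComponentIn Yᶜ q, InvAt A p → InvAt A q := by
    intro p hp
    have hsub := connectedComponentIn_subset Yᶜ q
    have := (isPreconnected_connectedComponentIn (x := q) (F := Yᶜ)).induction₂
      (fun a b => InvAt A a ↔ InvAt A b) ?_ (fun _ _ _ _ _ _ h1 h2 => h1.trans h2)
      (fun _ _ _ _ h => h.symm) hp (mem_connectedComponentIn hq)
    · exact this.1
    · intro x hx
      obtain ⟨ε, hε, hb⟩ := Metric.isOpen_iff.1 hY.isClosed.isOpen_compl x (hsub hx)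
      refine mem_nhdsWithin_of_mem_nhds ?_
      filter_upwards [Metric.ball_mem_nhds x (show 0 < ε / 3 by positivity)] with y hy
      have hd : ∀ z ∈ Y, ε ≤ ‖z - x‖ := by
        intro z hz
        by_contra hlt
        exact hb (show z ∈ ball x ε by simpa [dist_eq_norm] using hlt) hz
      have hy' : ‖y - x‖ < ε / 3 := by simpa [dist_eq_norm] using hy
      constructor
      · intro h; exact h.near hA fun z hz => by linarith [hd z hz]
      · intro h
        refine h.near hA fun z hz => ?_
        have h1 := hd z hz
        have h2 : ‖z - x‖ ≤ ‖z - y‖ + ‖y - x‖ := by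
          simpa using norm_add_le (z - y) (y - x)
        rw [norm_sub_rev x y]
        linarith
  rcases hcomp q hq with h | ⟨p, hp, hpΩ⟩
  · obtain ⟨R, hR⟩ := hY.isBounded.exists_norm_le
    have : ∃ p ∈ connectedComponentIn Yᶜ q, 2 * |R| + 1 < ‖p‖ := by
      by_contra hcon
      push Not at hcon
      exact h (isBounded_iff_forall_norm_le.2 ⟨_, hcon⟩)
    obtain ⟨p, hp, hpR⟩ := this
    refine key p hp (InvAt.far hA hid ?_ fun z hz => ?_)
    · rintro rfl
      have := abs_nonneg R
      simp at hpR; linarith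
    · linarith [hR z hz, le_abs_self R]
  · exact key p hp (hΩ p hpΩ (connectedComponentIn_subset _ _ hp))

/-- log near 1 stays in A -/
lemma log_mem {Y : Set ℂ} [CompactSpace Y] {A : Subalgebra ℂ C(Y, ℂ)}
    (hA : IsClosed (A : Set C(Y, ℂ))) {t : C(Y, ℂ)} (ht : t ∈ A) (hn : ∀ z, ‖t z‖ ≤ 1 / 2) :
    ∃ v ∈ A, ∀ z, v z = Complex.log (1 + t z) := by
  have hcont : Continuous fun z : Y => Complex.log (1 + t z) := by
    refine Continuous.clog (by fun_prop) fun z => ?_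
    left
    have h1 := Complex.abs_re_le_norm (t z)
    have h2 := neg_abs_le (t z).re
    have h3 := hn z
    simp; linarith
  refine ⟨⟨_, hcont⟩, ?_, fun z => rfl⟩
  have hmem : ∀ n : ℕ, (∑ j ∈ Finset.range (n + 1), ((-1 : ℂ) ^ (j + 1) / j) • t ^ j) ∈ A :=
    fun n => A.sum_mem fun j _ => A.smul_mem (pow_mem ht j) _
  have hlim : Tendsto (fun n : ℕ => (∑ j ∈ Finset.range (n + 1), ((-1 : ℂ) ^ (j + 1) / j) • t ^ j))
      atTop (𝓝 (⟨_, hcont⟩ : C(Y, ℂ))) := by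
    have h0 : Tendsto (fun n : ℕ => (1 / 2 : ℝ) ^ n) atTop (𝓝 0) :=
      tendsto_pow_atTop_nhds_zero_of_lt_one (by norm_num) (by norm_num)
    rw [tendsto_iff_norm_sub_tendsto_zero]
    refine squeeze_zero (fun _ => norm_nonneg _) (fun n => ?_) h0
    rw [ContinuousMap.norm_le _ (by positivity)]
    intro z
    rw [ContinuousMap.sub_apply, norm_sub_rev]
    have h1 := Complex.norm_log_sub_logTaylor_le n (z := t z) (by linarith [hn z])
    have h2 : Complex.logTaylor (n + 1) (t z) =
        (∑ j ∈ Finset.range (n + 1), ((-1 : ℂ) ^ (j + 1) / j) • t ^ j) z := by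
      simp [Complex.logTaylor, ContinuousMap.sum_apply]
      refine Finset.sum_congr rfl fun j _ => by ring
    rw [h2] at h1
    refine h1.trans ?_
    have h3 := hn z
    have h4 : ‖t z‖ ^ (n + 1) ≤ (1 / 2) ^ (n + 1) := pow_le_pow_left₀ (norm_nonneg _) h3 _
    have h5 : (1 - ‖t z‖)⁻¹ ≤ 2 := by
      rw [inv_le_comm₀ (by linarith) (by norm_num)]; linarith
    have h6 : 0 ≤ (1 - ‖t z‖)⁻¹ := inv_nonneg.2 (by linarith)
    calc _ ≤ ‖t z‖ ^ (n + 1) * (1 - ‖t z‖)⁻¹ / 1 := by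
            apply div_le_div_of_nonneg_left (by positivity) one_pos
            have : (0 : ℝ) ≤ n := Nat.cast_nonneg n
            linarith
      _ ≤ (1 / 2) ^ (n + 1) * 2 := by rw [div_one]; gcongr
      _ = _ := by rw [pow_succ]; ring
  exact hA.mem_of_tendsto hlim (Eventually.of_forall hmem)

lemma exp_mem' {Y : Set ℂ} [CompactSpace Y] {A : Subalgebra ℂ C(Y, ℂ)}
    (hA : IsClosed (A : Set C(Y, ℂ))) {t : C(Y, ℂ)} (ht : t ∈ A) :
    ∃ v ∈ A, ∀ z, v z = Complex.exp (t z) := by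
  refine ⟨NormedSpace.exp t, NormedSpace.exp_mem (R := ℂ) hA ht, fun z => ?_⟩
  have h1 := NormedSpace.exp_series_hasSum_exp' (𝕂 := ℂ) t
  have h2 := (ContinuousMap.evalCLM ℂ z).hasSum h1
  have h3 := NormedSpace.exp_series_hasSum_exp' (𝕂 := ℂ) (t z)
  rw [Complex.exp_eq_exp_ℂ]
  refine h2.unique ?_
  simpa using h3

end Part1

section Part2
open Set Metric Bornology Filter
open scoped Topology

lemma far_aux {ζ p z : ℂ} {δ : ℝ} (hp : p ∈ ball ζ (2 * δ)) (hz : 8 * δ ≤ ‖z - ζ‖) :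
    6 * δ < ‖z - p‖ := by
  have h1 : ‖p - ζ‖ < 2 * δ := by simpa [dist_eq_norm] using hp
  have h2 : ‖z - ζ‖ ≤ ‖z - p‖ + ‖p - ζ‖ := by simpa using norm_add_le (z - p) (p - ζ)
  linarith

lemma far_re {ζ p q z : ℂ} {δ : ℝ} (hδ : 0 < δ) (hp : p ∈ ball ζ (2 * δ)) (hq : q ∈ ball ζ (2 * δ))
    (hz : 8 * δ ≤ ‖z - ζ‖) : 0 < ((z - p) / (z - q)).re := by
  have h2 := far_aux hq hz
  have h0 : z - q ≠ 0 := norm_pos_iff.1 (by linarith)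
  have h3 : (z - p) / (z - q) = 1 + (q - p) / (z - q) := by field_simp; ring
  have h4 : ‖(q - p) / (z - q)‖ < 1 := by
    rw [norm_div, div_lt_one (by linarith)]
    have h5 : ‖q - p‖ < 4 * δ := by
      have h1 : ‖p - ζ‖ < 2 * δ := by simpa [dist_eq_norm] using hp
      have h1' : ‖q - ζ‖ < 2 * δ := by simpa [dist_eq_norm] using hq
      have := norm_sub_le (q - ζ) (p - ζ)
      simp at this; linarith
    linarith
  have h5 := Complex.abs_re_le_norm ((q - p) / (z - q))
  have h6 := neg_abs_le ((q - p) / (z - q)).re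
  rw [h3, Complex.add_re, Complex.one_re]; linarith

lemma log_mul_re {u v : ℂ} (hu : 0 < u.re) (hv : 0 < v.re) :
    Complex.log (u * v) = Complex.log u + Complex.log v := by
  have h1 := abs_lt.1 (Complex.abs_arg_lt_pi_div_two_iff.2 (Or.inl hu))
  have h2 := abs_lt.1 (Complex.abs_arg_lt_pi_div_two_iff.2 (Or.inl hv))
  refine Complex.log_mul (by rintro rfl; simp at hu) (by rintro rfl; simp at hv) ⟨?_, ?_⟩ <;> linarith

lemma exists_log {Y : Set ℂ} (hY : IsCompact Y) [CompactSpace Y] {A : Subalgebra ℂ C(Y, ℂ)}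
    (hA : IsClosed (A : Set C(Y, ℂ))) (hinv : ∀ q ∈ Yᶜ, InvAt A q)
    {ζ : ℂ} {δ : ℝ} (hδ : 0 < δ) {U : Set ℂ} (hU : IsPreconnected U)
    (hUY : U ⊆ Yᶜ) (hUb : U ⊆ ball ζ (2 * δ)) {a b : ℂ} (ha : a ∈ U) (hb : b ∈ U) :
    ∃ α ∈ A, ∀ z : Y, Complex.exp (α z) * ((z : ℂ) - b) = z - a ∧
      (8 * δ ≤ ‖(z : ℂ) - ζ‖ → α z = Complex.log ((z - a) / (z - b))) := by
  have hne : ∀ p ∈ U, ∀ z : Y, (z : ℂ) - p ≠ 0 := by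
    intro p hp z h0
    rw [sub_eq_zero] at h0
    exact hUY hp (h0 ▸ z.2)
  refine hU.induction₂ (fun a b => ∃ α ∈ A, ∀ z : Y, Complex.exp (α z) * ((z : ℂ) - b) = z - a ∧
      (8 * δ ≤ ‖(z : ℂ) - ζ‖ → α z = Complex.log ((z - a) / (z - b)))) ?_ ?_ ?_ ha hb
  · intro x hx
    obtain ⟨ε, hε, hbb⟩ := Metric.isOpen_iff.1 hY.isClosed.isOpen_compl x (hUY hx)
    rw [eventually_nhdsWithin_iff]
    filter_upwards [Metric.ball_mem_nhds x (show 0 < ε / 3 by positivity)] with y hy hyU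
    have hd : ∀ z ∈ Y, ε ≤ ‖z - x‖ := by
      intro z hz
      by_contra hlt
      exact hbb (show z ∈ ball x ε by simpa [dist_eq_norm] using hlt) hz
    have hy' : ‖y - x‖ < ε / 3 := by simpa [dist_eq_norm] using hy
    obtain ⟨u, hu, hu1⟩ := hinv y (hUY hyU)
    have hu2 : ∀ z : Y, u z = ((z : ℂ) - y)⁻¹ := fun z => eq_inv_of_mul_eq_one_left (hu1 z)
    obtain ⟨v, hv, hv1⟩ := log_mem hA (A.smul_mem hu (y - x)) (t := (y - x) • u) (by
      intro z
      have h1 := hd z z.2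
      have h2 : ‖(z : ℂ) - x‖ ≤ ‖(z : ℂ) - y‖ + ‖y - x‖ := by
          simpa using norm_add_le ((z : ℂ) - y) (y - x)
      simp only [ContinuousMap.coe_smul, Pi.smul_apply, smul_eq_mul, norm_mul, hu2, norm_inv]
      rw [← div_eq_mul_inv, div_le_iff₀ (norm_pos_iff.2 (hne y hyU z))]
      linarith)
    refine ⟨v, hv, fun z => ?_⟩
    have h0 := hne y hyU z
    have h1 : 1 + ((y - x) • u) z = ((z : ℂ) - x) / (z - y) := by
      simp only [ContinuousMap.coe_smul, Pi.smul_apply, smul_eq_mul, hu2]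
      field_simp; ring
    have h2 := hv1 z
    rw [h1] at h2
    refine ⟨?_, fun _ => h2⟩
    rw [h2, Complex.exp_log (div_ne_zero (hne x hx z) h0)]
    field_simp
  · rintro x y w hx hy hw ⟨α, hα, hα1⟩ ⟨β, hβ, hβ1⟩
    refine ⟨α + β, A.add_mem hα hβ, fun z => ⟨?_, fun hz => ?_⟩⟩
    · rw [ContinuousMap.add_apply, Complex.exp_add, mul_assoc, (hβ1 z).1, (hα1 z).1]
    · rw [ContinuousMap.add_apply, (hα1 z).2 hz, (hβ1 z).2 hz, ← log_mul_re
        (far_re hδ (hUb hx) (hUb hy) hz) (far_re hδ (hUb hy) (hUb hw) hz)]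
      congr 1
      have := hne y hy z
      have := hne w hw z
      field_simp
  · rintro x y hx hy ⟨α, hα, hα1⟩
    refine ⟨-α, A.neg_mem hα, fun z => ⟨?_, fun hz => ?_⟩⟩
    · rw [← (hα1 z).1, ContinuousMap.neg_apply, ← mul_assoc, ← Complex.exp_add]; simp
    · rw [ContinuousMap.neg_apply, (hα1 z).2 hz, ← Complex.log_inv, inv_div]
      have h1 := abs_lt.1 (Complex.abs_arg_lt_pi_div_two_iff.2
        (Or.inl (far_re hδ (hUb hx) (hUb hy) hz)))
      linarith [Real.pi_pos, h1.2]

lemma Q_est_far {z a b ζ ζ' s : ℂ} {δ : ℝ} (hδ : 0 < δ) (ha : ‖a - ζ‖ < 2 * δ) (hb : ‖b - ζ‖ < 2 * δ)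
    (hab : a ≠ b)
    (hζ' : ‖ζ' - ζ‖ < δ / 4) (hz : 8 * δ ≤ ‖z - ζ‖) (hs : s ^ 2 * (z - b) = z - a) (hre : 0 < s.re) :
    ‖(8 / (a - b) ^ 2) * (z - (a + b) / 2 - (z - b) * s) - (z - ζ')⁻¹‖ ≤
      24 * δ / ‖z - ζ'‖ ^ 2 := by
  set w := z - (a + b) / 2 with hw
  have hab0 : a - b ≠ 0 := sub_ne_zero.2 hab
  have hzb := far_aux (p := b) (by simpa [dist_eq_norm] using hb) hz
  have hmid : (a + b) / 2 ∈ ball ζ (2 * δ) := by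
    rw [mem_ball, dist_eq_norm]
    have : (a + b) / 2 - ζ = (1 / 2 : ℂ) * ((a - ζ) + (b - ζ)) := by ring
    rw [this, norm_mul]
    have := norm_add_le (a - ζ) (b - ζ)
    norm_num; linarith
  have hw6 := far_aux hmid hz
  rw [← hw] at hw6
  have hmid' : ‖(a + b) / 2 - ζ‖ < 2 * δ := by simpa [dist_eq_norm] using hmid
  set x := ‖z - ζ'‖ with hx
  have hx1 : x ≤ ‖w‖ + 9 / 4 * δ := by
    have h1 : z - ζ' = w + ((a + b) / 2 - ζ) - (ζ' - ζ) := by rw [hw]; ring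
    have h2 := norm_sub_le (w + ((a + b) / 2 - ζ)) (ζ' - ζ)
    have h3 := norm_add_le w ((a + b) / 2 - ζ)
    rw [hx, h1]; linarith
  have hx2 : x ≤ ‖z - b‖ + 9 / 4 * δ := by
    have h1 : z - ζ' = (z - b) + (b - ζ) - (ζ' - ζ) := by ring
    have h2 := norm_sub_le ((z - b) + (b - ζ)) (ζ' - ζ)
    have h3 := norm_add_le (z - b) (b - ζ)
    rw [hx, h1]; linarith
  have hx3 : 7 * δ ≤ x := by
    have h1 : z - ζ = (z - ζ') + (ζ' - ζ) := by ring
    have h2 := norm_add_le (z - ζ') (ζ' - ζ)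
    rw [← h1] at h2; linarith
  have hx0 : 0 < x := by linarith
  have hw0 : w ≠ 0 := norm_pos_iff.1 (by linarith)
  have hzb0 : z - b ≠ 0 := norm_pos_iff.1 (by linarith)
  have hzζ : z - ζ' ≠ 0 := norm_pos_iff.1 hx0
  have hs1 : 1 ≤ ‖s + 1‖ := by
    have := Complex.re_le_norm (s + 1); simp at this; linarith
  have hs10 : s + 1 ≠ 0 := norm_pos_iff.1 (by linarith)
  have hw2 : w = (z - b) * (s ^ 2 + 1) / 2 := by rw [hw]; linear_combination (-1/2 : ℂ) * hs
  have hab2 : a - b = (z - b) * (1 - s ^ 2) := by linear_combination hs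
  have hs20 : 1 - s ^ 2 ≠ 0 := fun h => hab0 (by rw [hab2, h, mul_zero])
  have e1 : (8 / (a - b) ^ 2) * (w - (z - b) * s) = 4 / ((z - b) * (s + 1) ^ 2) := by
    rw [hab2, hw2]
    have h1 : 1 - s ≠ 0 := fun h => hs20 (by linear_combination (1 + s) * h)
    have h2 : 1 - s ^ 2 = (1 - s) * (s + 1) := by ring
    rw [h2]
    field_simp
    ring
  have hs21 : s ^ 2 + 1 ≠ 0 := fun h => hw0 (by rw [hw2, h]; simp)
  have e2 : 4 / ((z - b) * (s + 1) ^ 2) - w⁻¹ = (a - b) ^ 2 / (w * ((z - b) * (s + 1) ^ 2) ^ 2) * 1 := by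
    rw [hab2, hw2]
    field_simp
    ring
  have e3 : w⁻¹ - (z - ζ')⁻¹ = ((a + b) / 2 - ζ') / (w * (z - ζ')) := by
    rw [inv_sub_inv hw0 hzζ]
    congr 1
    rw [hw]; ring
  have hsplit : (8 / (a - b) ^ 2) * (w - (z - b) * s) - (z - ζ')⁻¹ =
      (a - b) ^ 2 / (w * ((z - b) * (s + 1) ^ 2) ^ 2) * 1 + ((a + b) / 2 - ζ') / (w * (z - ζ')) := by
    rw [← e2, ← e3, e1]; ring
  rw [hsplit]
  have hab3 : ‖a - b‖ ≤ 4 * δ := by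
    have h1 : a - b = (a - ζ) - (b - ζ) := by ring
    have h2 := norm_sub_le (a - ζ) (b - ζ)
    rw [h1]; linarith
  have hm3 : ‖(a + b) / 2 - ζ'‖ ≤ 9 / 4 * δ := by
    have h1 : (a + b) / 2 - ζ' = ((a + b) / 2 - ζ) - (ζ' - ζ) := by ring
    have h2 := norm_sub_le ((a + b) / 2 - ζ) (ζ' - ζ)
    rw [h1]; linarith
  have hwx : x / 2 ≤ ‖w‖ := by linarith
  have hbx : x / 2 ≤ ‖z - b‖ := by linarith
  refine (norm_add_le _ _).trans ?_
  have b1 : ‖(a - b) ^ 2 / (w * ((z - b) * (s + 1) ^ 2) ^ 2) * 1‖ ≤ (4 * δ) ^ 2 / (x / 2 * (x / 2 * 1 ^ 2) ^ 2) := by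
    simp only [mul_one, norm_div, norm_pow, norm_mul]
    gcongr
  have b2 : ‖((a + b) / 2 - ζ') / (w * (z - ζ'))‖ ≤ (9 / 4 * δ) / (x / 2 * x) := by
    rw [norm_div, norm_mul]
    gcongr
  have b3 : (4 * δ) ^ 2 / (x / 2 * (x / 2 * 1 ^ 2) ^ 2) + (9 / 4 * δ) / (x / 2 * x) = (128 * (δ / x) + 9 / 2) * (δ / x ^ 2) := by
    field_simp; ring
  have b4 : δ / x ≤ 1 / 7 := by rw [div_le_div_iff₀ hx0 (by norm_num)]; linarith
  have b5 : 24 * δ / x ^ 2 = 24 * (δ / x ^ 2) := by ring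
  rw [b5]
  refine (add_le_add b1 b2).trans ?_
  rw [b3]
  have : 0 ≤ δ / x ^ 2 := by positivity
  refine mul_le_mul_of_nonneg_right ?_ this
  linarith

lemma Q_est_near {z a b ζ ζ' s : ℂ} {δ : ℝ} (hδ : 0 < δ) (ha : ‖a - ζ‖ < δ / 4) (hb : ‖b - ζ‖ < 2 * δ)
    (hb' : δ ≤ ‖b - ζ‖) (hz : ‖z - ζ‖ < 8 * δ) (hs : s ^ 2 * (z - b) = z - a) :
    ‖(8 / (a - b) ^ 2) * (z - (a + b) / 2 - (z - b) * s) - (z - ζ')⁻¹‖ ≤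
      300 / δ + ‖z - ζ'‖⁻¹ := by
  refine (norm_sub_le _ _).trans ?_
  rw [norm_inv]
  gcongr
  have hab : 3 / 4 * δ ≤ ‖a - b‖ := by
    have h1 : b - ζ = (a - ζ) - (a - b) := by ring
    have h2 := norm_sub_le (a - ζ) (a - b)
    rw [← h1] at h2; linarith
  have hza : ‖z - a‖ ≤ 10 * δ := by
    have h1 : z - a = (z - ζ) - (a - ζ) := by ring
    have h2 := norm_sub_le (z - ζ) (a - ζ)
    rw [h1]; linarith
  have hzb : ‖z - b‖ ≤ 10 * δ := by
    have h1 : z - b = (z - ζ) - (b - ζ) := by ring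
    have h2 := norm_sub_le (z - ζ) (b - ζ)
    rw [h1]; linarith
  have hw : ‖z - (a + b) / 2‖ ≤ 10 * δ := by
    have h1 : z - (a + b) / 2 = (1 / 2 : ℂ) * ((z - a) + (z - b)) := by ring
    have h2 := norm_add_le (z - a) (z - b)
    rw [h1, norm_mul]; norm_num; linarith
  have hT : ‖(z - b) * s‖ ≤ 10 * δ := by
    have h1 : ((z - b) * s) ^ 2 = (z - a) * (z - b) := by linear_combination (z - b) * hs
    have h2 : ‖(z - b) * s‖ ^ 2 ≤ (10 * δ) ^ 2 := by
      rw [← norm_pow, h1, norm_mul, sq]; gcongr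
    exact le_of_sq_le_sq h2 (by positivity)
  rw [norm_mul, norm_div, norm_pow]
  have h1 : ‖z - (a + b) / 2 - (z - b) * s‖ ≤ 20 * δ := (norm_sub_le _ _).trans (by linarith)
  calc _ ≤ (8 / (3 / 4 * δ) ^ 2) * (20 * δ) := by
        rw [show ‖(8 : ℂ)‖ = 8 by norm_num]
        gcongr
    _ ≤ 300 / δ := by
        rw [show (8 / (3 / 4 * δ) ^ 2) * (20 * δ) = (2560 / 9) / δ by field_simp; norm_num]
        gcongr; norm_num

lemma kernel_arith {δ x : ℝ} (hδ : 0 < δ) (hx : 0 < x) :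
    (x ≤ 9 * δ → 300 / δ + x⁻¹ ≤ 10000 * √δ * x ^ (-(3/2) : ℝ)) ∧
    (δ ≤ x → 24 * δ / x ^ 2 ≤ 10000 * √δ * x ^ (-(3/2) : ℝ)) := by
  obtain ⟨y, hy, rfl⟩ : ∃ y, 0 < y ∧ y ^ 2 = x := ⟨√x, Real.sqrt_pos.2 hx, Real.sq_sqrt hx.le⟩
  obtain ⟨e, he, rfl⟩ : ∃ e, 0 < e ∧ e ^ 2 = δ := ⟨√δ, Real.sqrt_pos.2 hδ, Real.sq_sqrt hδ.le⟩
  have h1 : (y ^ 2) ^ (-(3/2) : ℝ) = (y ^ 3)⁻¹ := by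
    rw [← Real.rpow_natCast y 2, ← Real.rpow_mul hy.le, ← Real.rpow_natCast y 3, ← Real.rpow_neg hy.le]
    norm_num
  rw [h1, Real.sqrt_sq he.le]
  constructor
  · intro h
    have h2 : y ≤ 3 * e := le_of_sq_le_sq (by linarith [mul_pow 3 e 2]) (by positivity)
    have h3 : y ^ 3 ≤ 27 * e ^ 3 := by
      calc y ^ 3 ≤ (3 * e) ^ 3 := by gcongr
        _ = _ := by ring
    rw [← div_eq_mul_inv, le_div_iff₀ (by positivity)]
    have : (300 / e ^ 2 + (y ^ 2)⁻¹) * y ^ 3 = 300 * y ^ 3 / e ^ 2 + y := by field_simp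
    rw [this]
    have h4 : 300 * y ^ 3 / e ^ 2 ≤ 8100 * e := by
      rw [div_le_iff₀ (by positivity)]; nlinarith
    linarith
  · intro h
    have h2 : e ≤ y := le_of_sq_le_sq h hy.le
    rw [← div_eq_mul_inv, div_le_div_iff₀ (by positivity) (by positivity)]
    have h3 : e ^ 2 * y ^ 3 ≤ e * y ^ 4 := by
      have : e * (e * y ^ 3) ≤ e * (y * y ^ 3) := by gcongr
      nlinarith
    nlinarith [show 0 ≤ e * y ^ 4 by positivity, h3]

lemma exists_Q {Y : Set ℂ} (hY : IsCompact Y) [CompactSpace Y] {A : Subalgebra ℂ C(Y, ℂ)}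
    (hA : IsClosed (A : Set C(Y, ℂ))) (hid : idY Y ∈ A) (hinv : ∀ q ∈ Yᶜ, InvAt A q)
    {ζ : ℂ} {δ : ℝ} (hδ : 0 < δ) {U : Set ℂ} (hU : IsPreconnected U)
    (hUY : U ⊆ Yᶜ) (hUb : U ⊆ ball ζ (2 * δ)) {a b : ℂ} (ha : a ∈ U) (hb : b ∈ U)
    (ha' : ‖a - ζ‖ < δ / 4) (hb' : δ ≤ ‖b - ζ‖) :
    ∃ Q ∈ A, ∀ z : Y, ∀ ζ' ∈ ball ζ (δ / 4), (z : ℂ) ≠ ζ' →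
      ‖Q z - ((z : ℂ) - ζ')⁻¹‖ ≤ 10000 * √δ * ‖(z : ℂ) - ζ'‖ ^ (-(3/2) : ℝ) := by
  obtain ⟨α, hα, hα1⟩ := exists_log hY hA hinv hδ hU hUY hUb ha hb
  obtain ⟨s, hs, hs1⟩ := exp_mem' hA (A.smul_mem hα (1 / 2 : ℂ))
  have h1 : (algebraMap ℂ C(Y, ℂ)) ((a + b) / 2) ∈ A := A.algebraMap_mem _
  have h2 : (algebraMap ℂ C(Y, ℂ)) b ∈ A := A.algebraMap_mem _
  refine ⟨(8 / (a - b) ^ 2 : ℂ) • (idY Y - algebraMap ℂ C(Y, ℂ) ((a + b) / 2) - (idY Y - algebraMap ℂ C(Y, ℂ) b) * s),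
    A.smul_mem (A.sub_mem (A.sub_mem hid h1) (A.mul_mem (A.sub_mem hid h2) hs)) _, ?_⟩
  intro z ζ' hζ' hne
  have hbn : ‖b - ζ‖ < 2 * δ := by simpa [dist_eq_norm] using hUb hb
  have hζn : ‖ζ' - ζ‖ < δ / 4 := by simpa [dist_eq_norm] using hζ'
  have hQ : ((8 / (a - b) ^ 2 : ℂ) • (idY Y - algebraMap ℂ C(Y, ℂ) ((a + b) / 2) - (idY Y - algebraMap ℂ C(Y, ℂ) b) * s)) z
      = (8 / (a - b) ^ 2) * ((z : ℂ) - (a + b) / 2 - (z - b) * s z) := by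
    simp [idY]
  rw [hQ]
  have hsq : s z ^ 2 * ((z : ℂ) - b) = z - a := by
    rw [← (hα1 z).1, hs1, ← Complex.exp_nat_mul]
    congr 2
    simp
  have hx0 : 0 < ‖(z : ℂ) - ζ'‖ := norm_pos_iff.2 (sub_ne_zero.2 hne)
  have hk := kernel_arith hδ hx0
  by_cases hz : 8 * δ ≤ ‖(z : ℂ) - ζ‖
  · refine (Q_est_far hδ (by linarith) hbn ?_ hζn hz hsq ?_).trans (hk.2 ?_)
    · rintro rfl; linarith
    · have hr := far_re hδ (hUb ha) (hUb hb) hz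
      have h3 := abs_lt.1 (Complex.abs_arg_lt_pi_div_two_iff.2 (Or.inl hr))
      rw [hs1, ContinuousMap.smul_apply, (hα1 z).2 hz, Complex.exp_re]
      refine mul_pos (Real.exp_pos _) (Real.cos_pos_of_mem_Ioo ?_)
      have h4 : ((1 / 2 : ℂ) • Complex.log (((z : ℂ) - a) / (z - b))).im = (1 / 2) * (((z : ℂ) - a) / (z - b)).arg := by
        rw [smul_eq_mul, show (1 / 2 : ℂ) = ((1 / 2 : ℝ) : ℂ) by norm_num, Complex.im_ofReal_mul, Complex.log_im]
      rw [h4]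
      constructor <;> linarith [Real.pi_pos]
    · have h3 := norm_add_le ((z : ℂ) - ζ') (ζ' - ζ)
      simp at h3; linarith
  · refine (Q_est_near hδ ha' hbn hb' (by linarith) hsq).trans (hk.1 ?_)
    have h3 := norm_sub_le ((z : ℂ) - ζ) (ζ' - ζ)
    simp at h3; linarith

end Part2

section Part3
open Set Metric Bornology Filter
open scoped Topology

lemma exists_U {Y : Set ℂ} (hY : IsClosed Y) {ζ : ℂ} {δ : ℝ} (hδ : 0 < δ)
    (hdense : (ball ζ (δ / 4) ∩ Yᶜ).Nonempty)
    (hcomp : ∀ q ∈ Yᶜ, ¬ connectedComponentIn Yᶜ q ⊆ ball ζ (2 * δ)) :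
    ∃ U : Set ℂ, ∃ a b : ℂ, IsPreconnected U ∧ U ⊆ Yᶜ ∧ U ⊆ ball ζ (2 * δ) ∧ a ∈ U ∧ b ∈ U ∧
      ‖a - ζ‖ < δ / 4 ∧ δ ≤ ‖b - ζ‖ := by
  obtain ⟨a, haζ, haY⟩ := hdense
  set V := Yᶜ ∩ ball ζ (2 * δ) with hV
  have hVo : IsOpen V := hY.isOpen_compl.inter isOpen_ball
  have haV : a ∈ V := ⟨haY, ball_subset_ball (by linarith) haζ⟩
  set U := connectedComponentIn V a with hU
  have hUV : U ⊆ V := connectedComponentIn_subset _ _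
  have haU : a ∈ U := mem_connectedComponentIn haV
  by_cases h : ∃ b ∈ U, δ ≤ ‖b - ζ‖
  · obtain ⟨b, hb, hb'⟩ := h
    exact ⟨U, a, b, isPreconnected_connectedComponentIn, hUV.trans inter_subset_left,
      hUV.trans inter_subset_right, haU, hb, by simpa [dist_eq_norm] using haζ, hb'⟩
  · exfalso
    push Not at h
    refine hcomp a haY (subset_trans ?_ (hUV.trans inter_subset_right))
    refine isPreconnected_connectedComponentIn.subset_of_closure_inter_subset
      hVo.connectedComponentIn ⟨a, mem_connectedComponentIn haY, haU⟩ ?_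
    rintro x ⟨hx1, hx2⟩
    have hx3 : x ∈ closedBall ζ δ := by
      refine closure_minimal (fun y hy => ?_) isClosed_closedBall hx1
      simpa [dist_eq_norm] using (h y hy).le
    have hxV : x ∈ V := ⟨connectedComponentIn_subset _ _ hx2,
      closedBall_subset_ball (by linarith) hx3⟩
    have hpre : IsPreconnected (insert x U) :=
      isPreconnected_connectedComponentIn.subset_closure (subset_insert _ _)
        (insert_subset hx1 subset_closure)
    exact hpre.subset_connectedComponentIn (mem_insert_of_mem _ haU) (insert_subset hxV hUV)
      (mem_insert _ _)

open MeasureTheory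

lemma locint (f : ℂ → ℂ) (C α : ℝ) (hα : α < 2) (h : ∀ x, ‖f x‖ ≤ C * ‖x‖ ^ (-α)) (hf : Measurable f)
    (z : ℂ) {D : Set ℂ} (hD : IsBounded D) : IntegrableOn (fun ζ => f (z - ζ)) D := by
  have h1 : ∀ r : ℝ, IntegrableOn f (ball 0 r) := fun r =>
    integrableOn_ball_of_norm_le_rpow (C := C) (α := α) (by simp) (by simpa using hα)
      (Eventually.of_forall h) hf.aestronglyMeasurable
  obtain ⟨r, hr⟩ := hD.subset_ball z
  have h2 := ((Measure.measurePreserving_sub_left volume z).integrableOn_comp_preimage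
    (Homeomorph.subLeft z).measurableEmbedding).2 (h1 r)
  refine h2.mono_set fun x hx => ?_
  have := hr hx
  simpa [dist_eq_norm, norm_sub_rev] using this

lemma int_inv (z : ℂ) {D : Set ℂ} (hD : IsBounded D) : IntegrableOn (fun ζ : ℂ => (z - ζ)⁻¹) D := by
  refine locint (fun w => w⁻¹) 1 1 (by norm_num) (fun x => ?_) measurable_inv z hD
  rw [norm_inv, Real.rpow_neg_one, one_mul]

lemma int_ker (z : ℂ) {D : Set ℂ} (hD : IsBounded D) :
    IntegrableOn (fun ζ : ℂ => ‖z - ζ‖ ^ (-(3/2) : ℝ)) D := by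
  have := locint (fun w => ((‖w‖ ^ (-(3/2) : ℝ) : ℝ) : ℂ)) 1 (3/2) (by norm_num) (fun x => ?_)
    (by fun_prop) z hD
  · have h2 := this.norm
    refine h2.congr (Eventually.of_forall fun x => ?_)
    simp [abs_of_nonneg (Real.rpow_nonneg (norm_nonneg (z - x)) _)]
  · simp [abs_of_nonneg (Real.rpow_nonneg (norm_nonneg x) _)]

lemma ker_bound {Y D : Set ℂ} (hY : IsBounded Y) (hD : IsBounded D) :
    ∃ M : ℝ, ∀ z ∈ Y, ∫ ζ in D, ‖z - ζ‖ ^ (-(3/2) : ℝ) ≤ M := by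
  obtain ⟨R1, h1⟩ := hY.exists_norm_le
  obtain ⟨R2, h2⟩ := hD.exists_norm_le
  refine ⟨∫ w in ball (0 : ℂ) (R1 + R2 + 1), ‖w‖ ^ (-(3/2) : ℝ), fun z hz => ?_⟩
  rw [← (Measure.measurePreserving_sub_left volume z).setIntegral_preimage_emb
    (Homeomorph.subLeft z).measurableEmbedding (fun w => ‖w‖ ^ (-(3/2) : ℝ))]
  refine setIntegral_mono_set (int_ker z ?_) (Eventually.of_forall fun x => Real.rpow_nonneg (norm_nonneg _) _)
    (Eventually.of_forall fun x hx => ?_)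
  · refine isBounded_ball (x := z) (r := R1 + R2 + 1) |>.subset fun x hx => ?_
    simpa [dist_eq_norm, norm_sub_rev] using hx
  · have hx' : x ∈ D := hx
    show (z - x) ∈ ball (0 : ℂ) _
    rw [mem_ball_zero_iff]
    linarith [norm_sub_le z x, h1 z hz, h2 x hx']

lemma cell_base {Y : Set ℂ} {A : Subalgebra ℂ C(Y, ℂ)} {C : ℝ} (hC : 0 ≤ C)
    {D : Set ℂ} (hD : MeasurableSet D) (hDb : IsBounded D)
    {Q : C(Y, ℂ)} (hQ : Q ∈ A)
    (h : ∀ z : Y, ∀ ζ' ∈ D, (z : ℂ) ≠ ζ' →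
      ‖Q z - ((z : ℂ) - ζ')⁻¹‖ ≤ C * ‖(z : ℂ) - ζ'‖ ^ (-(3/2) : ℝ)) :
    ∃ P ∈ A, ∀ z : Y, ‖P z - ∫ ζ in D, ((z : ℂ) - ζ)⁻¹‖ ≤ C * ∫ ζ in D, ‖(z : ℂ) - ζ‖ ^ (-(3/2) : ℝ) := by
  refine ⟨(((volume D).toReal : ℝ) : ℂ) • Q, A.smul_mem hQ _, fun z => ?_⟩
  have h1 : ((((volume D).toReal : ℝ) : ℂ) • Q) z = ∫ ζ in D, Q z := by
    simp [Measure.real]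
  have hfin : volume D < ⊤ := hDb.measure_lt_top
  have hi1 : Integrable (fun _ : ℂ => Q z) (volume.restrict D) := integrableOn_const hfin.ne (by simp)
  have hi2 : Integrable (fun ζ : ℂ => ((z : ℂ) - ζ)⁻¹) (volume.restrict D) := int_inv _ hDb
  rw [h1, ← integral_sub hi1 hi2, ← integral_const_mul]
  refine norm_integral_le_of_norm_le ((int_ker _ hDb).const_mul _) ?_
  have hne : ∀ᵐ ζ : ℂ, ζ ≠ z := by
    simp [ae_iff]
  filter_upwards [ae_restrict_mem hD, ae_restrict_of_ae hne] with ζ hζ hζz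
  exact h z ζ hζ (Ne.symm hζz)

lemma cells {Y : Set ℂ} {A : Subalgebra ℂ C(Y, ℂ)} {C : ℝ} (hC : 0 ≤ C) {ε : ℝ} (F : Finset ℂ)
    (hQ : ∀ ζ ∈ F, ∃ Q ∈ A, ∀ z : Y, ∀ ζ' ∈ ball ζ ε, (z : ℂ) ≠ ζ' →
      ‖Q z - ((z : ℂ) - ζ')⁻¹‖ ≤ C * ‖(z : ℂ) - ζ'‖ ^ (-(3/2) : ℝ)) :
    ∀ D : Set ℂ, MeasurableSet D → IsBounded D → D ⊆ ⋃ ζ ∈ F, ball ζ ε →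
    ∃ P ∈ A, ∀ z : Y, ‖P z - ∫ ζ in D, ((z : ℂ) - ζ)⁻¹‖ ≤ C * ∫ ζ in D, ‖(z : ℂ) - ζ‖ ^ (-(3/2) : ℝ) := by
  classical
  induction F using Finset.induction_on with
  | empty =>
    intro D _ _ h
    have : D = ∅ := by simpa using h
    subst this
    exact ⟨0, A.zero_mem, fun z => by simp⟩
  | insert ζ₀ F hnot ih =>
    intro D hD hDb hsub
    have hB : MeasurableSet (ball ζ₀ ε) := measurableSet_ball
    obtain ⟨Q, hQA, hQ1⟩ := hQ ζ₀ (Finset.mem_insert_self _ _)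
    obtain ⟨P1, hP1, hP1'⟩ := cell_base hC (hD.inter hB) (hDb.subset inter_subset_left) hQA
      (fun z ζ' hζ' => hQ1 z ζ' hζ'.2)
    obtain ⟨P2, hP2, hP2'⟩ := ih (fun ζ hζ => hQ ζ (Finset.mem_insert_of_mem hζ)) (D \ ball ζ₀ ε)
      (hD.diff hB) (hDb.subset sdiff_subset) (by
        rintro x ⟨hx, hx'⟩
        have := hsub hx
        simp only [Finset.mem_insert, iUnion_iUnion_eq_or_left, mem_union] at this
        exact this.resolve_left hx')
    refine ⟨P1 + P2, A.add_mem hP1 hP2, fun z => ?_⟩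
    rw [← integral_inter_add_sdiff hB (int_inv (z : ℂ) hDb),
      ← integral_inter_add_sdiff hB (int_ker (z : ℂ) hDb), mul_add]
    have := norm_add_le (P1 z - ∫ ζ in D ∩ ball ζ₀ ε, ((z : ℂ) - ζ)⁻¹)
      (P2 z - ∫ ζ in D \ ball ζ₀ ε, ((z : ℂ) - ζ)⁻¹)
    rw [ContinuousMap.add_apply, add_sub_add_comm]
    linarith [hP1' z, hP2' z]

/-- circle means -/
lemma circ_in {w : ℂ} {ρ : ℝ} (hρ : 0 ≤ ρ) (h : ρ < ‖w‖) :
    Real.circleAverage (fun ζ => w / (w - ζ)) 0 ρ = 1 := by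
  have hw : w ≠ 0 := norm_pos_iff.1 (by linarith)
  have : DiffContOnCl ℂ (fun ζ => w / (w - ζ)) (ball 0 |ρ|) := by
    refine DifferentiableOn.diffContOnCl fun ζ hζ => ?_
    have h1 : ‖ζ‖ ≤ ρ := by
      have := closure_ball_subset_closedBall hζ
      simpa [abs_of_nonneg hρ] using this
    have : w - ζ ≠ 0 := by
      rw [sub_ne_zero]; rintro rfl; linarith
    fun_prop (disch := assumption)
  rw [this.circleAverage]
  simp [hw]

lemma circ_out {w : ℂ} {ρ : ℝ} (h : ‖w‖ < ρ) :
    Real.circleAverage (fun ζ => w / (w - ζ)) 0 ρ = 0 := by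
  have hρ : 0 < ρ := (norm_nonneg w).trans_lt h
  have hc := (diffContOnCl_const (c := (1 : ℂ)) (s := ball (0 : ℂ) |ρ|)).circleAverage_smul_div (w := w)
    (by simpa [abs_of_pos hρ] using h)
  have hne : ∀ ζ ∈ sphere (0 : ℂ) |ρ|, w - ζ ≠ 0 := by
    intro ζ hζ
    rw [sub_ne_zero]; rintro rfl
    simp [abs_of_pos hρ] at hζ; linarith
  have h1 : Real.circleAverage (fun ζ => w / (w - ζ)) 0 ρ =
      Real.circleAverage ((fun _ => (1 : ℂ)) - (fun ζ => ((ζ - 0) / (ζ - w)) • (1 : ℂ))) 0 ρ := by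
    refine Real.circleAverage_congr_sphere fun ζ hζ => ?_
    have h2 := hne ζ hζ
    have h3 : ζ - w ≠ 0 := by rw [← neg_sub]; exact neg_ne_zero.2 h2
    simp only [Pi.sub_apply, sub_zero, smul_eq_mul, mul_one]
    field_simp
    ring
  rw [h1, Real.circleAverage_sub, hc]
  · simp [Real.circleAverage_const]
  · exact circleIntegrable_const _ _ _
  · refine ContinuousOn.circleIntegrable' fun ζ hζ => ?_
    have h2 := hne ζ hζ
    have h3 : ζ - w ≠ 0 := by rw [← neg_sub]; exact neg_ne_zero.2 h2
    exact ContinuousAt.continuousWithinAt (by fun_prop (disch := assumption))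

end Part3

section Part4
open Set Metric Bornology Filter
open scoped Topology
open MeasureTheory

lemma disc0 {w : ℂ} {r : ℝ} (hr : 0 < r) :
    ∫ ζ in ball (0:ℂ) r, w / (w - ζ) = ((Real.pi * (min r ‖w‖) ^ 2 : ℝ) : ℂ) := by
  set F : ℂ → ℂ := (ball (0:ℂ) r).indicator (fun ζ => w / (w - ζ)) with hF
  have hFm : Measurable F := Measurable.indicator (by fun_prop) measurableSet_ball
  have hFi : Integrable F := by
    rw [hF, integrable_indicator_iff measurableSet_ball]
    have := (int_inv w (isBounded_ball (x := (0:ℂ)) (r := r))).const_mul w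
    simpa [div_eq_mul_inv, IntegrableOn] using this
  rw [← integral_indicator measurableSet_ball, ← Complex.integral_comp_polarCoord_symm]
  have hcont : Continuous (fun p : ℝ × ℝ => Complex.polarCoord.symm p) := by
    simp only [Complex.polarCoord_symm_apply]
    fun_prop
  have hint : IntegrableOn (fun p : ℝ × ℝ => p.1 • F (Complex.polarCoord.symm p)) (Ioi (0:ℝ) ×ˢ Ioo (-Real.pi) Real.pi)
      (volume.prod volume) := by
    refine ⟨(Measurable.smul measurable_fst (hFm.comp hcont.measurable)).aestronglyMeasurable, ?_⟩
    have h1 := Complex.lintegral_comp_polarCoord_symm (fun z => ‖F z‖ₑ)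
    have h2 : ∫⁻ z, ‖F z‖ₑ < ⊤ := hFi.2
    rw [← h1] at h2
    refine lt_of_le_of_lt (le_of_eq ?_) h2
    rw [polarCoord_target]
    refine setLIntegral_congr_fun (measurableSet_Ioi.prod measurableSet_Ioo) fun p hp => ?_
    have : (0:ℝ) ≤ p.1 := le_of_lt hp.1
    simp only [enorm_smul, smul_eq_mul]
    rw [Real.enorm_of_nonneg this]
  rw [polarCoord_target]
  change ∫ p in Ioi (0:ℝ) ×ˢ Ioo (-Real.pi) Real.pi, p.1 • F (Complex.polarCoord.symm p) ∂(volume.prod volume) = _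
  rw [setIntegral_prod _ hint]
  have key : ∀ ρ ∈ Ioi (0:ℝ), ρ ≠ ‖w‖ → (∫ θ in Ioo (-Real.pi) Real.pi, ρ • F (Complex.polarCoord.symm (ρ, θ)))
      = (Ioo 0 (min r ‖w‖)).indicator (fun ρ : ℝ => ((2 * Real.pi * ρ : ℝ) : ℂ)) ρ := by
    intro ρ hρ hne
    have hρ : 0 < ρ := hρ
    have hc : ∀ θ, Complex.polarCoord.symm (ρ, θ) = circleMap 0 ρ θ := by
      intro θ
      simp [Complex.polarCoord_symm_apply, circleMap, Complex.exp_mul_I]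
    have hn : ∀ θ, circleMap 0 ρ θ ∈ ball (0:ℂ) r ↔ ρ < r := by
      intro θ; simp [circleMap, abs_of_pos hρ]
    simp only [hc]
    rw [integral_smul]
    by_cases hρr : ρ < r
    · have h3 : ∀ θ, F (circleMap 0 ρ θ) = w / (w - circleMap 0 ρ θ) := fun θ => by
        rw [hF, indicator_of_mem ((hn θ).2 hρr)]
      simp only [h3]
      have h4 : ∫ θ in Ioo (-Real.pi) Real.pi, w / (w - circleMap 0 ρ θ) =
          ((2 * Real.pi : ℝ) : ℂ) * Real.circleAverage (fun ζ => w / (w - ζ)) 0 ρ := by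
        rw [Real.circleAverage_eq_integral_add (-Real.pi), ← integral_Ioc_eq_integral_Ioo,
          ← intervalIntegral.integral_of_le (by linarith [Real.pi_pos]),
          intervalIntegral.integral_comp_add_right (fun θ => w / (w - circleMap 0 ρ θ))]
        have : (((2 * Real.pi : ℝ) : ℂ)) ≠ 0 := by
          exact_mod_cast Real.two_pi_pos.ne'
        rw [Complex.real_smul, ← mul_assoc, ← Complex.ofReal_mul, mul_inv_cancel₀ Real.two_pi_pos.ne']
        simp only [Complex.ofReal_one, one_mul]
        congr 1 <;> ring
      rw [h4]
      rcases lt_or_gt_of_ne hne with h | h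
      · rw [circ_in hρ.le h, indicator_of_mem (by exact ⟨hρ, lt_min hρr h⟩)]
        simp; ring
      · rw [circ_out h, indicator_of_notMem (by
          rintro ⟨_, h'⟩; exact absurd (h'.trans_le (min_le_right _ _)) (not_lt.2 h.le))]
        simp
    · have h3 : ∀ θ, F (circleMap 0 ρ θ) = 0 := fun θ => by
        rw [hF, indicator_of_notMem (fun h => hρr ((hn θ).1 h))]
      simp only [h3]
      rw [indicator_of_notMem (by
          rintro ⟨_, h'⟩; exact hρr (h'.trans_le (min_le_left _ _)))]
      simp
  have hae : ∀ᵐ ρ ∂(volume.restrict (Ioi (0:ℝ))), (∫ θ in Ioo (-Real.pi) Real.pi, ρ • F (Complex.polarCoord.symm (ρ, θ)))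
      = (Ioo 0 (min r ‖w‖)).indicator (fun ρ : ℝ => ((2 * Real.pi * ρ : ℝ) : ℂ)) ρ := by
    have hne : ∀ᵐ ρ : ℝ, ρ ≠ ‖w‖ := by simp [ae_iff]
    filter_upwards [ae_restrict_mem measurableSet_Ioi, ae_restrict_of_ae hne] with ρ h1 h2
    exact key ρ h1 h2
  rw [integral_congr_ae hae, setIntegral_indicator measurableSet_Ioo,
    inter_eq_self_of_subset_right Ioo_subset_Ioi_self, ← integral_Ioc_eq_integral_Ioo,
    ← intervalIntegral.integral_of_le (le_min hr.le (norm_nonneg _)), intervalIntegral.integral_ofReal,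
    intervalIntegral.integral_const_mul, integral_id]
  congr 1; ring

lemma disc_formula (z c : ℂ) {r : ℝ} (hr : 0 < r) :
    (z - c) * ∫ ζ in ball c r, (z - ζ)⁻¹ = ((Real.pi * (min r ‖z - c‖) ^ 2 : ℝ) : ℂ) := by
  rw [← disc0 hr, ← integral_const_mul]
  have h := (measurePreserving_sub_right (volume : Measure ℂ) c).setIntegral_preimage_emb
    (Homeomorph.subRight c).measurableEmbedding (fun ζ => (z - c) / (z - c - ζ)) (ball 0 r)
  rw [← h]
  have : (fun x : ℂ => x - c) ⁻¹' ball 0 r = ball c r := by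
    ext x; simp [dist_eq_norm]
  rw [this]
  refine integral_congr_ae (Eventually.of_forall fun x => ?_)
  simp [div_eq_mul_inv]

/-- local smooth-type function `min r |z-c|` squared lies in `A` -/
lemma m_mem {Y : Set ℂ} (hY : IsCompact Y) [CompactSpace Y] {A : Subalgebra ℂ C(Y, ℂ)}
    (hA : IsClosed (A : Set C(Y, ℂ))) (hid : idY Y ∈ A) (hinv : ∀ q ∈ Yᶜ, InvAt A q)
    {c : ℂ} {r : ℝ} (hr : 0 < r) (hdense : ∀ ζ ∈ closedBall c r, ∀ ε > 0, (ball ζ ε ∩ Yᶜ).Nonempty)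
    {δ₀ : ℝ} (hδ₀ : 0 < δ₀)
    (hcomp : ∀ ζ ∈ closedBall c r, ∀ q ∈ Yᶜ, ¬ connectedComponentIn Yᶜ q ⊆ ball ζ δ₀)
    (m : C(Y, ℂ)) (hm : ∀ z : Y, m z = (((min r ‖(z : ℂ) - c‖) ^ 2 : ℝ) : ℂ)) : m ∈ A := by
  obtain ⟨M, hM⟩ := ker_bound hY.isBounded (isBounded_ball (x := c) (r := r))
  obtain ⟨R, hR⟩ := (hY.isBounded.exists_norm_le)
  have happ : ∀ δ, 0 < δ → 2 * δ ≤ δ₀ → ∃ P ∈ A, ∀ z : Y, ‖P z - ∫ ζ in ball c r, ((z : ℂ) - ζ)⁻¹‖ ≤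
      10000 * √δ * M := by
    intro δ hδ hδ'
    obtain ⟨t, hts, htc⟩ := (isCompact_closedBall c r).elim_nhds_subcover (fun ζ => ball ζ (δ / 4))
      (fun ζ _ => ball_mem_nhds ζ (by positivity))
    obtain ⟨P, hP, hP'⟩ := cells (A := A) (C := 10000 * √δ) (ε := δ / 4) (by positivity) t (fun ζ hζ => by
      obtain ⟨U, a, b, h1, h2, h3, h4, h5, h6, h7⟩ := exists_U hY.isClosed (ζ := ζ) hδ
        (hdense ζ (hts ζ hζ) _ (by positivity)) (fun q hq hsub => hcomp ζ (hts ζ hζ) q hq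
          (hsub.trans (ball_subset_ball hδ')))
      exact exists_Q hY hA hid hinv hδ h1 h2 h3 h4 h5 h6 h7) (ball c r) measurableSet_ball isBounded_ball
      (ball_subset_closedBall.trans htc)
    exact ⟨P, hP, fun z => (hP' z).trans (mul_le_mul_of_nonneg_left (hM z z.2) (by positivity))⟩
  have hcl : m ∈ closure (A : Set C(Y, ℂ)) := by
    rw [Metric.mem_closure_iff]
    intro ε hε
    set B := Real.pi⁻¹ * (|R| + ‖c‖) * (10000 * |M|) with hB
    have hB0 : 0 ≤ B := by positivity
    set s := ε / (2 * (B + 1)) with hs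
    have hs0 : 0 < s := by positivity
    obtain ⟨P, hP, hP'⟩ := happ (min (δ₀ / 2) (s ^ 2)) (by positivity) (by
      linarith [min_le_left (δ₀ / 2) (s ^ 2)])
    refine ⟨((Real.pi⁻¹ : ℝ) : ℂ) • ((idY Y - algebraMap ℂ _ c) * P), A.smul_mem (A.mul_mem
      (A.sub_mem hid (A.algebraMap_mem c)) hP) _, ?_⟩
    rw [dist_eq_norm, ← norm_neg, neg_sub]
    have hsq : √(min (δ₀ / 2) (s ^ 2)) ≤ s := by
      rw [Real.sqrt_le_left hs0.le]; exact min_le_right _ _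
    have hle : B * s < ε := by
      have : s * (2 * (B + 1)) = ε := by rw [hs]; field_simp
      nlinarith
    refine lt_of_le_of_lt ((ContinuousMap.norm_le _ (by positivity)).2 fun z => ?_) hle
    have h1 : m z = ((Real.pi⁻¹ : ℝ) : ℂ) * (((z : ℂ) - c) * ∫ ζ in ball c r, ((z : ℂ) - ζ)⁻¹) := by
      rw [disc_formula _ _ hr, hm, ← Complex.ofReal_mul]
      congr 1
      field_simp
    have h2 : (((Real.pi⁻¹ : ℝ) : ℂ) • ((idY Y - algebraMap ℂ _ c) * P) - m) z =
        ((Real.pi⁻¹ : ℝ) : ℂ) * (((z : ℂ) - c) * (P z - ∫ ζ in ball c r, ((z : ℂ) - ζ)⁻¹)) := by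
      simp only [ContinuousMap.sub_apply, ContinuousMap.smul_apply, ContinuousMap.mul_apply, h1, idY,
        ContinuousMap.coe_mk, smul_eq_mul]
      have h5 : (algebraMap ℂ C(Y, ℂ) c) z = c := rfl
      rw [h5]
      ring
    rw [h2, norm_mul, norm_mul, Complex.norm_real, Real.norm_of_nonneg (by positivity)]
    have h3 : ‖(z : ℂ) - c‖ ≤ |R| + ‖c‖ := by
      linarith [norm_sub_le (z : ℂ) c, hR z z.2, le_abs_self R]
    have h4 : ‖P z - ∫ ζ in ball c r, ((z : ℂ) - ζ)⁻¹‖ ≤ 10000 * s * |M| := by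
      refine (hP' z).trans ?_
      have h6 := le_abs_self M
      calc 10000 * √(min (δ₀ / 2) (s ^ 2)) * M ≤ 10000 * √(min (δ₀ / 2) (s ^ 2)) * |M| := by gcongr
        _ ≤ _ := by gcongr
    calc Real.pi⁻¹ * (‖(z : ℂ) - c‖ * ‖P z - ∫ ζ in ball c r, ((z : ℂ) - ζ)⁻¹‖)
        ≤ Real.pi⁻¹ * ((|R| + ‖c‖) * (10000 * s * |M|)) := by gcongr
      _ = B * s := by rw [hB]; ring
  rwa [hA.closure_eq] at hcl

end Part4

section Part5
open Set Metric Bornology Filter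
open scoped Topology

/-- the truncated squared distance -/
noncomputable def mfun (Y : Set ℂ) (c : ℂ) (r : ℝ) : C(Y, ℂ) :=
  ⟨fun z => (((min r ‖(z : ℂ) - c‖) ^ 2 : ℝ) : ℂ), by fun_prop⟩

lemma mfun_mem {L X Ω : Set ℂ} (hL : IsCompact L) (hdis : Disjoint L X)
    (hΩ : IsOpen Ω) (hXΩ : X ⊆ Ω) (hXint : interior X = ∅) {Y : Set ℂ} (hYe : Y = L ∪ X) (hY : IsCompact Y)
    [CompactSpace Y] {A : Subalgebra ℂ C(Y, ℂ)}
    (hA : IsClosed (A : Set C(Y, ℂ))) (hid : idY Y ∈ A) (hinv : ∀ q ∈ Yᶜ, InvAt A q)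
    (hcomp : ∀ q ∈ Yᶜ, ¬IsBounded (connectedComponentIn Yᶜ q) ∨ (connectedComponentIn Yᶜ q ∩ Ωᶜ).Nonempty)
    {c : ℂ} (hc : c ∈ X) :
    ∃ r₀ > 0, (∀ z ∈ L, r₀ < ‖z - c‖) ∧ ∀ r, 0 < r → r ≤ r₀ → mfun Y c r ∈ A := by
  have hopen : IsOpen (Ω \ L) := hΩ.sdiff hL.isClosed
  obtain ⟨R, hR, hRs⟩ := Metric.isOpen_iff.1 hopen c ⟨hXΩ hc, fun h => disjoint_left.1 hdis h hc⟩
  refine ⟨R / 2, by positivity, fun z hz => ?_, fun r hr hr0 => ?_⟩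
  · by_contra h
    have : z ∈ ball c R := by rw [mem_ball, dist_eq_norm]; linarith
    exact (hRs this).2 hz
  · have hsub : ∀ ζ ∈ closedBall c r, ball ζ (R / 2) ⊆ Ω \ L := by
      intro ζ hζ x hx
      apply hRs
      rw [mem_closedBall] at hζ
      rw [mem_ball] at hx ⊢
      linarith [dist_triangle x ζ c]
    refine m_mem hY hA hid hinv hr (fun ζ hζ ε hε => ?_) (δ₀ := R / 2) (by positivity)
      (fun ζ hζ q hq hs => ?_) _ (fun z => rfl)
    · by_contra hne
      have h1 : ball ζ (min ε (R/2)) ⊆ X := by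
        intro x hx
        have hx1 := ball_subset_ball (min_le_left _ _) hx
        have hx2 := hsub ζ hζ (ball_subset_ball (min_le_right _ _) hx)
        by_contra hxX
        refine hne ⟨x, hx1, ?_⟩
        rw [hYe]
        rintro (h | h)
        · exact hx2.2 h
        · exact hxX h
      have h2 : ζ ∈ interior X := mem_interior.2 ⟨_, h1, isOpen_ball, mem_ball_self (by positivity)⟩
      rw [hXint] at h2; exact h2
    · rcases hcomp q hq with h | ⟨x, hx, hx'⟩
      · exact h (isBounded_ball.subset hs)
      · exact hx' (hsub ζ hζ (hs hx)).1

lemma ind_mem {L X : Set ℂ} (hX : IsCompact X)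
    {Y : Set ℂ} (hYe : Y = L ∪ X)
    [CompactSpace Y] {A : Subalgebra ℂ C(Y, ℂ)} (hA : IsClosed (A : Set C(Y, ℂ)))
    (hm : ∀ c ∈ X, ∃ r₀ > 0, (∀ z ∈ L, r₀ < ‖z - c‖) ∧ ∀ r, 0 < r → r ≤ r₀ → mfun Y c r ∈ A)
    (e : C(Y, ℂ)) (he1 : ∀ z : Y, (z : ℂ) ∈ L → e z = 1) (he0 : ∀ z : Y, (z : ℂ) ∈ X → e z = 0) : e ∈ A := by
  classical
  choose! r hr hrL hrA using hm
  obtain ⟨t, ht, htc⟩ := hX.elim_nhds_subcover (fun c => ball c (if c ∈ X then r c / 2 else 1))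
    (fun c hc => ball_mem_nhds c (by rw [if_pos hc]; linarith [hr c hc]))
  set P : C(Y, ℂ) := ∏ c ∈ t, (((r c)^2)⁻¹ : ℂ) • mfun Y c (r c) with hP
  have hPA : P ∈ A := Subalgebra.prod_mem _ fun c hc => A.smul_mem (hrA c (ht c hc) _ (hr c (ht c hc)) le_rfl) _
  have hPz : ∀ z : Y, P z = ∏ c ∈ t, (((r c)^2)⁻¹ : ℂ) * (((min (r c) ‖(z : ℂ) - c‖) ^ 2 : ℝ) : ℂ) := by
    intro z
    rw [hP, ContinuousMap.prod_apply]
    rfl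
  have hPL : ∀ z : Y, (z : ℂ) ∈ L → P z = 1 := by
    intro z hz
    rw [hPz]
    refine Finset.prod_eq_one fun c hc => ?_
    have h1 := hr c (ht c hc)
    rw [min_eq_left (hrL c (ht c hc) z hz).le, Complex.ofReal_pow]
    have : (r c : ℂ) ≠ 0 := by exact_mod_cast h1.ne'
    field_simp
  have hfac : ∀ z : Y, ∀ c ∈ t, ‖(((r c)^2)⁻¹ : ℂ) * (((min (r c) ‖(z : ℂ) - c‖) ^ 2 : ℝ) : ℂ)‖ =
      (min (r c) ‖(z : ℂ) - c‖ / r c) ^ 2 := by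
    intro z c hc
    have h1 := hr c (ht c hc)
    rw [norm_mul, norm_inv, norm_pow, Complex.norm_real, Complex.norm_real, Real.norm_of_nonneg h1.le,
      Real.norm_of_nonneg (by positivity)]
    field_simp
  have hPX : ∀ z : Y, (z : ℂ) ∈ X → ‖P z‖ ≤ 1 / 4 := by
    intro z hz
    rw [hPz, norm_prod, Finset.prod_congr rfl (hfac z)]
    obtain ⟨c, hc, hzc⟩ := mem_iUnion₂.1 (htc hz)
    have hcX := ht c hc
    have h1 := hr c hcX
    rw [if_pos hcX, mem_ball, dist_eq_norm] at hzc
    rw [← Finset.mul_prod_erase _ _ hc]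
    have h2 : (min (r c) ‖(z : ℂ) - c‖ / r c) ^ 2 ≤ 1 / 4 := by
      have : min (r c) ‖(z : ℂ) - c‖ / r c ≤ 1 / 2 := by
        rw [div_le_iff₀ h1]; linarith [min_le_right (r c) ‖(z : ℂ) - c‖]
      have h0 : 0 ≤ min (r c) ‖(z : ℂ) - c‖ / r c := by positivity
      nlinarith
    have h3 : ∏ c ∈ t.erase c, (min (r c) ‖(z : ℂ) - c‖ / r c) ^ 2 ≤ 1 := by
      refine Finset.prod_le_one (fun d _ => by positivity) fun d hd => ?_
      have h4 := hr d (ht d (Finset.mem_of_mem_erase hd))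
      refine pow_le_one₀ (by positivity) ?_
      rw [div_le_iff₀ h4, one_mul]; exact min_le_left _ _
    have h5 : 0 ≤ ∏ c ∈ t.erase c, (min (r c) ‖(z : ℂ) - c‖ / r c) ^ 2 :=
      Finset.prod_nonneg fun d _ => by positivity
    nlinarith
  have hcl : e ∈ closure (A : Set C(Y, ℂ)) := by
    rw [Metric.mem_closure_iff]
    intro ε hε
    obtain ⟨n, hn⟩ := exists_pow_lt_of_lt_one hε (by norm_num : (1/4 : ℝ) < 1)
    refine ⟨P ^ n, A.pow_mem hPA n, ?_⟩
    rw [dist_eq_norm]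
    refine lt_of_le_of_lt ((ContinuousMap.norm_le _ (by positivity)).2 fun z => ?_) hn
    have hz : (z : ℂ) ∈ L ∪ X := hYe ▸ z.2
    rcases hz with hz | hz
    · simp only [ContinuousMap.sub_apply, ContinuousMap.pow_apply, he1 z hz, hPL z hz]
      simp
    · simp only [ContinuousMap.sub_apply, ContinuousMap.pow_apply, he0 z hz]
      simp only [zero_sub, norm_neg, norm_pow]
      exact pow_le_pow_left₀ (norm_nonneg _) (hPX z hz) n
  rwa [hA.closure_eq] at hcl

/-- real functions on `X` that extend to elements of `A` -/
def extAlg {Y : Set ℂ} (X : Set ℂ) (A : Subalgebra ℂ C(Y, ℂ)) : Subalgebra ℝ C(X, ℝ) where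
  carrier := {g | ∃ F ∈ A, ∀ z : Y, ∀ hz : (z : ℂ) ∈ X, F z = ((g ⟨z, hz⟩ : ℝ) : ℂ)}
  mul_mem' := by
    rintro a b ⟨F, hF, h⟩ ⟨F', hF', h'⟩
    exact ⟨F * F', A.mul_mem hF hF', fun z hz => by simp [h z hz, h' z hz]⟩
  add_mem' := by
    rintro a b ⟨F, hF, h⟩ ⟨F', hF', h'⟩
    exact ⟨F + F', A.add_mem hF hF', fun z hz => by simp [h z hz, h' z hz]⟩
  algebraMap_mem' := by
    intro r
    exact ⟨algebraMap ℂ _ (r : ℂ), A.algebraMap_mem _, fun z hz => rfl⟩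

theorem ext_zero {L X Ω : Set ℂ} (hL : IsCompact L) (hX : IsCompact X) (hdis : Disjoint L X)
    (hΩ : IsOpen Ω) (hXΩ : X ⊆ Ω) (hXint : interior X = ∅) {Y : Set ℂ} (hYe : Y = L ∪ X) (hY : IsCompact Y)
    [CompactSpace Y] {A : Subalgebra ℂ C(Y, ℂ)}
    (hA : IsClosed (A : Set C(Y, ℂ))) (hid : idY Y ∈ A) (hinv : ∀ q ∈ Yᶜ, InvAt A q)
    (hcomp : ∀ q ∈ Yᶜ, ¬IsBounded (connectedComponentIn Yᶜ q) ∨ (connectedComponentIn Yᶜ q ∩ Ωᶜ).Nonempty)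
    (f : C(Y, ℂ)) (hf : ∀ z : Y, (z : ℂ) ∈ L → f z = 0) : f ∈ A := by
  have hm : ∀ c ∈ X, ∃ r₀ > 0, (∀ z ∈ L, r₀ < ‖z - c‖) ∧ ∀ r, 0 < r → r ≤ r₀ → mfun Y c r ∈ A := fun c hc =>
    mfun_mem hL hdis hΩ hXΩ hXint hYe hY hA hid hinv hcomp hc
  obtain ⟨u, hu0, hu1, -⟩ := exists_continuous_zero_one_of_isClosed hX.isClosed hL.isClosed hdis.symm
  set e : C(Y, ℂ) := ⟨fun z => (u z : ℂ), by fun_prop⟩ with he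
  have heA : e ∈ A := ind_mem hX hYe hA hm e (fun z hz => by simp [he, hu1 hz]) (fun z hz => by simp [he, hu0 hz])
  have : CompactSpace X := isCompact_iff_compactSpace.1 hX
  have hsep : (extAlg X A).SeparatesPoints := by
    intro x y hxy
    obtain ⟨r, hr, -, hrA⟩ := hm x x.2
    refine ⟨fun z => (min r ‖(z : ℂ) - x‖) ^ 2, ⟨⟨fun z => (min r ‖(z : ℂ) - x‖) ^ 2, by fun_prop⟩,
      ⟨_, hrA r hr le_rfl, fun z hz => rfl⟩, rfl⟩, ?_⟩
    have h1 : 0 < ‖(y : ℂ) - x‖ := norm_pos_iff.2 (sub_ne_zero.2 fun h => hxy (Subtype.ext h.symm))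
    have h2 : 0 < (min r ‖(y : ℂ) - x‖) ^ 2 := by positivity
    simp only [sub_self, norm_zero, min_eq_right hr.le]
    intro h; rw [← h] at h2; simp at h2
  have htop := ContinuousMap.subalgebra_topologicalClosure_eq_top_of_separatesPoints _ hsep
  have hreal : ∀ k : C(Y, ℝ), (∀ z : Y, (z : ℂ) ∈ L → k z = 0) →
      (⟨fun z => (k z : ℂ), by fun_prop⟩ : C(Y, ℂ)) ∈ A := by
    intro k hk
    have hXY : X ⊆ Y := hYe ▸ subset_union_right
    set k' : C(X, ℝ) := ⟨fun z => k ⟨z, hXY z.2⟩, by fun_prop⟩ with hk'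
    have hk1 : k' ∈ (extAlg X A).topologicalClosure := by rw [htop]; trivial
    have hk2 : k' ∈ closure (extAlg X A : Set C(X, ℝ)) := hk1
    rw [Metric.mem_closure_iff] at hk2
    rw [← SetLike.mem_coe, ← hA.closure_eq, Metric.mem_closure_iff]
    intro ε hε
    obtain ⟨g, ⟨F, hF, hFg⟩, hg⟩ := hk2 (ε / 2) (by positivity)
    refine ⟨F * (1 - e), A.mul_mem hF (A.sub_mem A.one_mem heA), ?_⟩
    rw [dist_eq_norm]
    refine lt_of_le_of_lt ((ContinuousMap.norm_le _ (by positivity)).2 fun z => ?_) (half_lt_self hε)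
    have hz : (z : ℂ) ∈ L ∪ X := hYe ▸ z.2
    rcases hz with hz | hz
    · have : e z = 1 := by simp [he, hu1 hz]
      simp [this, hk z hz]; positivity
    · have : e z = 0 := by simp [he, hu0 hz]
      have h3 := (ContinuousMap.dist_apply_le_dist (f := k') (g := g) ⟨z, hz⟩).trans hg.le
      rw [Real.dist_eq] at h3
      simp only [ContinuousMap.sub_apply, ContinuousMap.mul_apply, this, hFg z hz, ContinuousMap.one_apply,
        ContinuousMap.coe_mk, sub_zero, mul_one, ← Complex.ofReal_sub, Complex.norm_real]
      exact h3
  have h1 := hreal ⟨fun z => (f z).re, by fun_prop⟩ (fun z hz => by simp [hf z hz])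
  have h2 := hreal ⟨fun z => (f z).im, by fun_prop⟩ (fun z hz => by simp [hf z hz])
  have h3 := A.add_mem h1 (A.smul_mem h2 Complex.I)
  convert h3 using 1
  ext z
  simp only [ContinuousMap.add_apply, ContinuousMap.smul_apply, ContinuousMap.coe_mk, smul_eq_mul]
  rw [mul_comm, Complex.re_add_im]

end Part5

section Part6
open Set Metric Bornology Filter
open scoped Topology

/-- every nonvanishing continuous function on `S` has a continuous logarithm -/
def LP {T : Type*} [TopologicalSpace T] (S : Set T) : Prop :=
  ∀ f : T → ℂ, ContinuousOn f S → (∀ z ∈ S, f z ≠ 0) →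
    ∃ g : T → ℂ, ContinuousOn g S ∧ ∀ z ∈ S, Complex.exp (g z) = f z

lemma inv_cont {T T' : Type*} [TopologicalSpace T] [TopologicalSpace T'] [T2Space T'] [Nonempty T]
    {s : Set T} (hs : IsCompact s) {γ : T → T'} (hc : ContinuousOn γ s) (hi : InjOn γ s) :
    ContinuousOn (Function.invFunOn γ s) (γ '' s) := by
  rw [continuousOn_iff_isClosed]
  intro t ht
  refine ⟨γ '' (s ∩ t), ((hs.inter_right ht).image_of_continuousOn (hc.mono inter_subset_left)).isClosed, ?_⟩
  ext y
  constructor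
  · rintro ⟨h1, x, hx, rfl⟩
    rw [mem_preimage, hi.leftInvOn_invFunOn hx] at h1
    exact ⟨⟨x, ⟨hx, h1⟩, rfl⟩, x, hx, rfl⟩
  · rintro ⟨⟨x, ⟨hx, hxt⟩, rfl⟩, -⟩
    refine ⟨?_, x, hx, rfl⟩
    rw [mem_preimage, hi.leftInvOn_invFunOn hx]; exact hxt

lemma LP.image {T T' : Type*} [TopologicalSpace T] [TopologicalSpace T'] [T2Space T'] [Nonempty T]
    {s : Set T} (h : LP s) (hs : IsCompact s) {γ : T → T'} (hc : ContinuousOn γ s) (hi : InjOn γ s) :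
    LP (γ '' s) := by
  intro f hf hf0
  obtain ⟨g, hg, hg'⟩ := h (f ∘ γ) (hf.comp hc (mapsTo_image _ _)) (fun z hz => hf0 _ (mem_image_of_mem _ hz))
  refine ⟨g ∘ Function.invFunOn γ s, hg.comp (inv_cont hs hc hi) ?_, ?_⟩
  · rintro _ ⟨x, hx, rfl⟩
    rw [hi.leftInvOn_invFunOn hx]; exact hx
  · rintro _ ⟨x, hx, rfl⟩
    simp only [Function.comp, hi.leftInvOn_invFunOn hx]
    exact hg' x hx

lemma LP.of_image {T T' : Type*} [TopologicalSpace T] [TopologicalSpace T'] [T2Space T']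
    {s : Set T} {γ : T → T'} (h : LP (γ '' s)) (hs : IsCompact s) [Nonempty T] (hc : ContinuousOn γ s)
    (hi : InjOn γ s) : LP s := by
  intro f hf hf0
  obtain ⟨g, hg, hg'⟩ := h (f ∘ Function.invFunOn γ s) (hf.comp (inv_cont hs hc hi) (by
      rintro _ ⟨x, hx, rfl⟩
      rw [hi.leftInvOn_invFunOn hx]; exact hx)) (by
      rintro _ ⟨x, hx, rfl⟩
      simp only [Function.comp, hi.leftInvOn_invFunOn hx]
      exact hf0 x hx)
  refine ⟨g ∘ γ, hg.comp hc (mapsTo_image _ _), fun z hz => ?_⟩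
  have := hg' _ (mem_image_of_mem γ hz)
  simpa only [Function.comp, hi.leftInvOn_invFunOn hz] using this

lemma LP_empty {T : Type*} [TopologicalSpace T] : LP (∅ : Set T) :=
  fun f _ _ => ⟨f, continuousOn_empty _, fun z hz => hz.elim⟩

lemma LP.union {T : Type*} [TopologicalSpace T] {s t : Set T} (hs : LP s) (ht : LP t) (hsc : IsClosed s)
    (htc : IsClosed t) (hd : Disjoint s t) : LP (s ∪ t) := by
  classical
  intro f hf hf0
  obtain ⟨g, hg, hg'⟩ := hs f (hf.mono subset_union_left) (fun z hz => hf0 z (Or.inl hz))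
  obtain ⟨k, hk, hk'⟩ := ht f (hf.mono subset_union_right) (fun z hz => hf0 z (Or.inr hz))
  have h1 : ∀ z ∈ s, (if z ∈ s then g z else k z) = g z := fun z hz => if_pos hz
  have h2 : ∀ z ∈ t, (if z ∈ s then g z else k z) = k z := fun z hz => if_neg fun h => disjoint_left.1 hd h hz
  refine ⟨fun z => if z ∈ s then g z else k z, ContinuousOn.union_of_isClosed (hg.congr h1) (hk.congr h2) hsc htc, ?_⟩
  rintro z (hz | hz)
  · simp only [h1 z hz, hg' z hz]
  · simp only [h2 z hz, hk' z hz]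

lemma LP_convex {E : Type*} [NormedAddCommGroup E] [NormedSpace ℝ E] : LP (univ : Set E) := by
  intro f hf hf0
  have hsc : IsSimplyConnected (univ : Set E) := by
    have := (convex_univ (𝕜 := ℝ) (E := E)).contractibleSpace univ_nonempty
    unfold IsSimplyConnected
    infer_instance
  obtain ⟨g, hg, hg'⟩ := Complex.exists_continuousOn_eqOn_exp_comp hsc isOpen_univ hf (by
    rintro ⟨x, hx, h⟩; exact hf0 x hx h)
  exact ⟨g, hg, fun z hz => hg' hz⟩

lemma LP_Icc {a b : ℝ} (hab : a ≤ b) : LP (Icc a b) := by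
  intro f hf hf0
  obtain ⟨g, hg, hg'⟩ := LP_convex (E := ℝ) (fun x => f (projIcc a b hab x)) (by
    refine (hf.comp_continuous (continuous_subtype_val.comp continuous_projIcc) (fun x => ?_)).continuousOn
    exact (projIcc a b hab x).2) (fun x _ => hf0 _ (projIcc a b hab x).2)
  refine ⟨g, hg.mono (subset_univ _), fun z hz => ?_⟩
  rw [hg' z trivial, projIcc_of_mem hab hz]

lemma log_ratio {L U : Set ℂ} (hL : IsClosed L) (hU : IsPreconnected U) (hUL : U ⊆ Lᶜ) {p q : ℂ}
    (hp : p ∈ U) (hq : q ∈ U) :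
    ∃ g : ℂ → ℂ, ContinuousOn g L ∧ ∀ z ∈ L, Complex.exp (g z) * (z - q) = z - p := by
  have hne : ∀ a ∈ U, ∀ z ∈ L, z - a ≠ 0 := by
    intro a ha z hz h
    rw [sub_eq_zero] at h
    exact hUL ha (h ▸ hz)
  refine hU.induction₂ (fun p q => ∃ g : ℂ → ℂ, ContinuousOn g L ∧ ∀ z ∈ L, Complex.exp (g z) * (z - q) = z - p)
    ?_ ?_ ?_ hp hq
  · intro x hx
    obtain ⟨ε, hε, hbb⟩ := Metric.isOpen_iff.1 hL.isOpen_compl x (hUL hx)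
    rw [eventually_nhdsWithin_iff]
    filter_upwards [ball_mem_nhds x hε] with y hy hyU
    have key : ∀ z ∈ L, ((z - y) / (z - x)) ∈ Complex.slitPlane := by
      intro z hz
      have h1 : ε ≤ ‖z - x‖ := by
        by_contra h
        exact hbb (show z ∈ ball x ε by rw [mem_ball, dist_eq_norm]; linarith) hz
      have h2 : (z - y) / (z - x) = 1 + (x - y) / (z - x) := by
        have := hne x hx z hz
        field_simp; ring
      rw [h2]
      apply Complex.mem_slitPlane_of_norm_lt_one
      rw [norm_div, div_lt_one (by linarith)]
      rw [mem_ball, dist_eq_norm, norm_sub_rev] at hy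
      linarith
    refine ⟨fun z => -Complex.log ((z - y) / (z - x)), ?_, fun z hz => ?_⟩
    · refine (ContinuousOn.clog ?_ key).neg
      exact ContinuousOn.div (by fun_prop) (by fun_prop) (hne x hx)
    · rw [Complex.exp_neg, Complex.exp_log (Complex.slitPlane_ne_zero (key z hz))]
      have := hne x hx z hz
      have := hne y hyU z hz
      field_simp
  · rintro x y w hx hy hw ⟨g, hg, hg'⟩ ⟨k, hk, hk'⟩
    refine ⟨fun z => g z + k z, hg.add hk, fun z hz => ?_⟩
    rw [Complex.exp_add, mul_assoc, hk' z hz, hg' z hz]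
  · rintro x y hx hy ⟨g, hg, hg'⟩
    refine ⟨fun z => - g z, hg.neg, fun z hz => ?_⟩
    rw [← hg' z hz, ← mul_assoc, ← Complex.exp_add]; simp

lemma no_log_sphere {c : ℂ} {R : ℝ} (hR : 0 < R) (g : ℂ → ℂ) (hg : ContinuousOn g (sphere c R))
    (h : ∀ z ∈ sphere c R, Complex.exp (g z) = z - c) : False := by
  have hmem : ∀ s, circleMap c R s ∈ sphere c R := fun s => circleMap_mem_sphere c hR.le s
  set k : ℝ → ℂ := fun s => g (circleMap c R s) - s * Complex.I with hk
  have hkc : Continuous k := by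
    refine Continuous.sub (hg.comp_continuous (continuous_circleMap c R) hmem) (by fun_prop)
  have hke : ∀ s, Complex.exp (k s) = R := by
    intro s
    simp only [hk]
    rw [Complex.exp_sub, h _ (hmem s), circleMap]
    have := Complex.exp_ne_zero (s * Complex.I)
    field_simp
    ring
  have hconst : k 0 = k (2 * Real.pi) := by
    refine isPreconnected_univ.induction₂ (fun s t => k s = k t) ?_ (fun _ _ _ _ _ _ h1 h2 => h1.trans h2)
      (fun _ _ _ _ h => h.symm) (mem_univ _) (mem_univ _)
    intro x _
    rw [nhdsWithin_univ]
    filter_upwards [hkc.continuousAt.preimage_mem_nhds (ball_mem_nhds (k x) one_pos)] with y hy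
    have h1 : ‖k y - k x‖ < 1 := by simpa [dist_eq_norm] using hy
    have h2 : Complex.exp (k y - k x) = 1 := by
      rw [Complex.exp_sub, hke, hke, div_self]
      exact_mod_cast hR.ne'
    obtain ⟨n, hn⟩ := Complex.exp_eq_one_iff.1 h2
    have h3 : n = 0 := by
      by_contra hn0
      have h4 : (1:ℝ) ≤ |(n:ℝ)| := by exact_mod_cast Int.one_le_abs hn0
      rw [hn] at h1
      simp only [norm_mul, Complex.norm_intCast, Complex.norm_I, Complex.norm_real, mul_one,
        Complex.norm_ofNat, Real.norm_of_nonneg Real.pi_pos.le] at h1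
      nlinarith [Real.pi_gt_three]
    rw [h3] at hn
    simp only [Int.cast_zero, zero_mul, sub_eq_zero] at hn
    exact hn.symm
  simp only [hk] at hconst
  have h5 : circleMap c R (2 * Real.pi) = circleMap c R 0 := by
    simp [circleMap]
  rw [h5] at hconst
  have h6 : (((2 * Real.pi : ℝ)) : ℂ) * Complex.I = 0 := by
    have h7 : (((0:ℝ)) : ℂ) * Complex.I = 0 := by simp
    have := sub_right_inj.1 hconst
    rw [← this, h7]
  simp at h6

lemma not_LP_sphere {c : ℂ} {R : ℝ} (hR : 0 < R) : ¬ LP (sphere c R) := by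
  intro h
  obtain ⟨g, hg, hg'⟩ := h (fun z => z - c) (by fun_prop) (fun z hz h0 => by
    rw [sub_eq_zero] at h0
    rw [h0, mem_sphere, dist_self] at hz
    exact hR.ne hz)
  exact no_log_sphere hR g hg hg'

end Part6

section Part7
open Set Metric Bornology Filter
open scoped Topology

lemma tietze {Y : Set ℂ} (hY : IsClosed Y) {f : ℂ → ℂ} (hf : ContinuousOn f Y) :
    ∃ F : ℂ → ℂ, Continuous F ∧ ∀ z ∈ Y, F z = f z := by
  obtain ⟨F, hF⟩ := ContinuousMap.exists_restrict_eq hY (⟨Y.domRestrict f, hf.domRestrict⟩ : C(Y, ℂ))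
  exact ⟨F, F.continuous, fun z hz => congrArg (fun k : C(Y, ℂ) => k ⟨z, hz⟩) hF⟩

lemma unbdd_univ : ¬ IsBounded (univ : Set ℂ) := NormedSpace.unbounded_univ ℝ ℂ

lemma frontier_comp {Y : Set ℂ} (hY : IsClosed Y) (p : ℂ) :
    frontier (connectedComponentIn Yᶜ p) ⊆ Y := by
  intro x hx
  have ho : IsOpen (connectedComponentIn Yᶜ p) := hY.isOpen_compl.connectedComponentIn
  rw [ho.frontier_eq] at hx
  by_contra hxY
  apply hx.2
  have hpre : IsPreconnected (insert x (connectedComponentIn Yᶜ p)) :=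
      isPreconnected_connectedComponentIn.subset_closure (subset_insert _ _)
        (insert_subset hx.1 subset_closure)
  have hp : p ∈ Yᶜ := by
    by_contra hp
    rw [connectedComponentIn_eq_empty hp] at hx
    simp at hx
  exact hpre.subset_connectedComponentIn (mem_insert_of_mem _ (mem_connectedComponentIn hp))
    (insert_subset hxY (connectedComponentIn_subset _ _)) (mem_insert _ _)

theorem nonsep {L X Ω : Set ℂ} (hL : IsCompact L) (hX : IsCompact X) (hLP : LP X) (hd : Disjoint L X)
    (hLΩ : L ⊆ Ω) (hXΩ : X ⊆ Ω)
    (hcomp : ∀ q ∈ Lᶜ, ¬IsBounded (connectedComponentIn Lᶜ q) ∨ (connectedComponentIn Lᶜ q ∩ Ωᶜ).Nonempty) :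
    ∀ q ∈ (L ∪ X)ᶜ, ¬IsBounded (connectedComponentIn (L ∪ X)ᶜ q) ∨
      (connectedComponentIn (L ∪ X)ᶜ q ∩ Ωᶜ).Nonempty := by
  classical
  intro p hp
  by_contra! hcon
  obtain ⟨hVb, hVΩ⟩ := hcon
  have hY : IsCompact (L ∪ X) := hL.union hX
  set V := connectedComponentIn (L ∪ X)ᶜ p with hV
  have hpV : p ∈ V := mem_connectedComponentIn hp
  have hpL : p ∈ Lᶜ := fun h => hp (Or.inl h)
  have hVY : V ⊆ (L ∪ X)ᶜ := connectedComponentIn_subset _ _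
  obtain ⟨q, hqW, hqV, hqY⟩ : ∃ q ∈ connectedComponentIn Lᶜ p, q ∉ V ∧ q ∉ L ∪ X := by
    rcases hcomp p hpL with h | ⟨x, hx, hxΩ⟩
    · by_contra! hall
      apply h
      refine (hVb.union hY.isBounded).subset fun q hq => ?_
      by_cases hqV : q ∈ V
      · exact Or.inl hqV
      · exact Or.inr (hall q hq hqV)
    · refine ⟨x, hx, fun hxV => ?_, fun hxY => hxΩ (union_subset hLΩ hXΩ hxY)⟩
      have : x ∈ V ∩ Ωᶜ := ⟨hxV, hxΩ⟩
      rw [hVΩ] at this; exact this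
  have hneq : ∀ z ∈ L ∪ X, z - q ≠ 0 := fun z hz h => hqY (sub_eq_zero.1 h ▸ hz)
  have hnep : ∀ z ∈ L ∪ X, z - p ≠ 0 := fun z hz h => hp (sub_eq_zero.1 h ▸ hz)
  obtain ⟨g1, hg1, hg1'⟩ := log_ratio hL.isClosed isPreconnected_connectedComponentIn
    (connectedComponentIn_subset _ _) (mem_connectedComponentIn hpL) hqW
  obtain ⟨g2, hg2, hg2'⟩ := hLP (fun z => (z - p) / (z - q))
    (ContinuousOn.div (by fun_prop) (by fun_prop) fun z hz => hneq z (Or.inr hz))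
    (fun z hz => div_ne_zero (hnep z (Or.inr hz)) (hneq z (Or.inr hz)))
  have h1 : ∀ z ∈ L, (if z ∈ L then g1 z else g2 z) = g1 z := fun z hz => if_pos hz
  have h2 : ∀ z ∈ X, (if z ∈ L then g1 z else g2 z) = g2 z := fun z hz => if_neg fun h => disjoint_left.1 hd h hz
  obtain ⟨g, hg, hg'⟩ := tietze hY.isClosed
    (ContinuousOn.union_of_isClosed (hg1.congr h1) (hg2.congr h2) hL.isClosed hX.isClosed)
  have hexp : ∀ z ∈ L ∪ X, Complex.exp (g z) * (z - q) = z - p := by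
    intro z hz
    rw [hg' z hz]
    rcases hz with hz | hz
    · rw [h1 z hz, hg1' z hz]
    · rw [h2 z hz, hg2' z hz]
      have := hneq z (Or.inr hz)
      field_simp
  set F : ℂ → ℂ := V.piecewise (fun z => Complex.exp (g z) * (z - q)) (fun z => z - p) with hF
  have hFc : Continuous F := by
    refine Continuous.piecewise (fun z hz => hexp z (frontier_comp hY.isClosed p hz)) (by fun_prop) (by fun_prop)
  have hF0 : ∀ z, F z ≠ 0 := by
    intro z
    by_cases hz : z ∈ V
    · rw [hF, piecewise_eq_of_mem _ _ _ hz]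
      refine mul_ne_zero (Complex.exp_ne_zero _) fun h => hqV (sub_eq_zero.1 h ▸ hz)
    · rw [hF, piecewise_eq_of_notMem _ _ _ hz]
      exact fun h => hz (sub_eq_zero.1 h ▸ hpV)
  obtain ⟨k, hk, hk'⟩ := LP_convex F hFc.continuousOn (fun z _ => hF0 z)
  obtain ⟨R, hR⟩ := hVb.subset_ball p
  have hR0 : 0 < R := by
    have := hR hpV
    simpa using this
  refine no_log_sphere (c := p) hR0 k (hk.mono (subset_univ _)) fun z hz => ?_
  rw [hk' z trivial, hF, piecewise_eq_of_notMem]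
  intro hzV
  have := hR hzV
  rw [mem_ball] at this
  rw [mem_sphere] at hz
  linarith

lemma outside_conn (R : ℝ) (hR : 0 ≤ R) : IsConnected {z : ℂ | R < ‖z‖} := by
  have : {z : ℂ | R < ‖z‖} = (fun p : ℝ × ℝ => circleMap 0 p.1 p.2) '' (Ioi R ×ˢ univ) := by
    ext z
    constructor
    · intro hz
      refine ⟨(‖z‖, Complex.arg z), ⟨hz, trivial⟩, ?_⟩
      simp [circleMap]
    · rintro ⟨⟨ρ, θ⟩, ⟨h1, -⟩, rfl⟩
      have h1 : R < ρ := h1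
      simp [circleMap, abs_of_pos (hR.trans_lt h1), h1]
  rw [this]
  refine IsConnected.image ?_ _ (Continuous.continuousOn (by unfold circleMap; fun_prop))
  exact ⟨⟨(R + 1, 0), by simp⟩, isPreconnected_Ioi.prod isPreconnected_univ⟩

lemma compl_conn_of_unbdd {S : Set ℂ} (hS : IsCompact S)
    (h : ∀ q ∈ Sᶜ, ¬IsBounded (connectedComponentIn Sᶜ q)) : IsConnected Sᶜ := by
  obtain ⟨R, hR⟩ := hS.isBounded.exists_norm_le
  have hE := outside_conn |R| (abs_nonneg R)
  have hES : {z : ℂ | |R| < ‖z‖} ⊆ Sᶜ := fun z hz hzS => by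
    have := hR z hzS
    have h2 : |R| < ‖z‖ := hz
    linarith [le_abs_self R]
  obtain ⟨e, he⟩ := hE.nonempty
  refine ⟨⟨e, hES he⟩, isPreconnected_of_forall e fun y hy => ?_⟩
  obtain ⟨x, hx, hx'⟩ : ∃ x ∈ connectedComponentIn Sᶜ y, x ∈ {z : ℂ | |R| < ‖z‖} := by
    by_contra! hall
    apply h y hy
    refine isBounded_closedBall (x := (0:ℂ)) (r := |R|) |>.subset fun x hx => ?_
    have := hall x hx
    simpa using this
  exact ⟨_, union_subset (connectedComponentIn_subset Sᶜ y) hES, Or.inr he,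
    Or.inl (mem_connectedComponentIn hy), isPreconnected_connectedComponentIn.union x hx hx' hE.isPreconnected⟩

lemma unbdd_of_compl_conn {S : Set ℂ} (hS : IsCompact S) (h : IsConnected Sᶜ) :
    ∀ q ∈ Sᶜ, ¬IsBounded (connectedComponentIn Sᶜ q) := by
  intro q hq hb
  rw [h.isPreconnected.connectedComponentIn hq] at hb
  apply unbdd_univ
  rw [← union_compl_self S]
  exact hS.isBounded.union hb

lemma LP.compl_conn {S : Set ℂ} (hS : IsCompact S) (h : LP S) : IsConnected Sᶜ := by
  refine compl_conn_of_unbdd hS fun q hq => ?_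
  have := nonsep (L := ∅) (Ω := univ) isCompact_empty hS h (by simp) (by simp) (by simp) (fun q _ => by
    left
    rw [compl_empty, isPreconnected_univ.connectedComponentIn (mem_univ q)]
    exact unbdd_univ) q (by simpa using hq)
  simpa using this

end Part7

section Part8
open Set Metric Bornology Filter
open scoped Topology

lemma log_sub {S : Set ℂ} (hS : IsCompact S) (hc : IsConnected Sᶜ) {a : ℂ} (ha : a ∉ S) :
    ∃ g : ℂ → ℂ, ContinuousOn g S ∧ ∀ z ∈ S, Complex.exp (g z) = z - a := by
  obtain ⟨R, hR⟩ := hS.isBounded.exists_norm_le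
  set q : ℂ := ((|R| + 1 : ℝ) : ℂ) with hq
  have hqn : ‖q‖ = |R| + 1 := by
    rw [hq, Complex.norm_real, Real.norm_of_nonneg (by positivity)]
  have hq0 : q ≠ 0 := by
    rw [← norm_pos_iff, hqn]; positivity
  have hqS : q ∈ Sᶜ := fun h => by
    have := hR q h
    linarith [le_abs_self R]
  have key : ∀ z ∈ S, 1 + (-z / q) ∈ Complex.slitPlane := by
    intro z hz
    apply Complex.mem_slitPlane_of_norm_lt_one
    rw [norm_div, norm_neg, hqn, div_lt_one (by positivity)]
    linarith [hR z hz, le_abs_self R]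
  obtain ⟨g, hg, hg'⟩ := log_ratio hS.isClosed hc.isPreconnected subset_rfl (p := a) (q := q) ha hqS
  refine ⟨fun z => g z + (Complex.log (-q) + Complex.log (1 + (-z / q))),
    hg.add (continuousOn_const.add (ContinuousOn.clog (by fun_prop) key)), fun z hz => ?_⟩
  rw [Complex.exp_add, Complex.exp_add, Complex.exp_log (neg_ne_zero.2 hq0),
    Complex.exp_log (Complex.slitPlane_ne_zero (key z hz)), ← hg' z hz]
  congr 1
  field_simp
  ring

lemma log_poly {S : Set ℂ} (hS : IsCompact S) (hc : IsConnected Sᶜ) (P : Polynomial ℂ) (hP : P ≠ 0)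
    (h0 : ∀ z ∈ S, P.eval z ≠ 0) :
    ∃ g : ℂ → ℂ, ContinuousOn g S ∧ ∀ z ∈ S, Complex.exp (g z) = P.eval z := by
  have hsplit := (IsAlgClosed.splits P).eq_prod_roots
  have hroots : ∀ a ∈ P.roots, a ∉ S := fun a ha haS => h0 a haS (Polynomial.isRoot_of_mem_roots ha)
  have key : ∀ m : Multiset ℂ, (∀ a ∈ m, a ∉ S) → ∃ g : ℂ → ℂ, ContinuousOn g S ∧
      ∀ z ∈ S, Complex.exp (g z) = (m.map fun a => z - a).prod := by
    intro m
    induction m using Multiset.induction_on with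
    | empty => exact fun _ => ⟨fun _ => 0, continuousOn_const, fun z _ => by simp⟩
    | cons a m ih =>
      intro hm
      obtain ⟨g, hg, hg'⟩ := ih fun b hb => hm b (Multiset.mem_cons_of_mem hb)
      obtain ⟨k, hk, hk'⟩ := log_sub hS hc (hm a (Multiset.mem_cons_self a m))
      refine ⟨fun z => k z + g z, hk.add hg, fun z hz => ?_⟩
      rw [Complex.exp_add, hg' z hz, hk' z hz, Multiset.map_cons, Multiset.prod_cons]
  obtain ⟨g, hg, hg'⟩ := key P.roots hroots
  have hlc : P.leadingCoeff ≠ 0 := Polynomial.leadingCoeff_ne_zero.2 hP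
  refine ⟨fun z => Complex.log P.leadingCoeff + g z, continuousOn_const.add hg, fun z hz => ?_⟩
  rw [Complex.exp_add, Complex.exp_log hlc, hg' z hz]
  conv_rhs => rw [hsplit]
  rw [Polynomial.eval_mul, Polynomial.eval_C, Polynomial.eval_multiset_prod, Multiset.map_map]
  simp

theorem LP_of_conn {S : Set ℂ} (hS : IsCompact S) (hc : IsConnected Sᶜ) (hi : interior S = ∅) : LP S := by
  rcases S.eq_empty_or_nonempty with rfl | hne
  · exact LP_empty
  intro f hf hf0
  have : CompactSpace S := isCompact_iff_compactSpace.1 hS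
  set A : Subalgebra ℂ C(S, ℂ) := (Algebra.adjoin ℂ {idY S}).topologicalClosure with hA
  have hAc : IsClosed (A : Set C(S, ℂ)) := Subalgebra.isClosed_topologicalClosure _
  have hid : idY S ∈ A := Subalgebra.le_topologicalClosure _ (Algebra.subset_adjoin rfl)
  have hub := unbdd_of_compl_conn hS hc
  have hcomp : ∀ q ∈ Sᶜ, ¬IsBounded (connectedComponentIn Sᶜ q) ∨ (connectedComponentIn Sᶜ q ∩ univᶜ).Nonempty :=
    fun q hq => Or.inl (hub q hq)
  have hinv := invAt_of_comp hS hAc hid univ (fun q hq => (hq trivial).elim) hcomp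
  set f' : C(S, ℂ) := ⟨S.domRestrict f, hf.domRestrict⟩ with hf'
  have hmem : f' ∈ A := ext_zero (L := ∅) isCompact_empty hS (by simp) isOpen_univ (subset_univ _) hi
    (by simp) hS hAc hid hinv hcomp f' (fun z hz => hz.elim)
  obtain ⟨z₀, hz₀, hmin⟩ := hS.exists_isMinOn hne hf.norm
  have hμ : 0 < ‖f z₀‖ := norm_pos_iff.2 (hf0 z₀ hz₀)
  have hmem' : f' ∈ closure (Algebra.adjoin ℂ {idY S} : Set C(S, ℂ)) := hmem
  obtain ⟨p, hp, hpf⟩ := Metric.mem_closure_iff.1 hmem' _ hμ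
  have hp : p ∈ Algebra.adjoin ℂ {idY S} := hp
  rw [Algebra.adjoin_singleton_eq_range_aeval] at hp
  obtain ⟨P, rfl⟩ := hp
  have hPe : ∀ z : S, (Polynomial.aeval (idY S) P) z = P.eval (z : ℂ) := by
    intro z
    have := Polynomial.aeval_algHom_apply (ContinuousMap.evalAlgHom ℂ ℂ z) (idY S) P
    have h2 : ContinuousMap.evalAlgHom ℂ ℂ z (idY S) = (z : ℂ) := rfl
    rw [h2, Polynomial.coe_aeval_eq_eval] at this
    exact this.symm
  have hclose : ∀ z ∈ S, ‖P.eval z - f z‖ < ‖f z‖ := by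
    intro z hz
    have h1 := (ContinuousMap.dist_apply_le_dist (f := f') (g := Polynomial.aeval (idY S) P) ⟨z, hz⟩).trans_lt hpf
    rw [dist_comm, dist_eq_norm, hPe] at h1
    exact h1.trans_le (hmin hz)
  have key : ∀ z ∈ S, P.eval z / f z ∈ Complex.slitPlane := by
    intro z hz
    have h1 : P.eval z / f z = 1 + (P.eval z - f z) / f z := by
      have := hf0 z hz
      field_simp; ring
    rw [h1]
    apply Complex.mem_slitPlane_of_norm_lt_one
    rw [norm_div, div_lt_one (norm_pos_iff.2 (hf0 z hz))]
    exact hclose z hz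
  have hP0 : ∀ z ∈ S, P.eval z ≠ 0 := fun z hz h => by
    have := Complex.slitPlane_ne_zero (key z hz)
    rw [h, zero_div] at this; exact this rfl
  obtain ⟨g, hg, hg'⟩ := log_poly hS hc P (by rintro rfl; exact hP0 z₀ hz₀ (by simp)) hP0
  refine ⟨fun z => g z - Complex.log (P.eval z / f z), hg.sub (ContinuousOn.clog
    (ContinuousOn.div P.continuous.continuousOn hf hf0) key), fun z hz => ?_⟩
  rw [Complex.exp_sub, hg' z hz, Complex.exp_log (Complex.slitPlane_ne_zero (key z hz))]
  have := hP0 z hz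
  have := hf0 z hz
  field_simp

lemma LP_of_subset {K J : Set ℂ} (hc : IsConnected Kᶜ) (hi : interior K = ∅) (hJ : IsCompact J)
    (hJK : J ⊆ K) : LP J := by
  have hdense : closure Kᶜ = univ := by rw [closure_compl, hi, compl_empty]
  refine LP_of_conn hJ ⟨hc.nonempty.mono (compl_subset_compl.2 hJK), hc.isPreconnected.subset_closure
    (compl_subset_compl.2 hJK) (by rw [hdense]; exact subset_univ _)⟩ ?_
  exact subset_eq_empty (interior_mono hJK) hi

lemma exists_sphere {X : Set ℂ} (h : interior X ≠ ∅) : ∃ c R, 0 < R ∧ c ∈ X ∧ sphere c R ⊆ X := by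
  obtain ⟨c, hc⟩ := nonempty_iff_ne_empty.2 h
  obtain ⟨R, hR, hb⟩ := Metric.isOpen_iff.1 isOpen_interior c hc
  refine ⟨c, R / 2, by positivity, interior_subset hc, fun z hz => interior_subset (hb ?_)⟩
  rw [mem_sphere] at hz
  rw [mem_ball]; linarith

lemma interior_image {K : Set ℂ} (hK : IsCompact K) (hc : IsConnected Kᶜ) (hi : interior K = ∅) {φ : ℂ → ℂ}
    (hφ : ContinuousOn φ K) (hinj : InjOn φ K) : interior (φ '' K) = ∅ := by
  by_contra hne
  obtain ⟨c, R, hR, -, hs⟩ := exists_sphere hne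
  set J := Function.invFunOn φ K '' sphere c R with hJ
  have hJc : IsCompact J := (isCompact_sphere c R).image_of_continuousOn ((inv_cont hK hφ hinj).mono hs)
  have hJK : J ⊆ K := by
    rintro _ ⟨z, hz, rfl⟩
    obtain ⟨x, hx, rfl⟩ := hs hz
    rw [hinj.leftInvOn_invFunOn hx]; exact hx
  have hJi : φ '' J = sphere c R := by
    rw [hJ, image_image]
    ext y
    constructor
    · rintro ⟨z, hz, rfl⟩
      obtain ⟨x, hx, rfl⟩ := hs hz
      simpa only [hinj.leftInvOn_invFunOn hx] using hz
    · intro hy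
      refine ⟨y, hy, ?_⟩
      obtain ⟨x, hx, rfl⟩ := hs hy
      simp only [hinj.leftInvOn_invFunOn hx]
  apply not_LP_sphere (c := c) hR
  rw [← hJi]
  exact (LP_of_subset hc hi hJc hJK).image hJc (hφ.mono hJK) (hinj.mono hJK)

lemma no_inj_sphere {c : ℂ} {R : ℝ} (hR : 0 < R) (τ : ℂ → ℝ) (hτ : ContinuousOn τ (sphere c R))
    (hinj : InjOn τ (sphere c R)) : False := by
  have hmem : ∀ s, circleMap c R s ∈ sphere c R := fun s => circleMap_mem_sphere c hR.le s
  set d : ℝ → ℝ := fun s => τ (circleMap c R s) - τ (circleMap c R (s + Real.pi)) with hd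
  have hdc : Continuous d := by
    refine Continuous.sub (hτ.comp_continuous (continuous_circleMap c R) hmem)
      (hτ.comp_continuous ((continuous_circleMap c R).comp (by fun_prop)) fun s => hmem _)
  have h1 : d Real.pi = - d 0 := by
    have : circleMap c R (Real.pi + Real.pi) = circleMap c R 0 := by
      rw [← two_mul]; simp [circleMap]
    simp only [hd, this, zero_add]; ring
  obtain ⟨s, hs⟩ : ∃ s, d s = 0 := by
    rcases le_total (d 0) 0 with h | h
    · exact mem_range_of_exists_le_of_exists_ge hdc ⟨0, h⟩ ⟨Real.pi, by rw [h1]; linarith⟩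
    · exact mem_range_of_exists_le_of_exists_ge hdc ⟨Real.pi, by rw [h1]; linarith⟩ ⟨0, h⟩
  have h2 := hinj (hmem _) (hmem _) (sub_eq_zero.1 hs)
  simp only [circleMap, add_right_inj, mul_eq_mul_left_iff, Complex.ofReal_add, add_mul, Complex.exp_add,
    Complex.exp_pi_mul_I] at h2
  rcases h2 with h2 | h2
  · have := Complex.exp_ne_zero (s * Complex.I)
    have h3 : (2:ℂ) * Complex.exp (s * Complex.I) = 0 := by linear_combination h2
    rcases mul_eq_zero.1 h3 with h | h
    · norm_num at h
    · exact this h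
  · exact hR.ne' (by exact_mod_cast h2)

lemma arc_interior {γ : ℝ → ℂ} (hc : ContinuousOn γ (Icc 0 1)) (hi : InjOn γ (Icc 0 1)) :
    interior (γ '' Icc 0 1) = ∅ := by
  by_contra hne
  obtain ⟨c, R, hR, -, hs⟩ := exists_sphere hne
  refine no_inj_sphere hR _ ((inv_cont isCompact_Icc hc hi).mono hs) ?_
  exact (Function.invFunOn_injOn_image γ _).mono hs

lemma curve_interior {γ : ℂ → ℂ} (hc : ContinuousOn γ (sphere 0 1)) (hi : InjOn γ (sphere 0 1)) :
    interior (γ '' sphere 0 1) = ∅ := by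
  by_contra hne
  obtain ⟨c, R, hR, hcX, hs⟩ := exists_sphere hne
  obtain ⟨u, hu, huc⟩ := hcX
  set ι := Function.invFunOn γ (sphere 0 1) with hι
  have hu1 : ‖u‖ = 1 := by simpa using hu
  have hu0 : u ≠ 0 := by rw [← norm_pos_iff, hu1]; norm_num
  have hιm : ∀ z ∈ sphere c R, ‖ι z‖ = 1 ∧ γ (ι z) = z := by
    intro z hz
    obtain ⟨x, hx, rfl⟩ := hs hz
    rw [hι, hi.leftInvOn_invFunOn hx]
    exact ⟨by simpa using hx, rfl⟩
  have hn : ∀ z ∈ sphere c R, ‖-ι z / u‖ = 1 := fun z hz => by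
    rw [norm_div, norm_neg, (hιm z hz).1, hu1, div_one]
  refine no_inj_sphere (c := c) hR (fun z => Complex.arg (-ι z / u)) ?_ ?_
  · refine ContinuousOn.comp (t := Complex.slitPlane) (g := Complex.arg)
      (fun x hx => (Complex.continuousAt_arg hx).continuousWithinAt)
      (((inv_cont (isCompact_sphere 0 1) hc hi).mono hs).neg.div_const u) fun z hz => ?_
    rw [Complex.mem_slitPlane_iff_arg]
    refine ⟨fun harg => ?_, fun h => ?_⟩
    · have h1 := Complex.norm_mul_exp_arg_mul_I (-ι z / u)
      rw [hn z hz, harg, Complex.exp_pi_mul_I] at h1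
      have h2 : ι z = u := by
        field_simp at h1
        simp at h1
        exact h1.symm
      have h3 := (hιm z hz).2
      rw [h2, huc] at h3
      rw [← h3, mem_sphere, dist_self] at hz
      exact hR.ne hz
    · have := hn z hz
      rw [h, norm_zero] at this; norm_num at this
  · intro z hz w hw harg
    have h1 : -ι z / u = -ι w / u := Complex.ext_norm_arg (by rw [hn z hz, hn w hw]) harg
    have h2 : ι z = ι w := by
      field_simp at h1
      exact neg_inj.1 h1
    rw [← (hιm z hz).2, ← (hιm w hw).2, h2]

end Part8

section Part9
open Set Metric Bornology Filter
open scoped Topology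

lemma circ_inj {a b : ℝ} (h : b - a < 2 * Real.pi) : InjOn (circleMap 0 1) (Icc a b) := by
  intro x hx y hy hxy
  simp only [circleMap, zero_add, Complex.ofReal_one, one_mul] at hxy
  obtain ⟨n, hn⟩ := Complex.exp_eq_exp_iff_exists_int.1 hxy
  have h1 : x = y + n * (2 * Real.pi) := by
    have := congrArg Complex.im hn
    simpa using this
  have h2 : n = 0 := by
    by_contra hn0
    have h4 : (1:ℝ) ≤ |(n:ℝ)| := by exact_mod_cast Int.one_le_abs hn0
    have h5 : |x - y| = |(n:ℝ)| * (2 * Real.pi) := by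
      rw [h1, add_sub_cancel_left, abs_mul, abs_of_pos Real.two_pi_pos]
    have h6 : |x - y| ≤ b - a := by
      rw [abs_le]; constructor <;> linarith [hx.1, hx.2, hy.1, hy.2]
    nlinarith [Real.pi_pos]
  rw [h2] at h1; simpa using h1

lemma jordan_props {E : Set ℂ} (h : IsJordanArc E ∨ IsJordanCurve E) : IsCompact E ∧ interior E = ∅ := by
  rcases h with ⟨γ, hc, hi, rfl⟩ | ⟨γ, hc, hi, rfl⟩
  · exact ⟨isCompact_Icc.image_of_continuousOn hc, arc_interior hc hi⟩
  · exact ⟨(isCompact_sphere 0 1).image_of_continuousOn hc, curve_interior hc hi⟩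

lemma pieces {E : Set ℂ} (h : IsJordanArc E ∨ IsJordanCurve E) :
    ∃ 𝒬 : Set (Set ℂ), 𝒬.Countable ∧ (∀ P ∈ 𝒬, IsCompact P ∧ LP P ∧ P ⊆ E) ∧
      ∀ J ⊆ E, IsCompact J → LP J → ∃ P ∈ 𝒬, J ⊆ P := by
  rcases h with ⟨γ, hc, hi, rfl⟩ | ⟨γ, hc, hi, rfl⟩
  · refine ⟨{γ '' Icc 0 1}, countable_singleton _, ?_, fun J hJ _ _ => ⟨_, rfl, hJ⟩⟩
    rintro P rfl
    exact ⟨isCompact_Icc.image_of_continuousOn hc, (LP_Icc zero_le_one).image isCompact_Icc hc hi, subset_rfl⟩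
  · set P : ℚ × ℚ → Set ℂ := fun q => γ '' (circleMap 0 1 '' Icc (q.1 : ℝ) q.2) with hP
    have hsub : ∀ a b : ℝ, circleMap 0 1 '' Icc a b ⊆ sphere 0 1 := by
      rintro a b _ ⟨s, -, rfl⟩
      exact circleMap_mem_sphere 0 zero_le_one s
    refine ⟨P '' {q | (q.1 : ℝ) ≤ q.2 ∧ (q.2 : ℝ) - q.1 < 2 * Real.pi}, (to_countable _).image _, ?_, ?_⟩
    · rintro _ ⟨⟨a, b⟩, ⟨h1, h2⟩, rfl⟩
      have hcomp : IsCompact (circleMap 0 1 '' Icc (a : ℝ) b) := isCompact_Icc.image (continuous_circleMap 0 1)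
      refine ⟨hcomp.image_of_continuousOn (hc.mono (hsub _ _)), ?_, image_mono (hsub _ _)⟩
      exact ((LP_Icc h1).image isCompact_Icc (continuous_circleMap 0 1).continuousOn (circ_inj h2)).image hcomp
        (hc.mono (hsub _ _)) (hi.mono (hsub _ _))
    · intro J hJ hJc hJL
      have hne : ¬ γ '' sphere 0 1 ⊆ J := by
        intro hh
        have : J = γ '' sphere 0 1 := subset_antisymm hJ hh
        rw [this] at hJL
        exact not_LP_sphere (c := 0) one_pos (hJL.of_image (isCompact_sphere 0 1) hc hi)
      obtain ⟨_, ⟨u, hu, rfl⟩, huJ⟩ := not_subset.1 hne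
      have hγm : Continuous fun θ => γ (circleMap 0 1 θ) :=
        hc.comp_continuous (continuous_circleMap 0 1) fun s => circleMap_mem_sphere 0 zero_le_one s
      set θ₀ := Complex.arg u with hθ₀
      have hu' : ∀ x ∈ sphere (0:ℂ) 1, circleMap 0 1 (Complex.arg x) = x := by
        intro x hx
        have hx1 : ‖x‖ = 1 := by simpa using hx
        have := Complex.norm_mul_exp_arg_mul_I x
        rw [hx1] at this
        simpa [circleMap] using this
      have hopen : IsOpen {θ | γ (circleMap 0 1 θ) ∉ J} := hJc.isClosed.isOpen_compl.preimage hγm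
      obtain ⟨ε, hε, hεb⟩ := Metric.isOpen_iff.1 hopen θ₀ (by
        show γ (circleMap 0 1 θ₀) ∉ J
        rw [hθ₀, hu' u hu]; exact huJ)
      set ε' := min ε 1 with hε'
      have hε'0 : 0 < ε' := by positivity
      obtain ⟨a, ha1, ha2⟩ := exists_rat_btwn (show θ₀ < θ₀ + ε' by linarith)
      obtain ⟨b, hb1, hb2⟩ := exists_rat_btwn (show θ₀ + 2 * Real.pi - ε' < θ₀ + 2 * Real.pi by linarith)
      have hε'1 : ε' ≤ 1 := min_le_right _ _
      have hε'2 : ε' ≤ ε := min_le_left _ _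
      refine ⟨_, ⟨(a, b), ⟨?_, ?_⟩, rfl⟩, ?_⟩
      · show (a:ℝ) ≤ b
        linarith [Real.pi_gt_three]
      · show (b:ℝ) - a < _
        linarith
      · intro y hy
        obtain ⟨x, hx, rfl⟩ := hJ hy
        set θ := toIcoMod Real.two_pi_pos θ₀ (Complex.arg x) with hθ
        have hθm := toIcoMod_mem_Ico Real.two_pi_pos θ₀ (Complex.arg x)
        rw [← hθ] at hθm
        have hθx : circleMap 0 1 θ = x := by
          rw [hθ, toIcoMod, (periodic_circleMap 0 1).sub_zsmul_eq, hu' x hx]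
        refine ⟨x, ⟨θ, ⟨?_, ?_⟩, hθx⟩, rfl⟩
        · show (a:ℝ) ≤ θ
          by_contra hlt
          push Not at hlt
          have : θ ∈ ball θ₀ ε := by
            rw [mem_ball, Real.dist_eq, abs_lt]; constructor <;> linarith [hθm.1]
          exact hεb this (by rw [hθx]; exact hy)
        · show θ ≤ (b:ℝ)
          by_contra hlt
          push Not at hlt
          have : θ - 2 * Real.pi ∈ ball θ₀ ε := by
            rw [mem_ball, Real.dist_eq, abs_lt]; constructor <;> linarith [hθm.2]
          exact hεb this (by rw [(periodic_circleMap 0 1).sub_eq, hθx]; exact hy)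

lemma finite_cover {g : ℕ → Set ℂ} {δ : ℝ} (hδ : 0 < δ)
    (hsep : ∀ k k' : ℕ, k ≠ k' → ∀ x ∈ g k, ∀ y ∈ g k', δ ≤ dist x y) {K : Set ℂ} (hK : IsCompact K)
    (hKG : K ⊆ ⋃ k, g k) : ∃ N, K ⊆ ⋃ k < N, g k := by
  obtain ⟨t, ht⟩ := hK.elim_finite_subcover (fun k => thickening δ (g k)) (fun k => isOpen_thickening)
    (hKG.trans (iUnion_mono fun k => self_subset_thickening hδ _))
  refine ⟨t.sup id + 1, fun x hx => ?_⟩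
  obtain ⟨j, hj⟩ := mem_iUnion.1 (hKG hx)
  obtain ⟨k, hk, hxk⟩ := mem_iUnion₂.1 (ht hx)
  obtain ⟨y, hy, hxy⟩ := mem_thickening_iff.1 hxk
  have hjk : j = k := by
    by_contra hne
    exact absurd (hsep j k hne x hj y hy) (not_le.2 hxy)
  refine mem_iUnion₂.2 ⟨j, ?_, hj⟩
  rw [hjk]
  exact Nat.lt_succ_of_le (Finset.le_sup (f := id) hk)

lemma interior_fin {g : ℕ → Set ℂ} (hg : ∀ k, IsCompact (g k) ∧ interior (g k) = ∅) (N : ℕ) :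
    IsClosed (⋃ k < N, g k) ∧ interior (⋃ k < N, g k) = ∅ := by
  induction N with
  | zero => simp
  | succ N ih =>
    rw [biUnion_lt_succ]
    refine ⟨ih.1.union (hg N).1.isClosed, ?_⟩
    rw [interior_union_isClosed_of_interior_empty ih.1 (hg N).2, ih.2]

theorem cofinal (G : Set ℂ) (g : ℕ → Set ℂ) (hG : G = ⋃ k, g k)
    (harc : ∀ k, IsJordanArc (g k) ∨ IsJordanCurve (g k))
    (hsep : ∃ δ : ℝ, 0 < δ ∧ ∀ k k' : ℕ, k ≠ k' → ∀ x ∈ g k, ∀ y ∈ g k', δ ≤ dist x y) :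
    ∃ 𝓕 : Set (Set ℂ), 𝓕.Countable ∧ (∀ S ∈ 𝓕, IsCompact S ∧ LP S ∧ S ⊆ G ∧ interior S = ∅) ∧
      ∀ K ⊆ G, IsCompact K → IsConnected Kᶜ → ∃ S ∈ 𝓕, K ⊆ S := by
  obtain ⟨δ, hδ, hsep⟩ := hsep
  choose 𝒬 hPc hPp hPJ using fun k => pieces (harc k)
  have hg := fun k => jordan_props (harc k)
  have key : ∀ N, ∃ 𝓕 : Set (Set ℂ), 𝓕.Countable ∧ (∀ S ∈ 𝓕, IsCompact S ∧ LP S ∧ S ⊆ ⋃ k < N, g k) ∧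
      ∀ K, (∀ k, IsCompact (K ∩ g k) ∧ LP (K ∩ g k)) → ∃ S ∈ 𝓕, K ∩ ⋃ k < N, g k ⊆ S := by
    intro N
    induction N with
    | zero =>
      refine ⟨{∅}, countable_singleton _, ?_, fun K _ => ⟨∅, rfl, by simp⟩⟩
      rintro S rfl
      exact ⟨isCompact_empty, LP_empty, empty_subset _⟩
    | succ N ih =>
      obtain ⟨𝓕, h1, h2, h3⟩ := ih
      refine ⟨image2 (· ∪ ·) 𝓕 (𝒬 N), h1.image2 (hPc N) _, ?_, fun K hK => ?_⟩
      · rintro _ ⟨S, hS, P, hP, rfl⟩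
        obtain ⟨a1, a2, a3⟩ := h2 S hS
        obtain ⟨b1, b2, b3⟩ := hPp N P hP
        refine ⟨a1.union b1, a2.union b2 a1.isClosed b1.isClosed ?_, ?_⟩
        · rw [disjoint_left]
          intro x hx hxP
          obtain ⟨k, hk, hxk⟩ := mem_iUnion₂.1 (a3 hx)
          have := hsep k N hk.ne x hxk x (b3 hxP)
          rw [dist_self] at this; linarith
        · rw [biUnion_lt_succ]
          exact union_subset_union a3 b3
      · obtain ⟨S, hS, hKS⟩ := h3 K hK
        obtain ⟨P, hP, hKP⟩ := hPJ N (K ∩ g N) inter_subset_right (hK N).1 (hK N).2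
        refine ⟨S ∪ P, ⟨S, hS, P, hP, rfl⟩, ?_⟩
        rw [biUnion_lt_succ, inter_union_distrib_left]
        exact union_subset_union hKS hKP
  choose 𝓕 h1 h2 h3 using key
  have hlt : ∀ N, (⋃ k < N, g k) ⊆ G := fun N => by
    rw [hG]; exact iUnion₂_subset fun k _ => subset_iUnion g k
  refine ⟨⋃ N, 𝓕 N, countable_iUnion h1, ?_, ?_⟩
  · intro S hS
    obtain ⟨N, hN⟩ := mem_iUnion.1 hS
    obtain ⟨a1, a2, a3⟩ := h2 N S hN
    exact ⟨a1, a2, a3.trans (hlt N), subset_eq_empty (interior_mono a3) (interior_fin hg N).2⟩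
  · intro K hKG hK hKc
    obtain ⟨N, hN⟩ := finite_cover hδ hsep hK (hG ▸ hKG)
    have hKi : interior K = ∅ := subset_eq_empty (interior_mono hN) (interior_fin hg N).2
    obtain ⟨S, hS, hKS⟩ := h3 N K fun k => by
      have hc : IsCompact (K ∩ g k) := hK.inter (hg k).1
      exact ⟨hc, LP_of_subset hKc hKi hc inter_subset_left⟩
    refine ⟨S, mem_iUnion.2 ⟨N, hS⟩, ?_⟩
    rwa [inter_eq_left.2 hN] at hKS

end Part9

section Part10
open Set Metric Bornology Filter
open scoped Topology

def exL (Ω : Set ℂ) (n : ℕ) : Set ℂ := {z | ‖z‖ ≤ n ∧ ∀ w, w ∉ Ω → 1 / ((n : ℝ) + 1) ≤ dist z w}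

lemma exL_sub (Ω : Set ℂ) (n : ℕ) : exL Ω n ⊆ Ω := by
  intro z hz
  by_contra h
  have := hz.2 z h
  rw [dist_self] at this
  have h2 : 0 < 1 / ((n : ℝ) + 1) := by positivity
  linarith

lemma exL_compact (Ω : Set ℂ) (n : ℕ) : IsCompact (exL Ω n) := by
  refine (isCompact_closedBall (0 : ℂ) (n : ℝ)).of_isClosed_subset ?_ ?_
  · have : exL Ω n = {z | ‖z‖ ≤ n} ∩ ⋂ w, ⋂ _ : w ∉ Ω, {z | 1 / ((n : ℝ) + 1) ≤ dist z w} := by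
      ext z; simp [exL]
    rw [this]
    refine (isClosed_le continuous_norm continuous_const).inter ?_
    exact isClosed_iInter fun w => isClosed_iInter fun _ =>
      isClosed_le continuous_const (continuous_id.dist continuous_const)
  · intro z hz
    simpa using hz.1

lemma exL_mono (Ω : Set ℂ) : Monotone (exL Ω) := by
  intro m n hmn z hz
  have h : (m : ℝ) ≤ n := by exact_mod_cast hmn
  refine ⟨hz.1.trans h, fun w hw => le_trans ?_ (hz.2 w hw)⟩
  gcongr

lemma exL_exhaust {Ω K : Set ℂ} (hΩ : IsOpen Ω) (hK : IsCompact K) (hKΩ : K ⊆ Ω) : ∃ N, K ⊆ exL Ω N := by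
  obtain ⟨R, hR⟩ := hK.isBounded.exists_norm_le
  obtain ⟨δ, hδ, hδK⟩ := hK.exists_thickening_subset_open hΩ hKΩ
  obtain ⟨n, hn⟩ := exists_nat_gt R
  obtain ⟨m, hm⟩ := exists_nat_one_div_lt hδ
  refine ⟨max n m, fun z hz => ⟨?_, fun w hw => ?_⟩⟩
  · have : (n : ℝ) ≤ (max n m : ℕ) := by exact_mod_cast le_max_left n m
    linarith [hR z hz]
  · by_contra hlt
    push Not at hlt
    apply hw
    apply hδK
    rw [mem_thickening_iff]
    refine ⟨z, hz, ?_⟩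
    rw [dist_comm]
    refine hlt.trans (lt_of_le_of_lt ?_ hm)
    have : (m : ℝ) ≤ (max n m : ℕ) := by exact_mod_cast le_max_right n m
    gcongr

lemma exL_comp (Ω : Set ℂ) (n : ℕ) : ∀ q ∈ (exL Ω n)ᶜ, ¬IsBounded (connectedComponentIn (exL Ω n)ᶜ q) ∨
    (connectedComponentIn (exL Ω n)ᶜ q ∩ Ωᶜ).Nonempty := by
  intro q hq
  have hq' : (n : ℝ) < ‖q‖ ∨ ∃ w, w ∉ Ω ∧ dist q w < 1 / ((n : ℝ) + 1) := by
    by_contra hcon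
    push Not at hcon
    exact hq ⟨hcon.1, hcon.2⟩
  rcases hq' with h | ⟨w, hw, hd⟩
  · left
    intro hb
    have hsub : {z : ℂ | (n : ℝ) < ‖z‖} ⊆ connectedComponentIn (exL Ω n)ᶜ q :=
      (outside_conn n (Nat.cast_nonneg n)).isPreconnected.subset_connectedComponentIn h
        fun z hz hz' => absurd hz'.1 (not_le.2 hz)
    have hb2 := (hb.subset hsub).union (isBounded_closedBall (x := (0 : ℂ)) (r := n))
    apply unbdd_univ
    refine hb2.subset fun z _ => ?_
    rcases lt_or_ge (n : ℝ) ‖z‖ with h1 | h1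
    · exact Or.inl h1
    · exact Or.inr (by simpa using h1)
  · right
    have hsub : ball w (1 / ((n : ℝ) + 1)) ⊆ connectedComponentIn (exL Ω n)ᶜ q :=
      (convex_ball w _).isPreconnected.subset_connectedComponentIn hd
        fun z hz hz' => absurd (hz'.2 w hw) (not_le.2 hz)
    exact ⟨w, hsub (mem_ball_self (by positivity)), hw⟩

def holAlg (Ω Y : Set ℂ) : Subalgebra ℂ C(Y, ℂ) where
  carrier := {u | ∃ F : ℂ → ℂ, DifferentiableOn ℂ F Ω ∧ ∀ z : Y, u z = F z}
  mul_mem' := by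
    rintro a b ⟨F, hF, hF'⟩ ⟨H, hH, hH'⟩
    exact ⟨fun z => F z * H z, hF.mul hH, fun z => by simp [hF', hH']⟩
  add_mem' := by
    rintro a b ⟨F, hF, hF'⟩ ⟨H, hH, hH'⟩
    exact ⟨fun z => F z + H z, hF.add hH, fun z => by simp [hF', hH']⟩
  algebraMap_mem' := fun c => ⟨fun _ => c, differentiableOn_const c, fun z => by simp⟩

lemma approx_zero {L X Ω : Set ℂ} (hL : IsCompact L) (hX : IsCompact X) (hd : Disjoint L X) (hΩ : IsOpen Ω)
    (hLΩ : L ⊆ Ω) (hXΩ : X ⊆ Ω) (hLP : LP X) (hXint : interior X = ∅)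
    (hcomp : ∀ q ∈ Lᶜ, ¬IsBounded (connectedComponentIn Lᶜ q) ∨ (connectedComponentIn Lᶜ q ∩ Ωᶜ).Nonempty)
    {h : ℂ → ℂ} (hh : ContinuousOn h X) {ε : ℝ} (hε : 0 < ε) :
    ∃ F : ℂ → ℂ, DifferentiableOn ℂ F Ω ∧ (∀ z ∈ L, ‖F z‖ < ε) ∧ ∀ z ∈ X, ‖F z - h z‖ < ε := by
  classical
  set Y := L ∪ X with hYe
  have hY : IsCompact Y := hL.union hX
  haveI : CompactSpace Y := isCompact_iff_compactSpace.1 hY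
  have hYΩ : Y ⊆ Ω := union_subset hLΩ hXΩ
  set A := (holAlg Ω Y).topologicalClosure with hAdef
  have hle : holAlg Ω Y ≤ A := Subalgebra.le_topologicalClosure _
  have hA : IsClosed (A : Set C(Y, ℂ)) := Subalgebra.isClosed_topologicalClosure _
  have hid : idY Y ∈ A := hle ⟨id, differentiableOn_id, fun z => rfl⟩
  have hcomp' := nonsep hL hX hLP hd hLΩ hXΩ hcomp
  have hinv : ∀ q ∈ Yᶜ, InvAt A q := by
    refine invAt_of_comp hY hA hid Ω (fun q hq hqY => ?_) hcomp'
    have hne : ∀ z ∈ Ω, z - q ≠ 0 := fun z hz h0 => hq (by rw [← sub_eq_zero.1 h0]; exact hz)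
    have hdiff : DifferentiableOn ℂ (fun z => (z - q)⁻¹) Ω :=
      (differentiableOn_id.sub (differentiableOn_const q)).inv hne
    refine ⟨⟨fun z : Y => ((z : ℂ) - q)⁻¹, ?_⟩, hle ⟨_, hdiff, fun z => rfl⟩, fun z => ?_⟩
    · exact continuousOn_iff_continuous_restrict.1 (hdiff.continuousOn.mono hYΩ)
    · exact inv_mul_cancel₀ (hne z (hYΩ z.2))
  set h' : ℂ → ℂ := X.piecewise h (fun _ => 0) with hh'
  have hX' : ∀ z ∈ X, h' z = h z := fun z hz => piecewise_eq_of_mem _ _ _ hz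
  have hL' : ∀ z ∈ L, h' z = 0 := fun z hz => piecewise_eq_of_notMem _ _ _ (disjoint_left.1 hd hz)
  have hc : ContinuousOn h' Y :=
    ContinuousOn.union_of_isClosed (continuousOn_const.congr hL') (hh.congr hX') hL.isClosed hX.isClosed
  set f : C(Y, ℂ) := ⟨Y.restrict h', continuousOn_iff_continuous_restrict.1 hc⟩ with hf
  have hfA : f ∈ A := ext_zero hL hX hd hΩ hXΩ hXint hYe hY hA hid hinv hcomp' f fun z hz => hL' z hz
  have hfc : f ∈ closure (holAlg Ω Y : Set C(Y, ℂ)) := hfA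
  obtain ⟨u, ⟨F, hF, hFu⟩, hu⟩ := Metric.mem_closure_iff.1 hfc ε hε
  have key : ∀ z (hz : z ∈ Y), ‖F z - h' z‖ < ε := by
    intro z hz
    have := (ContinuousMap.dist_apply_le_dist (f := f) (g := u) ⟨z, hz⟩).trans_lt hu
    rw [hFu, dist_comm, dist_eq_norm] at this
    exact this
  refine ⟨F, hF, fun z hz => ?_, fun z hz => ?_⟩
  · have := key z (Or.inl hz)
    rwa [hL' z hz, sub_zero] at this
  · have := key z (Or.inr hz)
    rwa [hX' z hz] at this

lemma key_approx {L K Ω : Set ℂ} (hL : IsCompact L) (hΩ : IsOpen Ω) (hLΩ : L ⊆ Ω)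
    (hcomp : ∀ q ∈ Lᶜ, ¬IsBounded (connectedComponentIn Lᶜ q) ∨ (connectedComponentIn Lᶜ q ∩ Ωᶜ).Nonempty)
    (hK : IsCompact K) (hKL : LP K) (hKi : interior K = ∅) {φ : ℂ → ℂ} (hφ : ContinuousOn φ K)
    (hm : MapsTo φ K Ω) (hi : InjOn φ K) (hd : φ '' K ∩ L = ∅) {h : ℂ → ℂ} (hh : ContinuousOn h K)
    {f : ℂ → ℂ} (hf : DifferentiableOn ℂ f Ω) {ε : ℝ} (hε : 0 < ε) :
    ∃ F : ℂ → ℂ, DifferentiableOn ℂ F Ω ∧ (∀ z ∈ L, ‖F z - f z‖ < ε) ∧ ∀ z ∈ K, ‖F (φ z) - h z‖ < ε := by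
  have hXΩ : φ '' K ⊆ Ω := hm.image_subset
  have hinv := inv_cont hK hφ hi
  have hmaps : MapsTo (Function.invFunOn φ K) (φ '' K) K := fun y hy => Function.invFunOn_mem hy
  obtain ⟨F, hF, h1, h2⟩ := approx_zero hL (hK.image_of_continuousOn hφ)
    (by rw [disjoint_iff_inter_eq_empty, inter_comm]; exact hd) hΩ hLΩ hXΩ (hKL.image hK hφ hi)
    (interior_image hK (LP.compl_conn hK hKL) hKi hφ hi) hcomp
    (h := fun y => h (Function.invFunOn φ K y) - f y)
    ((hh.comp hinv hmaps).sub (hf.continuousOn.mono hXΩ)) hε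
  refine ⟨fun z => F z + f z, hF.add hf, fun z hz => by simpa using h1 z hz, fun z hz => ?_⟩
  have h3 := h2 (φ z) (mem_image_of_mem φ hz)
  have h4 : Function.invFunOn φ K (φ z) = z := hi.leftInvOn_invFunOn hz
  simp only [h4] at h3
  convert h3 using 2
  ring

lemma dense_funs {K : Set ℂ} (hK : IsCompact K) : ∃ H : ℕ → ℂ → ℂ, (∀ k, ContinuousOn (H k) K) ∧
    ∀ h : ℂ → ℂ, ContinuousOn h K → ∀ ε > 0, ∃ k, ∀ z ∈ K, ‖H k z - h z‖ < ε := by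
  classical
  haveI : CompactSpace K := isCompact_iff_compactSpace.1 hK
  let d := TopologicalSpace.denseSeq C(K, ℂ)
  refine ⟨fun k z => if hz : z ∈ K then d k ⟨z, hz⟩ else 0, fun k => ?_, fun h hh ε hε => ?_⟩
  · rw [continuousOn_iff_continuous_restrict]
    convert (d k).continuous using 1
    ext z
    simp
  · obtain ⟨k, hk⟩ := (TopologicalSpace.denseRange_denseSeq C(K, ℂ)).exists_dist_lt
      ⟨K.restrict h, continuousOn_iff_continuous_restrict.1 hh⟩ hε
    refine ⟨k, fun z hz => ?_⟩
    have := (ContinuousMap.dist_apply_le_dist (f := _) (g := _) ⟨z, hz⟩).trans_lt hk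
    rw [dist_comm, dist_eq_norm] at this
    simp only [hz, dite_true]
    exact this

lemma limit_fun {Ω : Set ℂ} (hΩ : IsOpen Ω) (F : ℕ → ℂ → ℂ) (L : ℕ → Set ℂ) (hF : ∀ j, DifferentiableOn ℂ (F j) Ω)
    (hmono : Monotone L) (hex : ∀ K ⊆ Ω, IsCompact K → ∃ N, K ⊆ L N)
    (hstep : ∀ j, ∀ z ∈ L j, ‖F (j + 1) z - F j z‖ ≤ 1 / 2 ^ j) :
    ∃ f : ℂ → ℂ, DifferentiableOn ℂ f Ω ∧ ∀ j, ∀ z ∈ L j, ‖f z - F j z‖ ≤ 2 / 2 ^ j := by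
  have hgeo : ∀ j, ∀ z ∈ L j, ∀ i, dist (F (i + j) z) (F (i + 1 + j) z) ≤ (2 / 2 ^ j) / 2 / 2 ^ i := by
    intro j z hz i
    have := hstep (i + j) z (hmono (Nat.le_add_left j i) hz)
    rw [dist_comm, dist_eq_norm, show i + 1 + j = i + j + 1 by ring]
    refine this.trans (le_of_eq ?_)
    rw [pow_add]; field_simp
  have hlim : ∀ j, ∀ z ∈ L j, ∃ a, Tendsto (fun i => F i z) atTop (𝓝 a) := by
    intro j z hz
    obtain ⟨a, ha⟩ := cauchySeq_tendsto_of_complete (cauchySeq_of_le_geometric_two (hgeo j z hz))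
    exact ⟨a, (tendsto_add_atTop_iff_nat (f := fun i => F i z) j).1 ha⟩
  set f : ℂ → ℂ := fun z => limUnder atTop (fun i => F i z) with hf
  have hft : ∀ j, ∀ z ∈ L j, Tendsto (fun i => F i z) atTop (𝓝 (f z)) := by
    intro j z hz
    exact tendsto_nhds_limUnder (hlim j z hz)
  have hb : ∀ j, ∀ z ∈ L j, ‖f z - F j z‖ ≤ 2 / 2 ^ j := by
    intro j z hz
    have := dist_le_of_le_geometric_two_of_tendsto₀ (hgeo j z hz)
      ((tendsto_add_atTop_iff_nat (f := fun i => F i z) j).2 (hft j z hz))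
    rw [dist_comm, dist_eq_norm] at this
    simpa using this
  refine ⟨f, ?_, hb⟩
  have hT : TendstoLocallyUniformlyOn F f atTop Ω := by
    rw [tendstoLocallyUniformlyOn_iff_forall_isCompact hΩ]
    intro K hKΩ hK
    obtain ⟨N, hN⟩ := hex K hKΩ hK
    rw [Metric.tendstoUniformlyOn_iff]
    intro ε hε
    have h0 : Tendsto (fun j : ℕ => (2 : ℝ) / 2 ^ j) atTop (𝓝 0) := by
      have := (tendsto_pow_atTop_nhds_zero_of_lt_one (r := (1 / 2 : ℝ)) (by norm_num) (by norm_num)).const_mul 2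
      simpa [div_eq_mul_inv] using this
    filter_upwards [h0.eventually (gt_mem_nhds hε), eventually_ge_atTop N] with j hj hjN z hz
    rw [dist_eq_norm]
    exact (hb j z (hmono hjN (hN hz))).trans_lt hj
  exact hT.differentiableOn (Eventually.of_forall hF) hΩ

theorem final_thm
    (G : Set ℂ) (g : ℕ → Set ℂ) (hG : G = ⋃ k, g k)
    (harc : ∀ k, IsJordanArc (g k) ∨ IsJordanCurve (g k))
    (hsep : ∃ δ : ℝ, 0 < δ ∧ ∀ k k' : ℕ, k ≠ k' → ∀ x ∈ g k, ∀ y ∈ g k', δ ≤ dist x y)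
    (Ω : Set ℂ) (hΩ : IsOpen Ω)
    (φ : ℕ → ℂ → ℂ) (hφc : ∀ n, ContinuousOn (φ n) G) (hφm : ∀ n, Set.MapsTo (φ n) G Ω)
    (hyp : ∀ L : Set ℂ, L ⊆ Ω → IsCompact L →
      ∀ K : Set ℂ, K ⊆ G → IsCompact K → IsConnected Kᶜ →
        ∃ n : ℕ, Set.InjOn (φ n) K ∧ (φ n '' K) ∩ L = ∅) :
    ∃ f : ℂ → ℂ, DifferentiableOn ℂ f Ω ∧
      MUniversal {K : Set ℂ | K ⊆ G ∧ IsCompact K ∧ IsConnected Kᶜ} φ f := by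
  obtain ⟨𝓕, hcount, hFp, hFc⟩ := cofinal G g hG harc hsep
  have hne : 𝓕.Nonempty := by
    obtain ⟨S, hS, -⟩ := hFc ∅ (empty_subset _) isCompact_empty (by rw [compl_empty]; exact isConnected_univ)
    exact ⟨S, hS⟩
  obtain ⟨Kf, rfl⟩ := hcount.exists_eq_range hne
  have hKf := fun i => hFp (Kf i) (mem_range_self i)
  choose H hHc hHd using fun i => dense_funs (hKf i).1
  -- the inductive step
  have step : ∀ (j : ℕ) (s : {f : ℂ → ℂ // DifferentiableOn ℂ f Ω} × ℕ) (i k : ℕ),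
      ∃ t : {f : ℂ → ℂ // DifferentiableOn ℂ f Ω} × ℕ, s.2 + 1 ≤ t.2 ∧
        (∀ z ∈ exL Ω s.2, ‖t.1.1 z - s.1.1 z‖ < 1 / 2 ^ j) ∧
        ∃ m, φ m '' (Kf i) ⊆ exL Ω t.2 ∧ ∀ z ∈ Kf i, ‖t.1.1 (φ m z) - H i k z‖ < 1 / 2 ^ j := by
    rintro j ⟨⟨f, hf⟩, n⟩ i k
    obtain ⟨a1, a2, a3, a4⟩ := hKf i
    obtain ⟨m, hm1, hm2⟩ := hyp (exL Ω n) (exL_sub Ω n) (exL_compact Ω n) (Kf i) a3 a1 (LP.compl_conn a1 a2)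
    obtain ⟨F, hF, h1, h2⟩ := key_approx (exL_compact Ω n) hΩ (exL_sub Ω n) (exL_comp Ω n) a1 a2 a4
      ((hφc m).mono a3) ((hφm m).mono_left a3) hm1 hm2 (hHc i k) hf (ε := 1 / 2 ^ j) (by positivity)
    obtain ⟨N, hN⟩ := exL_exhaust hΩ (a1.image_of_continuousOn ((hφc m).mono a3))
      (((hφm m).mono_left a3).image_subset)
    exact ⟨⟨⟨F, hF⟩, max (n + 1) N⟩, le_max_left _ _, h1, m, hN.trans (exL_mono Ω (le_max_right _ _)), h2⟩
  choose T hT1 hT2 hT3 using step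
  let s : ℕ → {f : ℂ → ℂ // DifferentiableOn ℂ f Ω} × ℕ := fun j => Nat.rec ⟨⟨fun _ => 0, differentiableOn_const 0⟩, 0⟩
    (fun j s => T j s (Nat.unpair (Nat.unpair j).1).1 (Nat.unpair (Nat.unpair j).1).2) j
  have hs : ∀ j, s (j + 1) = T j (s j) (Nat.unpair (Nat.unpair j).1).1 (Nat.unpair (Nat.unpair j).1).2 := fun j => rfl
  have hsm : StrictMono fun j => (s j).2 := strictMono_nat_of_lt_succ fun j => by
    have := hT1 j (s j) (Nat.unpair (Nat.unpair j).1).1 (Nat.unpair (Nat.unpair j).1).2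
    rw [← hs] at this
    exact this
  obtain ⟨f, hf, hfb⟩ := limit_fun hΩ (fun j => (s j).1.1) (fun j => exL Ω (s j).2) (fun j => (s j).1.2)
    (fun a b hab => exL_mono Ω (hsm.monotone hab))
    (fun K hK hKc => by
      obtain ⟨N, hN⟩ := exL_exhaust hΩ hKc hK
      exact ⟨N, hN.trans (exL_mono Ω (hsm.le_apply))⟩)
    (fun j z hz => by
      have := hT2 j (s j) (Nat.unpair (Nat.unpair j).1).1 (Nat.unpair (Nat.unpair j).1).2 z hz
      rw [← hs] at this
      exact this.le)
  refine ⟨f, hf, ?_⟩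
  rintro K ⟨hKG, hKc, hKconn⟩ h hh ε hε
  obtain ⟨_, ⟨i, rfl⟩, hKS⟩ := hFc K hKG hKc hKconn
  obtain ⟨h', hh'c, hh'⟩ := tietze hKc.isClosed hh
  obtain ⟨k, hk⟩ := hHd i h' hh'c.continuousOn (ε / 2) (by positivity)
  obtain ⟨N, hN⟩ := exists_pow_lt_of_lt_one (show 0 < ε / 4 by positivity) (show (1 / 2 : ℝ) < 1 by norm_num)
  set j := Nat.pair (Nat.pair i k) N with hj
  obtain ⟨m, hm1, hm2⟩ := hT3 j (s j) (Nat.unpair (Nat.unpair j).1).1 (Nat.unpair (Nat.unpair j).1).2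
  rw [← hs] at hm1 hm2
  have e1 : (Nat.unpair (Nat.unpair j).1).1 = i := by simp [hj]
  have e2 : (Nat.unpair (Nat.unpair j).1).2 = k := by simp [hj]
  rw [e1] at hm1
  rw [e1, e2] at hm2
  refine ⟨m, fun z hz => ?_⟩
  have hzi := hKS hz
  have b1 := hfb (j + 1) (φ m z) (hm1 (mem_image_of_mem _ hzi))
  have b2 := hm2 z hzi
  have b3 := hk z hzi
  rw [hh' z hz] at b3
  have b4 : (1 : ℝ) / 2 ^ j < ε / 4 := by
    refine lt_of_le_of_lt ?_ hN
    rw [one_div_pow]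
    have : N ≤ j := Nat.right_le_pair _ _
    gcongr
    norm_num
  have b5 : (2 : ℝ) / 2 ^ (j + 1) = 1 / 2 ^ j := by rw [pow_succ]; field_simp
  rw [b5] at b1
  calc ‖f (φ m z) - h z‖ = ‖(f (φ m z) - (s (j + 1)).1.1 (φ m z)) + ((s (j + 1)).1.1 (φ m z) - H i k z)
        + (H i k z - h z)‖ := by congr 1; ring
    _ ≤ _ := norm_add₃_le
    _ < ε := by linarith

end Part10

/-- Corollary `coro-Jordan-union`. -/
theorem exists_mUniversal_of_jordan_union
    (G : Set ℂ) (g : ℕ → Set ℂ) (hG : G = ⋃ k, g k)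
    (harc : ∀ k, IsJordanArc (g k) ∨ IsJordanCurve (g k))
    (hsep : ∃ δ : ℝ, 0 < δ ∧ ∀ k k' : ℕ, k ≠ k' → ∀ x ∈ g k, ∀ y ∈ g k', δ ≤ dist x y)
    (Ω : Set ℂ) (hΩ : IsOpen Ω) (hΩconn : IsConnected Ω)
    (φ : ℕ → ℂ → ℂ) (hφc : ∀ n, ContinuousOn (φ n) G) (hφm : ∀ n, Set.MapsTo (φ n) G Ω)
    (hyp : ∀ L : Set ℂ, L ⊆ Ω → IsCompact L →
      ∀ K : Set ℂ, K ⊆ G → IsCompact K → IsConnected Kᶜ →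
        ∃ n : ℕ, Set.InjOn (φ n) K ∧ (φ n '' K) ∩ L = ∅) :
    ∃ f : ℂ → ℂ, DifferentiableOn ℂ f Ω ∧
      MUniversal {K : Set ℂ | K ⊆ G ∧ IsCompact K ∧ IsConnected Kᶜ} φ f := by
  exact final_thm G g hG harc hsep Ω hΩ φ hφc hφm hyp
end

section
/- Let G ⊆ ℂ be a finite union of pairwise disjoint Jordan arcs and Jordan curves. Then there exists a sequence (Kₙ) of compact subsets of G, each having connected complement in ℂ, such that every compact subset K ⊆ G with connected complement in ℂ is contained in some Kₙ. -/
open Set Metric Bornology Filter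

namespace JSeq

def HasLog (K : Set ℂ) (z : ℂ) : Prop :=
  ∃ f : ℂ → ℂ, ContinuousOn f K ∧ ∀ x ∈ K, Complex.exp (f x) = x - z

theorem HasLog.mono {K L : Set ℂ} {z : ℂ} (h : HasLog L z) (hKL : K ⊆ L) : HasLog K z := by
  obtain ⟨f, hf, he⟩ := h
  exact ⟨f, hf.mono hKL, fun x hx => he x (hKL hx)⟩

theorem one_sub_mem_slit {u : ℂ} (hu : ‖u‖ < 1) : 1 - u ∈ Complex.slitPlane := by
  left
  have := Complex.re_le_norm u
  simp
  linarith

theorem HasLog.near {K : Set ℂ} {w y : ℂ} (h : HasLog K w)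
    (hd : ∀ x ∈ K, ‖y - w‖ < ‖x - w‖) : HasLog K y := by
  obtain ⟨f, hf, he⟩ := h
  have hne : ∀ x ∈ K, x - w ≠ 0 := fun x hx => norm_pos_iff.1 ((norm_nonneg _).trans_lt (hd x hx))
  have hs : ∀ x ∈ K, 1 - (y - w) / (x - w) ∈ Complex.slitPlane := by
    intro x hx
    apply one_sub_mem_slit
    rw [norm_div, div_lt_one (norm_pos_iff.2 (hne x hx))]
    exact hd x hx
  refine ⟨fun x => f x + Complex.log (1 - (y - w) / (x - w)), ?_, ?_⟩
  · refine hf.add (ContinuousOn.clog ?_ hs)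
    exact continuousOn_const.sub (continuousOn_const.div
      (continuousOn_id.sub continuousOn_const) hne)
  · intro x hx
    rw [Complex.exp_add, he x hx, Complex.exp_log (Complex.slitPlane_ne_zero (hs x hx))]
    have := hne x hx
    field_simp
    ring

theorem hasLog_far {K : Set ℂ} {w : ℂ} (hd : ∀ x ∈ K, ‖x‖ < ‖w‖) : HasLog K w := by
  rcases K.eq_empty_or_nonempty with rfl | ⟨x0, hx0⟩
  · exact ⟨0, by simp, by simp⟩
  have hw : w ≠ 0 := norm_pos_iff.1 ((norm_nonneg _).trans_lt (hd x0 hx0))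
  have hs : ∀ x ∈ K, 1 - x / w ∈ Complex.slitPlane := by
    intro x hx
    apply one_sub_mem_slit
    rw [norm_div, div_lt_one (norm_pos_iff.2 hw)]
    exact hd x hx
  refine ⟨fun x => Complex.log (-w) + Complex.log (1 - x / w), ?_, ?_⟩
  · refine continuousOn_const.add (ContinuousOn.clog ?_ hs)
    exact continuousOn_const.sub (continuousOn_id.div_const w)
  · intro x hx
    rw [Complex.exp_add, Complex.exp_log (neg_ne_zero.2 hw),
      Complex.exp_log (Complex.slitPlane_ne_zero (hs x hx))]
    field_simp
    ring

theorem exists_bound {K : Set ℂ} (hK : IsCompact K) : ∃ R : ℝ, 0 < R ∧ ∀ x ∈ K, ‖x‖ < R := by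
  obtain ⟨R, hR, h⟩ := hK.isBounded.exists_pos_norm_lt
  exact ⟨R, hR, h⟩

theorem hasLog_of_connected {K : Set ℂ} (hK : IsCompact K) (hc : IsConnected Kᶜ) {z : ℂ}
    (hz : z ∉ K) : HasLog K z := by
  obtain ⟨R, hR, hb⟩ := exists_bound hK
  have hR' : ‖(R : ℂ)‖ = R := by simp [abs_of_pos hR]
  have h0 : (R : ℂ) ∉ K := fun h => by have := hb _ h; linarith
  have h1 : HasLog K (R : ℂ) := hasLog_far (by rw [hR']; exact hb)
  have key := hc.isPreconnected.induction₂ (fun w y => HasLog K w ↔ HasLog K y) ?_ ?_ ?_ h0 hz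
  · exact key.1 h1
  · intro w hw
    obtain ⟨d, hd, hball⟩ := Metric.isOpen_iff.1 hK.isClosed.isOpen_compl w hw
    filter_upwards [mem_nhdsWithin_of_mem_nhds (Metric.ball_mem_nhds w (half_pos hd))] with y hy
    have hy' : ‖y - w‖ < d / 2 := by simpa [dist_eq_norm] using hy
    have hx : ∀ x ∈ K, d ≤ ‖x - w‖ := by
      intro x hx
      by_contra! hlt
      exact hball (by simpa [dist_eq_norm] using hlt) hx
    constructor
    · intro h
      exact h.near fun x hxK => by linarith [hx x hxK]
    · intro h
      refine h.near fun x hxK => ?_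
      have h2 := hx x hxK
      have h3 : ‖x - w‖ ≤ ‖x - y‖ + ‖y - w‖ := norm_sub_le_norm_sub_add_norm_sub _ _ _
      rw [norm_sub_rev w y]
      linarith
  · intro x y z _ _ _ h1 h2
    exact h1.trans h2
  · intro x y _ _ h
    exact h.symm

/-- a circle of positive radius carries no logarithm of `x - z` -/
theorem no_log_circle (z : ℂ) (R : ℝ) (hR : 0 < R) (h : ℂ → ℂ) (hc : Continuous h)
    (he : ∀ x : ℂ, ‖x - z‖ = R → Complex.exp (h x) = x - z) : False := by
  let p : ℝ → ℂ := fun t => z + R * Complex.exp (t * Complex.I)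
  have hp : Continuous p := by fun_prop
  have hpe : ∀ t, Complex.exp (h (p t)) = R * Complex.exp (t * Complex.I) := by
    intro t
    rw [he]
    · simp [p]
    · simp [p, Complex.norm_exp_ofReal_mul_I, abs_of_pos hR]
  have hR0 : (R : ℂ) ≠ 0 := by exact_mod_cast hR.ne'
  let q : ℝ → ℂ := fun t => h (p t) - t * Complex.I - Complex.log R
  have hq : Continuous q := by
    have := hc.comp hp
    simp only [q]
    have h2 : Continuous fun t => h (p t) := this
    fun_prop
  have hq1 : ∀ t, Complex.exp (q t) = 1 := by
    intro t
    simp only [q]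
    rw [Complex.exp_sub, Complex.exp_sub, hpe, Complex.exp_log hR0]
    have := Complex.exp_ne_zero (t * Complex.I)
    field_simp
  have hconst : ∀ t, q t = q 0 := by
    obtain ⟨F, ⟨-, -⟩, hu⟩ := Complex.isCoveringMapOn_exp.existsUnique_continuousMap_lifts
      (A := ℝ) (ContinuousMap.const ℝ (1 : ℂ)) (a₀ := 0) (e₀ := q 0) (hq1 0) (by simp)
    have e1 := hu ⟨q, hq⟩ ⟨rfl, by ext t; simpa using hq1 t⟩
    have e2 := hu (ContinuousMap.const ℝ (q 0)) ⟨rfl, by ext t; simpa using hq1 0⟩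
    intro t
    exact congrArg (fun f : C(ℝ, ℂ) => f t) (e1.trans e2.symm)
  have h2 := hconst (2 * Real.pi)
  have hpp : p (2 * Real.pi) = p 0 := by simp [p, Complex.exp_two_pi_mul_I]
  simp only [q, hpp] at h2
  have h3 : (2 * (Real.pi : ℂ)) * Complex.I = 0 := by
    push_cast at h2
    linear_combination -h2
  exact Complex.two_pi_I_ne_zero h3

theorem component_unbounded {K : Set ℂ} (hK : IsCompact K) {z : ℂ} (hz : z ∉ K)
    (hlog : HasLog K z) : ¬ Bornology.IsBounded (connectedComponentIn Kᶜ z) := by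
  classical
  intro hb
  set U := connectedComponentIn Kᶜ z with hU
  have hKo : IsOpen Kᶜ := hK.isClosed.isOpen_compl
  have hUo : IsOpen U := hKo.connectedComponentIn
  have hzU : z ∈ U := mem_connectedComponentIn hz
  have hfr : frontier U ⊆ K := by
    intro p hp
    by_contra hpK
    have hpU : p ∉ U := by
      have := hUo.frontier_eq ▸ hp
      exact this.2
    have hpo : IsOpen (connectedComponentIn Kᶜ p) := hKo.connectedComponentIn
    have hpc : p ∈ closure U := frontier_subset_closure hp
    obtain ⟨y, hy1, hy2⟩ := mem_closure_iff.1 hpc _ hpo (mem_connectedComponentIn hpK)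
    have e1 := connectedComponentIn_eq hy1
    have e2 := connectedComponentIn_eq hy2
    apply hpU
    rw [hU, e2, ← e1]
    exact mem_connectedComponentIn hpK
  obtain ⟨f, hf, he⟩ := hlog
  obtain ⟨F, hF⟩ := ContinuousMap.exists_restrict_eq hK.isClosed
    (⟨K.domRestrict f, continuousOn_iff_continuous_domRestrict.mp hf⟩ : C(K, ℂ))
  have hF' : ∀ x ∈ K, F x = f x := fun x hx =>
    congrArg (fun g : C(K, ℂ) => g ⟨x, hx⟩) hF
  let Φ : ℂ → ℂ := U.piecewise (fun x => Complex.exp (F x)) (fun x => x - z)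
  have hΦ : Continuous Φ := by
    refine Continuous.piecewise ?_ (by fun_prop) (by fun_prop)
    intro a ha
    rw [hF' a (hfr ha), he a (hfr ha)]
  have hΦ0 : ∀ x, Φ x ≠ 0 := by
    intro x
    by_cases hx : x ∈ U
    · simp [Φ, hx, Complex.exp_ne_zero]
    · simp only [Φ, Set.piecewise_eq_of_notMem _ _ _ hx]
      intro h
      rw [sub_eq_zero] at h
      exact hx (h ▸ hzU)
  obtain ⟨G, hG, -⟩ := Complex.isCoveringMapOn_exp.existsUnique_continuousMap_lifts
      (A := ℂ) (⟨Φ, hΦ⟩ : C(ℂ, ℂ)) (a₀ := 0) (e₀ := Complex.log (Φ 0))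
      (Complex.exp_log (hΦ0 0)) (fun a => hΦ0 a)
  obtain ⟨-, hG⟩ := hG
  obtain ⟨R, hR⟩ := hb.subset_ball z
  have hRpos : 0 < R := Metric.pos_of_mem_ball (hR hzU)
  refine no_log_circle z R hRpos G G.continuous ?_
  intro x hx
  have hxU : x ∉ U := by
    intro h
    have := hR h
    rw [Metric.mem_ball, dist_eq_norm] at this
    linarith
  have h1 : Complex.exp (G x) = Φ x := congrFun hG x
  rw [h1]
  simp only [Φ, Set.piecewise_eq_of_notMem _ _ _ hxU]

theorem preconnected_outside (R : ℝ) (hR : 0 < R) : IsPreconnected {x : ℂ | R < ‖x‖} := by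
  have h : {x : ℂ | R < ‖x‖} = Complex.exp '' {w : ℂ | Real.log R < w.re} := by
    ext x
    simp only [mem_ofPred_eq, mem_image]
    constructor
    · intro hx
      have hx0 : x ≠ 0 := norm_pos_iff.1 (hR.trans hx)
      refine ⟨Complex.log x, ?_, Complex.exp_log hx0⟩
      rw [Complex.log_re]
      exact Real.log_lt_log hR hx
    · rintro ⟨w, hw, rfl⟩
      rw [Complex.norm_exp]
      exact (Real.log_lt_iff_lt_exp hR).1 hw
  rw [h]
  refine IsPreconnected.image ?_ _ Complex.continuous_exp.continuousOn
  exact (convex_halfSpace_re_gt _).isPreconnected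

theorem connected_of_hasLog {K : Set ℂ} (hK : IsCompact K) (h : ∀ z ∉ K, HasLog K z) :
    IsConnected Kᶜ := by
  obtain ⟨R, hR, hb⟩ := exists_bound hK
  have hW : {x : ℂ | R < ‖x‖} ⊆ Kᶜ := by
    intro x hx hxK
    have := hb x hxK
    simp only [mem_ofPred_eq] at hx
    linarith
  have hp : ((R + 1 : ℝ) : ℂ) ∈ {x : ℂ | R < ‖x‖} := by
    simp only [mem_ofPred_eq, Complex.norm_real, Real.norm_eq_abs]
    rw [abs_of_pos (by linarith)]
    linarith
  refine ⟨⟨_, hW hp⟩, ?_⟩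
  refine isPreconnected_of_forall ((R + 1 : ℝ) : ℂ) ?_
  intro y hy
  have hun := component_unbounded hK hy (h y hy)
  have hex : ∃ q ∈ connectedComponentIn Kᶜ y, R < ‖q‖ := by
    by_contra! hcon
    apply hun
    exact (Metric.isBounded_closedBall (x := (0 : ℂ)) (r := R)).subset
      (fun q hq => by simpa using hcon q hq)
  obtain ⟨q, hq1, hq2⟩ := hex
  refine ⟨{x : ℂ | R < ‖x‖} ∪ connectedComponentIn Kᶜ y, ?_, Or.inl hp,
    Or.inr (mem_connectedComponentIn hy), ?_⟩
  · exact union_subset hW (connectedComponentIn_subset _ _)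
  · exact IsPreconnected.union q hq2 hq1 (preconnected_outside R hR)
      isPreconnected_connectedComponentIn

theorem hasLog_arc {a b : ℝ} (hab : a ≤ b) {γ : ℝ → ℂ} (hc : ContinuousOn γ (Icc a b))
    (hi : InjOn γ (Icc a b)) {z : ℂ} (hz : z ∉ γ '' Icc a b) : HasLog (γ '' Icc a b) z := by
  classical
  let f : ℝ → ℂ := IccExtend hab ((Icc a b).domRestrict fun t => γ t - z)
  have hf : Continuous f := by
    refine Continuous.Icc_extend' ?_
    exact continuousOn_iff_continuous_domRestrict.mp (hc.sub continuousOn_const)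
  have hf1 : ∀ t ∈ Icc a b, f t = γ t - z := by
    intro t ht
    simp [f, IccExtend_of_mem hab _ ht]
  have hf0 : ∀ t, f t ≠ 0 := by
    intro t h
    simp only [f, IccExtend, Function.comp, Set.domRestrict_apply, sub_eq_zero] at h
    exact hz ⟨_, (projIcc a b hab t).2, h⟩
  obtain ⟨L, hL, -⟩ := Complex.isCoveringMapOn_exp.existsUnique_continuousMap_lifts
      (A := ℝ) (⟨f, hf⟩ : C(ℝ, ℂ)) (a₀ := 0) (e₀ := Complex.log (f 0))
      (Complex.exp_log (hf0 0)) (fun a => hf0 a)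
  obtain ⟨-, hL⟩ := hL
  let ψ : ℂ → ℝ := Function.invFunOn γ (Icc a b)
  have hψ : ∀ t ∈ Icc a b, ψ (γ t) = t := fun t ht => hi.leftInvOn_invFunOn ht
  have hψc : ContinuousOn ψ (γ '' Icc a b) := by
    rw [continuousOn_iff_isClosed]
    intro s hs
    have hcomp : IsCompact (Icc a b ∩ s) := isCompact_Icc.inter_right hs
    refine ⟨γ '' (Icc a b ∩ s), (hcomp.image_of_continuousOn
      (hc.mono inter_subset_left)).isClosed, ?_⟩
    ext x
    constructor
    · rintro ⟨hx, t, ht, rfl⟩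
      refine ⟨⟨t, ⟨ht, ?_⟩, rfl⟩, ⟨t, ht, rfl⟩⟩
      have : ψ (γ t) ∈ s := hx
      rwa [hψ t ht] at this
    · rintro ⟨⟨t, ⟨ht, hts⟩, rfl⟩, hx⟩
      refine ⟨?_, hx⟩
      show ψ (γ t) ∈ s
      rwa [hψ t ht]
  refine ⟨fun x => L (ψ x), L.continuous.comp_continuousOn hψc, ?_⟩
  rintro _ ⟨t, ht, rfl⟩
  simp only
  rw [hψ t ht, ← hf1 t ht]
  exact congrFun hL t

/-- Gluing logarithms along a finite disjoint union of compact sets. -/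
theorem hasLog_iUnion {m : ℕ} {A : Fin m → Set ℂ} (hA : ∀ i, IsCompact (A i))
    (hd : ∀ i j, i ≠ j → A i ∩ A j = ∅) {z : ℂ} (h : ∀ i, HasLog (A i) z) :
    HasLog (⋃ i, A i) z := by
  classical
  choose f hf he using h
  let F : ℂ → ℂ := fun x => if hx : ∃ i, x ∈ A i then f hx.choose x else 0
  have hF : ∀ i, ∀ x ∈ A i, F x = f i x := by
    intro i x hx
    have hex : ∃ i, x ∈ A i := ⟨i, hx⟩
    simp only [F, dif_pos hex]
    have : hex.choose = i := by
      by_contra hne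
      have h2 : x ∈ A hex.choose ∩ A i := ⟨hex.choose_spec, hx⟩
      rw [hd _ _ hne] at h2
      exact h2
    rw [this]
  refine ⟨F, ?_, ?_⟩
  · refine LocallyFinite.continuousOn_iUnion (locallyFinite_of_finite _) (fun i => (hA i).isClosed)
      fun i => ?_
    exact (hf i).congr (hF i)
  · intro x hx
    obtain ⟨i, hi⟩ := mem_iUnion.1 hx
    rw [hF i x hi]
    exact he i x hi

/-- For each piece, a countable family of compact subsets. -/
theorem exists_family {C : Set ℂ} (hC : IsJordanArc C ∨ IsJordanCurve C) :
    IsCompact C ∧ ∃ ℱ : Set (Set ℂ), ℱ.Countable ∧ (∀ A ∈ ℱ, A ⊆ C ∧ IsCompact A) ∧ C ∈ ℱ ∧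
      ∀ K : Set ℂ, IsCompact K → ¬ C ⊆ K →
        ∃ A ∈ ℱ, K ∩ C ⊆ A ∧ ∀ z ∉ A, HasLog A z := by
  rcases hC with ⟨γ, hc, hi, rfl⟩ | ⟨γ, hc, hi, rfl⟩
  · have hcomp : IsCompact (γ '' Icc 0 1) := isCompact_Icc.image_of_continuousOn hc
    refine ⟨hcomp, {γ '' Icc 0 1}, countable_singleton _, ?_, rfl, ?_⟩
    · rintro A rfl
      exact ⟨subset_rfl, hcomp⟩
    · intro K _ _
      exact ⟨_, rfl, inter_subset_right, fun z hz => hasLog_arc zero_le_one hc hi hz⟩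
  · have hcomp : IsCompact (γ '' sphere 0 1) := (isCompact_sphere 0 1).image_of_continuousOn hc
    let e : ℝ → ℂ := fun t => Complex.exp (t * Complex.I)
    have hec : Continuous e := by fun_prop
    have hes : ∀ t, e t ∈ sphere (0 : ℂ) 1 := by
      intro t; simp [e, Complex.norm_exp_ofReal_mul_I]
    have hγe : Continuous fun t => γ (e t) := hc.comp_continuous hec hes
    have hcompI : ∀ a b : ℝ, IsCompact ((fun t => γ (e t)) '' Icc a b) := fun a b =>
      isCompact_Icc.image hγe
    refine ⟨hcomp, insert (γ '' sphere 0 1)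
      (range fun q : ℚ × ℚ => (fun t => γ (e t)) '' Icc (q.1 : ℝ) (q.2 : ℝ)), ?_, ?_,
      mem_insert _ _, ?_⟩
    · exact (countable_range _).insert _
    · rintro A (rfl | ⟨q, rfl⟩)
      · exact ⟨subset_rfl, hcomp⟩
      · refine ⟨?_, hcompI _ _⟩
        rintro _ ⟨t, -, rfl⟩
        exact ⟨_, hes t, rfl⟩
    · intro K hK hCK
      obtain ⟨_, ⟨p, hp, rfl⟩, hpK⟩ := not_subset.1 hCK
      have hsurj : ∀ x ∈ sphere (0 : ℂ) 1, ∃ t, e t = x := by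
        intro x hx
        refine ⟨Complex.arg x, ?_⟩
        have := Complex.norm_mul_exp_arg_mul_I x
        rw [mem_sphere_zero_iff_norm.1 hx] at this
        simpa using this
      have hper : Function.Periodic e (2 * Real.pi) := by
        intro t
        simp only [e]
        push_cast
        rw [add_mul, Complex.exp_add, Complex.exp_two_pi_mul_I, mul_one]
      obtain ⟨θ, rfl⟩ := hsurj p hp
      have hopen : IsOpen ((fun t => γ (e t)) ⁻¹' Kᶜ) := hK.isClosed.isOpen_compl.preimage hγe
      obtain ⟨δ, hδ, hball⟩ := Metric.isOpen_iff.1 hopen θ hpK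
      have hpi := Real.pi_pos
      obtain ⟨a, ha1, ha2⟩ := exists_rat_btwn (show θ < min (θ + δ) (θ + Real.pi) by
        simp [hδ, hpi])
      obtain ⟨b, hb1, hb2⟩ := exists_rat_btwn
        (show max (θ + 2 * Real.pi - δ) (θ + Real.pi) < θ + 2 * Real.pi by
          rw [max_lt_iff]; constructor <;> linarith)
      rw [lt_min_iff] at ha2
      rw [max_lt_iff] at hb1
      have hab : (a : ℝ) ≤ b := by linarith
      refine ⟨_, mem_insert_of_mem _ ⟨(a, b), rfl⟩, ?_, ?_⟩
      · rintro _ ⟨hxK, x, hx, rfl⟩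
        obtain ⟨t0, rfl⟩ := hsurj x hx
        obtain ⟨t, ht, hte⟩ := hper.exists_mem_Ico (by positivity) t0 θ
        have htK : γ (e t) ∈ K := by rwa [← hte]
        rw [hte]
        refine ⟨t, ⟨?_, ?_⟩, rfl⟩
        · by_contra! hlt
          refine hball (a := t) ?_ htK
          rw [Metric.mem_ball, Real.dist_eq, abs_lt]
          constructor <;> linarith [ht.1]
        · by_contra! hlt
          refine hball (a := t - 2 * Real.pi) ?_ ?_
          · simp only at hlt
            rw [Metric.mem_ball, Real.dist_eq, abs_lt]
            constructor <;> linarith [ht.2]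
          · show γ (e (t - 2 * Real.pi)) ∈ K
            rwa [hper.sub_eq]
      · intro z hz
        refine hasLog_arc hab hγe.continuousOn ?_ hz
        intro s hs t ht hst
        have h1 : e s = e t := hi (hes s) (hes t) hst
        simp only [e] at h1
        rw [Complex.exp_eq_exp_iff_exists_int] at h1
        obtain ⟨n, hn⟩ := h1
        have h2 : s = t + n * (2 * Real.pi) := by
          have := congrArg Complex.im hn
          simpa using this
        have h3 : |(n : ℝ)| < 1 := by
          rw [abs_lt]
          constructor <;> nlinarith [hs.1, hs.2, ht.1, ht.2]
        have h4 : n = 0 := by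
          have : |n| < 1 := by exact_mod_cast h3
          exact Int.abs_lt_one_iff.1 this
        rw [h2, h4]
        simp

end JSeq

/-- Lemma `lem-Jordan-curve-seq-comp`. -/
theorem exists_compact_sequence_of_finite_jordan_union
    (G : Set ℂ) (m : ℕ) (g : Fin m → Set ℂ) (hG : G = ⋃ i, g i)
    (harc : ∀ i, IsJordanArc (g i) ∨ IsJordanCurve (g i))
    (hdisj : ∀ i j : Fin m, i ≠ j → g i ∩ g j = ∅) :
    ∃ K : ℕ → Set ℂ,
      (∀ n, K n ⊆ G ∧ IsCompact (K n) ∧ IsConnected (K n)ᶜ) ∧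
      ∀ K' : Set ℂ, K' ⊆ G → IsCompact K' → IsConnected K'ᶜ → ∃ n, K' ⊆ K n := by
  classical
  subst hG
  choose hgc ℱ hℱc hℱ hgℱ hℱK using fun i => JSeq.exists_family (harc i)
  let 𝒮 : Set (Set ℂ) := insert ∅
    (((fun A : Fin m → Set ℂ => ⋃ i, A i) '' (Set.univ.pi ℱ)) ∩ {L | IsConnected Lᶜ})
  have h𝒮c : 𝒮.Countable :=
    (((Set.countable_univ_pi hℱc).image _).mono inter_subset_left).insert _
  have h𝒮 : ∀ L ∈ 𝒮, L ⊆ (⋃ i, g i) ∧ IsCompact L ∧ IsConnected Lᶜ := by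
    rintro L (rfl | ⟨⟨A, hA, rfl⟩, hL⟩)
    · refine ⟨empty_subset _, isCompact_empty, ?_⟩
      rw [compl_empty]
      exact isConnected_univ
    · refine ⟨iUnion_mono fun i => (hℱ i _ (hA i trivial)).1,
        isCompact_iUnion fun i => (hℱ i _ (hA i trivial)).2, hL⟩
  obtain ⟨K, hK⟩ := h𝒮c.exists_eq_range ⟨∅, mem_insert _ _⟩
  refine ⟨K, fun n => h𝒮 _ (hK ▸ mem_range_self n), ?_⟩
  intro K' hK'G hK' hcon
  have hsel : ∀ i, ∃ A ∈ ℱ i, K' ∩ g i ⊆ A ∧ (A ⊆ K' ∨ ∀ z ∉ A, JSeq.HasLog A z) := by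
    intro i
    by_cases hsub : g i ⊆ K'
    · exact ⟨g i, hgℱ i, inter_subset_right, Or.inl hsub⟩
    · obtain ⟨A, h1, h2, h3⟩ := hℱK i K' hK' hsub
      exact ⟨A, h1, h2, Or.inr h3⟩
  choose A hA hAK hAl using hsel
  have hsubL : K' ⊆ ⋃ i, A i := by
    intro x hx
    obtain ⟨i, hi⟩ := mem_iUnion.1 (hK'G hx)
    exact mem_iUnion.2 ⟨i, hAK i ⟨hx, hi⟩⟩
  have hLc : IsConnected (⋃ i, A i)ᶜ := by
    refine JSeq.connected_of_hasLog (isCompact_iUnion fun i => (hℱ i _ (hA i)).2) ?_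
    intro z hz
    refine JSeq.hasLog_iUnion (fun i => (hℱ i _ (hA i)).2) ?_ ?_
    · intro i j hij
      exact subset_empty_iff.1 ((inter_subset_inter (hℱ i _ (hA i)).1 (hℱ j _ (hA j)).1).trans
        (hdisj i j hij).subset)
    · intro i
      rcases hAl i with h | h
      · exact (JSeq.hasLog_of_connected hK' hcon fun h' => hz (hsubL h')).mono h
      · exact h z fun h' => hz (mem_iUnion.2 ⟨i, h'⟩)
  have hmem : (⋃ i, A i) ∈ 𝒮 := mem_insert_of_mem _ ⟨⟨A, fun i _ => hA i, rfl⟩, hLc⟩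
  rw [hK] at hmem
  obtain ⟨n, hn⟩ := hmem
  exact ⟨n, hn ▸ hsubL⟩
end

section
/- Let G ⊆ ℂ be a closed set with empty interior, Ω ⊆ ℂ a domain, Φ = (φₙ) a sequence of continuous maps from G to Ω, and M a countable family of compact subsets of G. If there exists a (Φ,M)-universal function in H(Ω), then for every compact set L ⊆ Ω, every K ∈ M, and every pair of disjoint compact sets I₁, I₂ ∈ M with K ∪ I₁ ∪ I₂ ∈ M, there exist infinitely many n ∈ ℕ such that φₙ(K) ∩ L = ∅ and φₙ(I₁) ∩ φₙ(I₂) = ∅. -/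
open Set Metric Bornology Filter

/-- Proposition `prop-nec-G-empty-interior`. -/
theorem mUniversal_necessary_condition
    (G : Set ℂ) (hGcl : IsClosed G) (hGint : interior G = ∅)
    (Ω : Set ℂ) (hΩ : IsOpen Ω) (hΩconn : IsConnected Ω)
    (φ : ℕ → ℂ → ℂ) (hφc : ∀ n, ContinuousOn (φ n) G) (hφm : ∀ n, Set.MapsTo (φ n) G Ω)
    (M : Set (Set ℂ)) (hMc : M.Countable) (hM : ∀ K ∈ M, K ⊆ G ∧ IsCompact K)
    (f : ℂ → ℂ) (hf : DifferentiableOn ℂ f Ω) (hfu : MUniversal M φ f) :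
    ∀ L : Set ℂ, L ⊆ Ω → IsCompact L → ∀ K ∈ M, ∀ I₁ ∈ M, ∀ I₂ ∈ M,
      I₁ ∩ I₂ = ∅ → K ∪ I₁ ∪ I₂ ∈ M →
        {n : ℕ | (φ n '' K) ∩ L = ∅ ∧ (φ n '' I₁) ∩ (φ n '' I₂) = ∅}.Infinite := by
  intro L hL hLc K hK I₁ hI₁ I₂ hI₂ hd hU
  rcases (K ∪ I₁ ∪ I₂).eq_empty_or_nonempty with he | ⟨z₀, hz₀⟩
  · have h1 : K = ∅ := by
      apply Set.eq_empty_of_subset_empty; rw [← he]; intro x hx; exact Or.inl (Or.inl hx)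
    have h2 : I₁ = ∅ := by
      apply Set.eq_empty_of_subset_empty; rw [← he]; intro x hx; exact Or.inl (Or.inr hx)
    simp [h1, h2, Set.infinite_univ]
  obtain ⟨C, hC⟩ := hLc.exists_bound_of_continuousOn (hf.continuousOn.mono hL)
  obtain ⟨u, hu0, hu1, hu⟩ := exists_continuous_zero_one_of_isClosed
    (hM _ hI₁).2.isClosed (hM _ hI₂).2.isClosed (Set.disjoint_iff_inter_eq_empty.2 hd)
  have key : ∀ j : ℕ, ∃ n : ℕ, ∀ z ∈ K ∪ I₁ ∪ I₂,
      ‖f (φ n z) - ((C + 1 + 10 * j + 3 * u z : ℝ) : ℂ)‖ < 1 := by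
    intro j
    refine hfu _ hU (fun z => ((C + 1 + 10 * j + 3 * u z : ℝ) : ℂ)) ?_ 1 one_pos
    exact Continuous.continuousOn (by fun_prop)
  choose n hn using key
  have key2 : ∀ j : ℕ, ∀ z ∈ K ∪ I₁ ∪ I₂, |(f (φ (n j) z)).re - (C + 1 + 10 * j + 3 * u z)| < 1 := by
    intro j z hz
    refine lt_of_le_of_lt ?_ (hn j z hz)
    have := Complex.abs_re_le_norm (f (φ (n j) z) - ((C + 1 + 10 * j + 3 * u z : ℝ) : ℂ))
    rwa [Complex.sub_re, Complex.ofReal_re] at this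
  refine Set.infinite_of_injective_forall_mem (f := n) ?_ ?_
  · intro i j hij
    have h1 := abs_lt.1 (key2 i z₀ hz₀)
    have h2 := abs_lt.1 (key2 j z₀ hz₀)
    rw [hij] at h1
    have h3 : (i : ℝ) < j + 1 := by linarith [h1.1, h1.2, h2.1, h2.2]
    have h4 : (j : ℝ) < i + 1 := by linarith [h1.1, h1.2, h2.1, h2.2]
    have h5 : i < j + 1 := by exact_mod_cast h3
    have h6 : j < i + 1 := by exact_mod_cast h4
    omega
  · intro j
    constructor
    · apply Set.eq_empty_of_forall_notMem
      rintro _ ⟨⟨z, hz, rfl⟩, hw⟩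
      have h1 := abs_lt.1 (key2 j z (Or.inl (Or.inl hz)))
      have h2 := hC _ hw
      have h3 := (le_abs_self _).trans (Complex.abs_re_le_norm (f (φ (n j) z)))
      have h4 := (hu z).1
      have h5 : (0 : ℝ) ≤ j := Nat.cast_nonneg j
      linarith [h1.1]
    · apply Set.eq_empty_of_forall_notMem
      rintro _ ⟨⟨z, hz, rfl⟩, ⟨w, hw, hzw⟩⟩
      have h1 := abs_lt.1 (key2 j z (Or.inl (Or.inr hz)))
      have h2 := abs_lt.1 (key2 j w (Or.inr hw))
      have h3 := hu0 hz
      have h4 := hu1 hw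
      simp only [Pi.zero_apply, Pi.one_apply] at h3 h4
      rw [hzw, h4] at h2
      rw [h3] at h1
      linarith [h1.2, h2.1]
end
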